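/- arXiv:0804.4431 — 3 statements merged into one kernel-verified Lean document; each statement's English description precedes it below -/
import Mathlib

section
/- Let (r_n), (s_n), (t_n) be sequences of positive integers with r_n → ∞ and s_n → ∞ (and t_n arbitrary), and for each n let X_n be the volume random variable on PP(r_n, s_n, t_n) equipped with the uniform probability distribution, with mean μ_n = r_n s_n t_n / 2. Then for every δ > 0, the probability P(1 − δ ≤ X_n/μ_n ≤ 1 + δ) tends to 1 as n → ∞. -/
/-!
The mean of the volume is `rst/2` because complementation in the box is an involution of `PP`, so by
Chebyshev it suffices that the variance is `o((rst)^2)`.  The volume is the sum over `1 ≤ k ≤ t` of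
the slice areas `F_k = #{(x, y) : k ≤ p x y}`, hence by Cauchy-Schwarz it suffices to bound each
`Var F_k` by `(r + s + 1)^2 * min r s` (`sqDev_ppExt_le`), which gives the failure probability
`≤ 36 / (δ^2 * min r s)` (`good_ratio_ge`).

For fixed `k`, the lattice path bounding the region `{k ≤ p}` is explored step by step, starting
from the corner below the first column: at each step one asks whether `k ≤ p` at the cell adjacent
to the current end of the path, and moves to the next column or to the previous row accordingly.
A step splits the current set `A` of plane partitions compatible with the answers so far into `A₁`
(answer yes) and `A₀` (answer no).  The conditional means of `F_k` satisfy `m₀ ≤ m₁ ≤ m₀ + C` with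
`C = r + s + 1`: both inequalities come from the four functions theorem, the lower one applied to
`A₀` and `A₁` (`sum_mul_card_le`), the upper one to `A₁` and the translate of `A₀` by `(1, 1)`
(`sum_mul_card_le_shift`), the translation changing `F_k` by at most `C`.  Thus a split contributes
at most `C^2 * |A₀| * |A₁| / |A| ≤ C^2 * min |A₀| |A₁|` to the sum of squared deviations
(`sqDev_union`), and since at most `s` answers are yes and at most `r` are no, induction along
the path gives both `Var F_k ≤ C^2 * s` and `Var F_k ≤ C^2 * r` (`sqDev_condPP_le`).
-/

open Finset Filter

/-- Plane partitions fitting inside an `(r,s,t)`-box. -/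
def PP (r s t : ℕ) : Finset (Fin r → Fin s → Fin (t + 1)) :=
  Finset.univ.filter fun p =>
    ∀ i i' : Fin r, ∀ j j' : Fin s, i ≤ i' → j ≤ j' → (p i' j' : ℕ) ≤ (p i j : ℕ)

/-- The volume of a plane partition. -/
def vol {r s t : ℕ} (p : Fin r → Fin s → Fin (t + 1)) : ℕ :=
  ∑ i, ∑ j, (p i j : ℕ)


open scoped FinsetFamily

/-! ### Plane partitions as functions on `ℕ × ℕ` -/

/-- The extension of an array by `0` outside the `r × s` rectangle. -/
def extZero {r s t : ℕ} (p : Fin r → Fin s → Fin (t + 1)) : ℕ → ℕ → ℕ := fun x y =>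
  if h : x < r ∧ y < s then (p ⟨x, h.1⟩ ⟨y, h.2⟩ : ℕ) else 0

lemma extZero_coe {r s t : ℕ} (p : Fin r → Fin s → Fin (t + 1)) (i : Fin r) (j : Fin s) :
    extZero p i j = p i j := by
  simp [extZero]

lemma extZero_injective (r s t : ℕ) :
    Function.Injective (extZero : (Fin r → Fin s → Fin (t + 1)) → ℕ → ℕ → ℕ) := by
  intro p q h
  funext i j
  apply Fin.ext
  rw [← extZero_coe p, ← extZero_coe q, h]

open Classical in
/-- The plane partitions in the `(r,s,t)`-box, extended by `0` to functions on `ℕ × ℕ`. The ambient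
lattice `ℕ → ℕ → ℕ` also contains their diagonal translates. -/
noncomputable def ppExt (r s t : ℕ) : Finset (ℕ → ℕ → ℕ) := (PP r s t).image extZero

lemma mem_ppExt {r s t : ℕ} {q : ℕ → ℕ → ℕ} : q ∈ ppExt r s t ↔
    (∀ x x' y y', x ≤ x' → y ≤ y' → q x' y' ≤ q x y) ∧ (∀ x y, q x y ≤ t) ∧
      ∀ x y, r ≤ x ∨ s ≤ y → q x y = 0 := by
  classical
  simp only [ppExt, PP, Finset.mem_image, Finset.mem_filter, Finset.mem_univ, true_and]
  constructor
  · rintro ⟨p, hp, rfl⟩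
    refine ⟨fun x x' y y' hx hy => ?_, fun x y => ?_, fun x y h => ?_⟩
    · by_cases h : x' < r ∧ y' < s
      · have h' : x < r ∧ y < s := ⟨by omega, by omega⟩
        simp only [extZero, h, h', and_self, dite_true]
        exact hp _ _ _ _ hx hy
      · simp [extZero, h]
    · unfold extZero
      split_ifs <;> omega
    · simp only [extZero]
      rw [dif_neg (by omega)]
  · rintro ⟨h1, h2, h3⟩
    refine ⟨fun i j => ⟨q i j, Nat.lt_succ_of_le (h2 _ _)⟩, fun i i' j j' hi hj => h1 _ _ _ _ hi hj,
      ?_⟩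
    funext x y
    unfold extZero
    split_ifs with h
    · rfl
    · exact (h3 x y (by omega)).symm

/-- The area of the `k`-th slice: the number of cells of the `r × s` rectangle with entry at
least `k`. -/
noncomputable def sliceArea (r s k : ℕ) (q : ℕ → ℕ → ℕ) : ℝ :=
  ∑ x ∈ range r, ∑ y ∈ range s, if k ≤ q x y then 1 else 0

lemma sliceArea_nonneg (r s k : ℕ) (q : ℕ → ℕ → ℕ) : 0 ≤ sliceArea r s k q :=
  sum_nonneg fun _ _ => sum_nonneg fun _ _ => by split_ifs <;> norm_num

lemma sliceArea_mono (r s k : ℕ) : Monotone (sliceArea r s k) := by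
  intro p q h
  refine sum_le_sum fun x _ => sum_le_sum fun y _ => ?_
  have hxy : p x y ≤ q x y := h x y
  split_ifs with h1 h2
  · rfl
  · exact absurd (h1.trans hxy) h2
  · norm_num
  · rfl

/-- Translation by `(-1, -1)`, forgetting row `0` and column `0`. -/
def unshift (q : ℕ → ℕ → ℕ) : ℕ → ℕ → ℕ := fun x y => q (x + 1) (y + 1)

/-- Translation by `(1, 1)`, filling row `0` and column `0` with the maximal value `t`. -/
def shift (t : ℕ) (q : ℕ → ℕ → ℕ) : ℕ → ℕ → ℕ
  | 0, _ => t
  | _ + 1, 0 => t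
  | x + 1, y + 1 => q x y

lemma unshift_shift (t : ℕ) (q : ℕ → ℕ → ℕ) : unshift (shift t q) = q := rfl

lemma shift_injective (t : ℕ) : Function.Injective (shift t) :=
  Function.LeftInverse.injective (unshift_shift t)

/-- Only the cells in row `0` and column `0` are lost by `unshift`. -/
lemma sliceArea_le_unshift (r s k : ℕ) (q : ℕ → ℕ → ℕ) :
    sliceArea r s k q ≤ sliceArea r s k (unshift q) + (r + s + 1) := by
  set e : ℕ → ℕ → ℝ := fun x y => if k ≤ q x y then 1 else 0 with he
  have e0 : ∀ x y, 0 ≤ e x y := fun x y => by simp only [he]; split_ifs <;> norm_num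
  have e1 : ∀ x y, e x y ≤ 1 := fun x y => by simp only [he]; split_ifs <;> norm_num
  calc sliceArea r s k q = ∑ x ∈ range r, ∑ y ∈ range s, e x y := rfl
    _ ≤ ∑ x ∈ range (r + 1), ∑ y ∈ range (s + 1), e x y := by
        rw [sum_range_succ]
        have := sum_nonneg (fun y (_ : y ∈ range (s + 1)) => e0 r y)
        have h2 : ∑ x ∈ range r, ∑ y ∈ range s, e x y
            ≤ ∑ x ∈ range r, ∑ y ∈ range (s + 1), e x y :=
          sum_le_sum fun x _ => by rw [sum_range_succ]; linarith [e0 x s]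
        linarith
    _ = (∑ x ∈ range r, ∑ y ∈ range s, e (x + 1) (y + 1) + ∑ x ∈ range r, e (x + 1) 0)
          + ∑ y ∈ range (s + 1), e 0 y := by
        rw [sum_range_succ', ← sum_add_distrib]
        congr 1
        exact sum_congr rfl fun x _ => sum_range_succ' _ _
    _ ≤ sliceArea r s k (unshift q) + (r + s + 1) := by
        have h1 : ∑ x ∈ range r, e (x + 1) 0 ≤ r := by
          simpa using sum_le_sum (fun x (_ : x ∈ range r) => e1 (x + 1) 0)
        have h2 : ∑ y ∈ range (s + 1), e 0 y ≤ s + 1 := by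
          simpa using sum_le_sum (fun y (_ : y ∈ range (s + 1)) => e1 0 y)
        have h3 : ∑ x ∈ range r, ∑ y ∈ range s, e (x + 1) (y + 1)
          = sliceArea r s k (unshift q) := rfl
        linarith

/-! ### Comparison of conditional means -/

open Classical in
/-- The plane partitions whose `k`-th slice contains all cells of `I` and none of `O`. -/
noncomputable def condPP (r s t k : ℕ) (I O : Set (ℕ × ℕ)) : Finset (ℕ → ℕ → ℕ) :=
  (ppExt r s t).filter fun q => (∀ c ∈ I, k ≤ q c.1 c.2) ∧ ∀ c ∈ O, q c.1 c.2 < k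

lemma mem_condPP {r s t k : ℕ} {I O : Set (ℕ × ℕ)} {q : ℕ → ℕ → ℕ} :
    q ∈ condPP r s t k I O ↔ q ∈ ppExt r s t ∧ (∀ c ∈ I, k ≤ q c.1 c.2) ∧
      ∀ c ∈ O, q c.1 c.2 < k := by
  simp [condPP]

lemma inf_mem_ppExt {r s t : ℕ} {a b : ℕ → ℕ → ℕ} (ha : a ∈ ppExt r s t) (hb : b ∈ ppExt r s t) :
    a ⊓ b ∈ ppExt r s t := by
  rw [mem_ppExt] at *
  refine ⟨fun x x' y y' hx hy => ?_, fun x y => ?_, fun x y h => ?_⟩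
  · exact inf_le_inf (ha.1 _ _ _ _ hx hy) (hb.1 _ _ _ _ hx hy)
  · exact inf_le_left.trans (ha.2.1 x y)
  · simp [ha.2.2 x y h]

lemma sup_mem_ppExt {r s t : ℕ} {a b : ℕ → ℕ → ℕ} (ha : a ∈ ppExt r s t) (hb : b ∈ ppExt r s t) :
    a ⊔ b ∈ ppExt r s t := by
  rw [mem_ppExt] at *
  refine ⟨fun x x' y y' hx hy => ?_, fun x y => ?_, fun x y h => ?_⟩
  · exact sup_le_sup (ha.1 _ _ _ _ hx hy) (hb.1 _ _ _ _ hx hy)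
  · exact sup_le (ha.2.1 x y) (hb.2.1 x y)
  · simp [ha.2.2 x y h, hb.2.2 x y h]

lemma unshift_mem_ppExt {r s t : ℕ} {a : ℕ → ℕ → ℕ} (ha : a ∈ ppExt r s t) :
    unshift a ∈ ppExt r s t := by
  rw [mem_ppExt] at *
  exact ⟨fun x x' y y' hx hy => ha.1 _ _ _ _ (by omega) (by omega), fun x y => ha.2.1 _ _,
    fun x y h => ha.2.2 _ _ (by omega)⟩

lemma inf_shift_mem_ppExt {r s t : ℕ} {a b : ℕ → ℕ → ℕ} (ha : a ∈ ppExt r s t)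
    (hb : b ∈ ppExt r s t) : a ⊓ shift t b ∈ ppExt r s t := by
  rw [mem_ppExt] at *
  have hS : ∀ x x' y y', x ≤ x' → y ≤ y' → shift t b x' y' ≤ shift t b x y := by
    intro x x' y y' hx hy
    have h2 := hb.2.1
    rcases x with _ | x <;> rcases x' with _ | x' <;> rcases y with _ | y <;>
      rcases y' with _ | y' <;> simp only [shift, le_refl] <;>
      first | omega | exact h2 _ _ | exact hb.1 _ _ _ _ (by omega) (by omega)
  refine ⟨fun x x' y y' hx hy => ?_, fun x y => ?_, fun x y h => ?_⟩
  · exact inf_le_inf (ha.1 _ _ _ _ hx hy) (hS _ _ _ _ hx hy)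
  · exact inf_le_left.trans (ha.2.1 x y)
  · simp [ha.2.2 x y h]

/-- Positive association: imposing more cells in the slice and fewer cells outside it does not
decrease the mean slice area (stated with denominators cleared). -/
lemma sum_mul_card_le {r s t k : ℕ} {I₁ O₁ I₀ O₀ : Set (ℕ × ℕ)} (hI : I₀ ⊆ I₁) (hO : O₁ ⊆ O₀) :
    (∑ q ∈ condPP r s t k I₀ O₀, sliceArea r s k q) * (condPP r s t k I₁ O₁).card ≤
      (condPP r s t k I₀ O₀).card * ∑ q ∈ condPP r s t k I₁ O₁, sliceArea r s k q := by
  classical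
  set A := condPP r s t k I₀ O₀ with hA
  set B := condPP r s t k I₁ O₁ with hB
  have key := four_functions_theorem (f₁ := sliceArea r s k) (f₂ := fun _ => (1 : ℝ))
    (f₃ := fun _ => (1 : ℝ)) (f₄ := sliceArea r s k) (sliceArea_nonneg r s k)
    (fun _ => zero_le_one) (fun _ => zero_le_one) (sliceArea_nonneg r s k)
    (fun a b => by simpa using sliceArea_mono r s k (le_sup_left (a := a) (b := b))) A B
  have hinf : A ⊼ B ⊆ A := by
    intro x hx
    obtain ⟨a, ha, b, hb, rfl⟩ := mem_infs.1 hx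
    rw [hA, mem_condPP] at ha ⊢
    rw [hB, mem_condPP] at hb
    exact ⟨inf_mem_ppExt ha.1 hb.1, fun c hc => le_inf (ha.2.1 c hc) (hb.2.1 c (hI hc)),
      fun c hc => inf_lt_of_left_lt (ha.2.2 c hc)⟩
  have hsup : A ⊻ B ⊆ B := by
    intro x hx
    obtain ⟨a, ha, b, hb, rfl⟩ := mem_sups.1 hx
    rw [hA, mem_condPP] at ha
    rw [hB, mem_condPP] at hb ⊢
    exact ⟨sup_mem_ppExt ha.1 hb.1, fun c hc => le_sup_of_le_right (hb.2.1 c hc),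
      fun c hc => sup_lt_iff.2 ⟨ha.2.2 c (hO hc), hb.2.2 c hc⟩⟩
  have h1 : ∑ x ∈ A ⊼ B, (1 : ℝ) ≤ A.card := by
    simpa using card_le_card hinf
  have h2 : ∑ x ∈ A ⊻ B, sliceArea r s k x ≤ ∑ x ∈ B, sliceArea r s k x :=
    sum_le_sum_of_subset_of_nonneg hsup fun x _ _ => sliceArea_nonneg r s k x
  have h3 : 0 ≤ ∑ x ∈ A ⊻ B, sliceArea r s k x := sum_nonneg fun x _ => sliceArea_nonneg r s k x
  calc _ = (∑ q ∈ A, sliceArea r s k q) * ∑ q ∈ B, (1 : ℝ) := by simp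
    _ ≤ _ := key
    _ ≤ _ := by gcongr

/-- If the conditions `(I₁, O₁)`, compared with the translate by `(1, 1)` of the conditions
`(I₀, O₀)`, are the weaker ones on membership (off row `0` and column `0`) and the stronger ones on
exclusion, then the mean slice area given `(I₁, O₁)` exceeds the mean given `(I₀, O₀)` by at most
`r + s + 1`. Each `b` in the second set is replaced by `shift t b`; with a plane partition `a` of
the first set, the minimum is again in the first set and the maximum is again such a shift. -/
lemma sum_mul_card_le_shift {r s t k : ℕ} (hk : k ≤ t) {I₁ O₁ I₀ O₀ : Set (ℕ × ℕ)}
    (hI : ∀ x y, (x + 1, y + 1) ∈ I₁ → (x, y) ∈ I₀)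
    (hO : ∀ x y, (x, y) ∈ O₀ → (x + 1, y + 1) ∈ O₁) :
    (∑ q ∈ condPP r s t k I₁ O₁, sliceArea r s k q) * (condPP r s t k I₀ O₀).card ≤
      (condPP r s t k I₁ O₁).card * ∑ q ∈ condPP r s t k I₀ O₀,
        (sliceArea r s k q + (r + s + 1)) := by
  classical
  set A := condPP r s t k I₁ O₁ with hA
  set B := condPP r s t k I₀ O₀ with hB
  have hn : ∀ q, 0 ≤ sliceArea r s k (unshift q) + (r + s + 1 : ℝ) := fun q => by
    have := sliceArea_nonneg r s k (unshift q)
    positivity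
  have key := four_functions_theorem (f₁ := sliceArea r s k) (f₂ := fun _ => (1 : ℝ))
    (f₃ := fun _ => (1 : ℝ)) (f₄ := fun q => sliceArea r s k (unshift q) + (r + s + 1 : ℝ))
    (sliceArea_nonneg r s k) (fun _ => zero_le_one) (fun _ => zero_le_one) hn
    (fun a b => by
      have h1 := sliceArea_le_unshift r s k a
      have h2 : sliceArea r s k (unshift a) ≤ sliceArea r s k (unshift (a ⊔ b)) :=
        sliceArea_mono r s k fun x y => le_sup_left (a := a (x + 1) (y + 1))
      simp only [mul_one, one_mul]
      linarith) A (B.image (shift t))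
  have hinf : A ⊼ (B.image (shift t)) ⊆ A := by
    intro x hx
    obtain ⟨a, ha, b', hb', rfl⟩ := mem_infs.1 hx
    obtain ⟨b, hb, rfl⟩ := mem_image.1 hb'
    rw [hA, mem_condPP] at ha ⊢
    rw [hB, mem_condPP] at hb
    refine ⟨inf_shift_mem_ppExt ha.1 hb.1, ?_, fun c hc => inf_lt_of_left_lt (ha.2.2 c hc)⟩
    rintro ⟨x, y⟩ hc
    refine le_inf (ha.2.1 _ hc) ?_
    rcases x with _ | x
    · exact hk
    rcases y with _ | y
    · exact hk
    exact hb.2.1 _ (hI x y hc)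
  have hsup : A ⊻ (B.image (shift t)) ⊆ B.image (shift t) := by
    intro x hx
    obtain ⟨a, ha, b', hb', rfl⟩ := mem_sups.1 hx
    obtain ⟨b, hb, rfl⟩ := mem_image.1 hb'
    rw [hA, mem_condPP] at ha
    rw [hB, mem_condPP] at hb
    refine mem_image.2 ⟨unshift a ⊔ b, ?_, ?_⟩
    · rw [hB, mem_condPP]
      exact ⟨sup_mem_ppExt (unshift_mem_ppExt ha.1) hb.1,
        fun c hc => le_sup_of_le_right (hb.2.1 c hc),
        fun c hc => sup_lt_iff.2 ⟨ha.2.2 _ (hO c.1 c.2 hc), hb.2.2 c hc⟩⟩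
    · have hat := (mem_ppExt.1 ha.1).2.1
      funext x y
      rcases x with _ | x
      · exact (sup_eq_right.2 (hat _ _)).symm
      rcases y with _ | y
      · exact (sup_eq_right.2 (hat _ _)).symm
      rfl
  have h1 : ∑ x ∈ A ⊼ (B.image (shift t)), (1 : ℝ) ≤ A.card := by
    simpa using card_le_card hinf
  have h2 := sum_le_sum_of_subset_of_nonneg hsup fun x _ _ => hn x
  rw [sum_image (shift_injective t).injOn] at h2
  simp only [unshift_shift] at h2
  have h3 := sum_nonneg fun x (_ : x ∈ A ⊻ (B.image (shift t))) => hn x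
  calc _ = (∑ q ∈ A, sliceArea r s k q) * ∑ q ∈ B.image (shift t), (1 : ℝ) := by
        rw [sum_image (shift_injective t).injOn]; simp
    _ ≤ _ := key
    _ ≤ _ := by gcongr

/-! ### Sums of squared deviations -/

/-- The sum over `A` of the squared deviations of `F` from its mean on `A`, in expanded form; it
is `0` for empty `A`. -/
noncomputable def sqDev (F : (ℕ → ℕ → ℕ) → ℝ) (A : Finset (ℕ → ℕ → ℕ)) : ℝ :=
  ∑ q ∈ A, F q ^ 2 - (∑ q ∈ A, F q) ^ 2 / A.card

/-- Numerical form of the decomposition of the variance of a union into the variances within the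
two parts and the variance between them; `N`, `S`, `Q` stand for the cardinality, the sum and the
sum of squares of each part. -/
lemma merge_real {N₀ N₁ S₀ S₁ Q₀ Q₁ K₀ K₁ C : ℝ} (h0 : 0 < N₀) (h1 : 0 < N₁)
    (hQ0 : Q₀ - S₀ ^ 2 / N₀ ≤ K₀) (hQ1 : Q₁ - S₁ ^ 2 / N₁ ≤ K₁)
    (hlo : S₀ * N₁ ≤ N₀ * S₁) (hup : S₁ * N₀ ≤ N₁ * (S₀ + C * N₀)) :
    Q₀ + Q₁ - (S₀ + S₁) ^ 2 / (N₀ + N₁) ≤ K₀ + K₁ + C ^ 2 * (N₀ * N₁ / (N₀ + N₁)) := by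
  have e : (S₀ + S₁) ^ 2 / (N₀ + N₁) = S₀ ^ 2 / N₀ + S₁ ^ 2 / N₁ -
      (S₁ * N₀ - S₀ * N₁) ^ 2 / (N₀ * N₁ * (N₀ + N₁)) := by
    field_simp
    ring
  have b : (S₁ * N₀ - S₀ * N₁) ^ 2 ≤ (C * (N₀ * N₁)) ^ 2 :=
    pow_le_pow_left₀ (by linarith) (by linarith) 2
  have b2 : (S₁ * N₀ - S₀ * N₁) ^ 2 / (N₀ * N₁ * (N₀ + N₁)) ≤
      C ^ 2 * (N₀ * N₁ / (N₀ + N₁)) := by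
    rw [div_le_iff₀ (by positivity)]
    refine b.trans (le_of_eq ?_)
    field_simp
  linarith

/-- One step of the exploration: if the means on the two parts differ by at most `C`, the term
between the parts is at most `C ^ 2` times the cardinality of either part, so that it raises the
bound with coefficient `u` on `A₁` to `u + 1`, or the bound with coefficient `v` on `A₀` to
`v + 1`. -/
lemma sqDev_union {F : (ℕ → ℕ → ℕ) → ℝ} {A A₀ A₁ : Finset (ℕ → ℕ → ℕ)} {C u v : ℝ}
    (hd : ∀ G : (ℕ → ℕ → ℕ) → ℝ, ∑ q ∈ A, G q = ∑ q ∈ A₀, G q + ∑ q ∈ A₁, G q)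
    (h0u : sqDev F A₀ ≤ C ^ 2 * (u + 1) * A₀.card) (h0v : sqDev F A₀ ≤ C ^ 2 * v * A₀.card)
    (h1u : sqDev F A₁ ≤ C ^ 2 * u * A₁.card) (h1v : sqDev F A₁ ≤ C ^ 2 * (v + 1) * A₁.card)
    (hlo : (∑ q ∈ A₀, F q) * A₁.card ≤ A₀.card * ∑ q ∈ A₁, F q)
    (hup : (∑ q ∈ A₁, F q) * A₀.card ≤ A₁.card * ∑ q ∈ A₀, (F q + C)) :
    sqDev F A ≤ C ^ 2 * (u + 1) * A.card ∧ sqDev F A ≤ C ^ 2 * (v + 1) * A.card := by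
  have hc : (A.card : ℝ) = A₀.card + A₁.card := by simpa using hd fun _ => 1
  rcases A₀.eq_empty_or_nonempty with rfl | n0
  · have : sqDev F A = sqDev F A₁ := by simp [sqDev, hd, hc]
    rw [this, hc]
    simp only [card_empty, Nat.cast_zero, zero_add]
    refine ⟨h1u.trans ?_, h1v⟩
    gcongr; linarith
  rcases A₁.eq_empty_or_nonempty with rfl | n1
  · have : sqDev F A = sqDev F A₀ := by simp [sqDev, hd, hc]
    rw [this, hc]
    simp only [card_empty, Nat.cast_zero, add_zero]
    refine ⟨h0u, h0v.trans ?_⟩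
    gcongr; linarith
  have p0 : (0 : ℝ) < A₀.card := by exact_mod_cast n0.card_pos
  have p1 : (0 : ℝ) < A₁.card := by exact_mod_cast n1.card_pos
  have hup' : (∑ q ∈ A₁, F q) * A₀.card ≤ A₁.card * (∑ q ∈ A₀, F q + C * A₀.card) := by
    simpa [sum_add_distrib, mul_comm] using hup
  have e : sqDev F A = ∑ q ∈ A₀, F q ^ 2 + ∑ q ∈ A₁, F q ^ 2 -
      (∑ q ∈ A₀, F q + ∑ q ∈ A₁, F q) ^ 2 / (A₀.card + A₁.card) := by
    simp only [sqDev, hd, hc]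
  have b1 : (A₀.card : ℝ) * A₁.card / (A₀.card + A₁.card) ≤ A₁.card := by
    rw [div_le_iff₀ (by positivity)]; nlinarith
  have b0 : (A₀.card : ℝ) * A₁.card / (A₀.card + A₁.card) ≤ A₀.card := by
    rw [div_le_iff₀ (by positivity)]; nlinarith
  rw [e, hc]
  have c1 := mul_le_mul_of_nonneg_left b1 (sq_nonneg C)
  have c0 := mul_le_mul_of_nonneg_left b0 (sq_nonneg C)
  exact ⟨(merge_real p0 p1 h0u h1u hlo hup').trans (by linarith),
    (merge_real p0 p1 h0v h1v hlo hup').trans (by linarith)⟩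

lemma sqDev_const {F : (ℕ → ℕ → ℕ) → ℝ} {A : Finset (ℕ → ℕ → ℕ)} {m : ℝ}
    (h : ∀ q ∈ A, F q = m) : sqDev F A = 0 := by
  rcases A.eq_empty_or_nonempty with rfl | n
  · simp [sqDev]
  have p : (A.card : ℝ) ≠ 0 := by exact_mod_cast n.card_pos.ne'
  rw [sqDev, sum_congr rfl h, sum_congr rfl (g := fun _ => m ^ 2) fun q hq => by rw [h q hq]]
  simp only [sum_const, nsmul_eq_mul]
  field_simp
  ring

/-! ### Exploration of the boundary path of a slice -/

/-- Once the path has reached the first row or the last column, the slice is determined. -/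
lemma sliceArea_eq_of_known {r s t k i d : ℕ} {I O : Set (ℕ × ℕ)} (h0 : i = 0 ∨ d = 0)
    (hK : ∀ x y, i ≤ x ∨ y < s - d → (x, y) ∈ I ∨ (x, y) ∈ O) {p q : ℕ → ℕ → ℕ}
    (hp : p ∈ condPP r s t k I O) (hq : q ∈ condPP r s t k I O) :
    sliceArea r s k p = sliceArea r s k q := by
  rw [mem_condPP] at hp hq
  refine sum_congr rfl fun x _ => sum_congr rfl fun y hy => ?_
  have hy := mem_range.1 hy
  rcases hK x y (by omega) with h | h
  · rw [if_pos (hp.2.1 _ h), if_pos (hq.2.1 _ h)]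
  · rw [if_neg (hp.2.2 _ h).not_ge, if_neg (hq.2.2 _ h).not_ge]

/-- Asking whether `k ≤ q i j`: by monotonicity, a positive answer settles all cells weakly above
and to the left of `(i, j)`, a negative answer all cells weakly below and to the right. -/
lemma sum_condPP_split {r s t k i j : ℕ} {I O : Set (ℕ × ℕ)} (G : (ℕ → ℕ → ℕ) → ℝ) :
    ∑ q ∈ condPP r s t k I O, G q =
      ∑ q ∈ condPP r s t k I (O ∪ {c | i ≤ c.1 ∧ j ≤ c.2}), G q +
        ∑ q ∈ condPP r s t k (I ∪ {c | c.1 ≤ i ∧ c.2 ≤ j}) O, G q := by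
  classical
  rw [← sum_union]
  · refine sum_congr ?_ fun _ _ => rfl
    ext q
    simp only [mem_union, mem_condPP, Set.mem_union, Set.mem_ofPred_eq]
    constructor
    · rintro ⟨hq, hI, hO⟩
      have hm := (mem_ppExt.1 hq).1
      rcases lt_or_ge (q i j) k with h | h
      · refine Or.inl ⟨hq, hI, ?_⟩
        rintro c (hc | hc)
        · exact hO c hc
        · exact (hm _ _ _ _ hc.1 hc.2).trans_lt h
      · refine Or.inr ⟨hq, ?_, hO⟩
        rintro c (hc | hc)
        · exact hI c hc
        · exact h.trans (hm _ _ _ _ hc.1 hc.2)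
    · rintro (⟨hq, hI, hO⟩ | ⟨hq, hI, hO⟩)
      · exact ⟨hq, hI, fun c hc => hO c (Or.inl hc)⟩
      · exact ⟨hq, fun c hc => hI c (Or.inl hc), hO⟩
  · rw [Finset.disjoint_left]
    intro q h0 h1
    have a := (mem_condPP.1 h0).2.2 (i, j) (Or.inr ⟨le_rfl, le_rfl⟩)
    have b := (mem_condPP.1 h1).2.1 (i, j) (Or.inr ⟨le_rfl, le_rfl⟩)
    omega

/-- The exploration has `i` rows and `d` columns left, so the next cell to be examined is
`(i - 1, s - d)`. The sets `I` and `O` of cells known to lie inside and outside the slice contain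
the rectangle above and to the left of the end of the path, respectively the quadrant below and to
the right of it, are stable under `(-1, -1)`, respectively `(1, 1)`, and together decide all cells
in rows `≥ i` and in columns `< s - d`. -/
lemma sqDev_condPP_le {r s t k : ℕ} (hk : k ≤ t) (n : ℕ) : ∀ (i d : ℕ) (I O : Set (ℕ × ℕ)),
    i + d ≤ n → d ≤ s →
    (∀ x y, (x + 1, y + 1) ∈ I → (x, y) ∈ I) →
    (∀ x y, (x, y) ∈ O → (x + 1, y + 1) ∈ O) →
    (∀ x y, x < i → y < s - d → (x, y) ∈ I) →
    (∀ x y, i ≤ x → s - d ≤ y → (x, y) ∈ O) →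
    (∀ x y, i ≤ x ∨ y < s - d → (x, y) ∈ I ∨ (x, y) ∈ O) →
    sqDev (sliceArea r s k) (condPP r s t k I O) ≤
        (r + s + 1 : ℝ) ^ 2 * d * (condPP r s t k I O).card ∧
      sqDev (sliceArea r s k) (condPP r s t k I O) ≤
        (r + s + 1 : ℝ) ^ 2 * i * (condPP r s t k I O).card := by
  induction n with
  | zero =>
    intro i d I O hn _ _ _ _ _ hK
    rcases (condPP r s t k I O).eq_empty_or_nonempty with h | ⟨p, hp⟩
    · simp [h, sqDev]
    rw [sqDev_const fun q hq => sliceArea_eq_of_known (by omega) hK hq hp]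
    constructor <;> positivity
  | succ n ih =>
    intro i d I O hn hds hI hO hlow hupp hK
    by_cases h0 : i = 0 ∨ d = 0
    · rcases (condPP r s t k I O).eq_empty_or_nonempty with h | ⟨p, hp⟩
      · simp [h, sqDev]
      rw [sqDev_const fun q hq => sliceArea_eq_of_known h0 hK hq hp]
      constructor <;> positivity
    obtain ⟨i, rfl⟩ : ∃ i', i = i' + 1 := ⟨i - 1, by omega⟩
    obtain ⟨d, rfl⟩ : ∃ d', d = d' + 1 := ⟨d - 1, by omega⟩
    obtain ⟨j, hj⟩ : ∃ j, j = s - (d + 1) := ⟨_, rfl⟩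
    have hj' : s - d = j + 1 := by omega
    rw [← hj] at hlow hupp hK
    set I₁ : Set (ℕ × ℕ) := I ∪ {c | c.1 ≤ i ∧ c.2 ≤ j} with hI₁
    set O₀ : Set (ℕ × ℕ) := O ∪ {c | i ≤ c.1 ∧ j ≤ c.2} with hO₀
    have mI : ∀ x y, (x, y) ∈ I₁ ↔ (x, y) ∈ I ∨ (x ≤ i ∧ y ≤ j) := fun x y => Iff.rfl
    have mO : ∀ x y, (x, y) ∈ O₀ ↔ (x, y) ∈ O ∨ (i ≤ x ∧ j ≤ y) := fun x y => Iff.rfl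
    have shI : ∀ x y, (x + 1, y + 1) ∈ I₁ → (x, y) ∈ I := by
      intro x y h
      rcases (mI _ _).1 h with h | h
      · exact hI _ _ h
      · exact hlow _ _ (by omega) (by omega)
    have shO : ∀ x y, (x, y) ∈ O₀ → (x + 1, y + 1) ∈ O := by
      intro x y h
      rcases (mO _ _).1 h with h | h
      · exact hO _ _ h
      · exact hupp _ _ (by omega) (by omega)
    have H0 := ih i (d + 1) I O₀ (by omega) hds hI (fun x y h => Or.inl (shO x y h))
      (fun x y hx hy => hlow x y (by omega) (by omega))
      (fun x y hx hy => Or.inr ⟨hx, by simpa [hj] using hy⟩)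
      (fun x y h => by
        rw [← hj] at h
        by_cases h' : i + 1 ≤ x ∨ y < j
        · rcases hK x y h' with h | h
          · exact Or.inl h
          · exact Or.inr (Or.inl h)
        · exact Or.inr (Or.inr ⟨by simp only; omega, by simp only; omega⟩))
    have H1 := ih (i + 1) d I₁ O (by omega) (by omega) (fun x y h => Or.inl (shI x y h)) hO
      (fun x y hx hy => Or.inr ⟨by simp only; omega, by simp only; omega⟩)
      (fun x y hx hy => hupp x y hx (by omega))
      (fun x y h => by
        rw [hj'] at h
        by_cases h' : i + 1 ≤ x ∨ y < j
        · rcases hK x y h' with h | h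
          · exact Or.inl (Or.inl h)
          · exact Or.inr h
        · exact Or.inl (Or.inr ⟨by simp only; omega, by simp only; omega⟩))
    push_cast at H0 H1 ⊢
    exact sqDev_union (fun G => sum_condPP_split G) H0.1 H0.2 H1.1 H1.2
      (sum_mul_card_le Set.subset_union_left Set.subset_union_left)
      (sum_mul_card_le_shift hk shI shO)

/-- The variance of a slice area is at most `(r + s + 1) ^ 2 * min r s`. -/
lemma sqDev_ppExt_le {r s t k : ℕ} (hk0 : 0 < k) (hk : k ≤ t) :
    sqDev (sliceArea r s k) (ppExt r s t) ≤
      (r + s + 1 : ℝ) ^ 2 * (min r s : ℕ) * (ppExt r s t).card := by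
  have hA : condPP r s t k ∅ {c | r ≤ c.1} = ppExt r s t := by
    ext q
    rw [mem_condPP]
    refine ⟨fun h => h.1, fun h => ⟨h, fun c hc => hc.elim, fun c hc => ?_⟩⟩
    rw [(mem_ppExt.1 h).2.2 _ _ (Or.inl hc)]
    exact hk0
  have := sqDev_condPP_le (r := r) (s := s) hk (r + s) r s ∅ {c | r ≤ c.1} le_rfl le_rfl
    (fun x y h => h.elim) (fun x y (h : r ≤ x) => show r ≤ x + 1 by omega)
    (fun x y _ h => by omega) (fun x y h _ => h)
    (fun x y h => Or.inr (show r ≤ x by omega))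
  rw [hA] at this
  rcases le_total r s with h | h
  · rw [min_eq_left h]; exact this.2
  · rw [min_eq_right h]; exact this.1

lemma sum_sq_sub_mean {F : (ℕ → ℕ → ℕ) → ℝ} {A : Finset (ℕ → ℕ → ℕ)} :
    ∑ q ∈ A, (F q - (∑ p ∈ A, F p) / A.card) ^ 2 = sqDev F A := by
  rcases A.eq_empty_or_nonempty with rfl | n
  · simp [sqDev]
  have p : (A.card : ℝ) ≠ 0 := by exact_mod_cast n.card_pos.ne'
  simp only [sub_sq, sum_add_distrib, sum_sub_distrib, ← sum_mul, ← mul_sum, sum_const,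
    nsmul_eq_mul, sqDev]
  field_simp
  ring

/-! ### The volume -/

lemma vol_eq_sum_sliceArea {r s t : ℕ} (p : Fin r → Fin s → Fin (t + 1)) :
    (vol p : ℝ) = ∑ k ∈ Icc 1 t, sliceArea r s k (extZero p) := by
  have h : ∀ m : ℕ, m ≤ t → (m : ℝ) = ∑ k ∈ Icc 1 t, if k ≤ m then (1 : ℝ) else 0 := by
    intro m hm
    rw [← sum_filter, sum_const, nsmul_eq_mul, mul_one]
    have : (Icc 1 t).filter (fun k => k ≤ m) = Icc 1 m := by
      ext k; simp only [mem_filter, mem_Icc]; omega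
    rw [this]; simp
  simp only [sliceArea, vol, Nat.cast_sum]
  rw [sum_comm (s := Icc 1 t), sum_range]
  refine sum_congr rfl fun i _ => ?_
  rw [sum_comm (s := Icc 1 t), sum_range]
  refine sum_congr rfl fun j _ => ?_
  rw [extZero_coe]
  exact h _ (by omega)

/-- The mean volume is `r * s * t / 2`, by complementation in the box. -/
lemma sum_vol {r s t : ℕ} :
    ∑ p ∈ PP r s t, (vol p : ℝ) = (PP r s t).card * ((r * s * t : ℝ) / 2) := by
  have hinv : ∑ p ∈ PP r s t, (vol p : ℝ) = ∑ p ∈ PP r s t, ((r * s * t : ℝ) - vol p) := by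
    refine sum_nbij' (fun p i j => Fin.rev (p (Fin.rev i) (Fin.rev j)))
      (fun p i j => Fin.rev (p (Fin.rev i) (Fin.rev j))) ?_ ?_ ?_ ?_ ?_
    · intro p hp
      simp only [PP, mem_filter, mem_univ, true_and] at hp ⊢
      intro i i' j j' hi hj
      exact Fin.rev_le_rev.2 (hp _ _ _ _ (Fin.rev_le_rev.2 hi) (Fin.rev_le_rev.2 hj))
    · intro p hp
      simp only [PP, mem_filter, mem_univ, true_and] at hp ⊢
      intro i i' j j' hi hj
      exact Fin.rev_le_rev.2 (hp _ _ _ _ (Fin.rev_le_rev.2 hi) (Fin.rev_le_rev.2 hj))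
    · intro p _; simp
    · intro p _; simp
    · intro p _
      have e : ∀ a : Fin (t + 1), ((Fin.rev a : ℕ) : ℝ) = t - (a : ℕ) := by
        intro a
        have : (Fin.rev a : ℕ) + a = t := by rw [Fin.val_rev]; omega
        have h : ((Fin.rev a : ℕ) : ℝ) + (a : ℕ) = t := by exact_mod_cast this
        linarith
      have e2 : ∑ i : Fin r, ∑ j : Fin s, ((p (Fin.rev i) (Fin.rev j) : ℕ) : ℝ)
          = ∑ i : Fin r, ∑ j : Fin s, ((p i j : ℕ) : ℝ) := by
        rw [← Equiv.sum_comp Fin.revPerm]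
        refine sum_congr rfl fun i _ => ?_
        rw [← Equiv.sum_comp Fin.revPerm]
        simp
      simp only [vol, Nat.cast_sum, e, sum_sub_distrib, e2]
      simp [mul_assoc]
  rw [sum_sub_distrib, sum_const, nsmul_eq_mul] at hinv
  linarith

lemma sum_sq_vol_le (r s t : ℕ) :
    ∑ p ∈ PP r s t, ((vol p : ℝ) - (r * s * t : ℝ) / 2) ^ 2 ≤
      t ^ 2 * ((r + s + 1 : ℝ) ^ 2 * (min r s : ℕ)) * (PP r s t).card := by
  classical
  set A := ppExt r s t with hA
  set K : ℝ := (r + s + 1 : ℝ) ^ 2 * (min r s : ℕ)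
  have hc : A.card = (PP r s t).card := card_image_of_injective _ (extZero_injective r s t)
  have hsum : ∀ G : (ℕ → ℕ → ℕ) → ℝ, ∑ q ∈ A, G q = ∑ p ∈ PP r s t, G (extZero p) := fun G =>
    sum_image (extZero_injective r s t).injOn
  set m : ℕ → ℝ := fun k => (∑ q ∈ A, sliceArea r s k q) / A.card with hm
  have hne : ((PP r s t).card : ℝ) ≠ 0 := by
    have : (fun _ _ => 0 : Fin r → Fin s → Fin (t + 1)) ∈ PP r s t := by simp [PP]
    exact_mod_cast (card_pos.2 ⟨_, this⟩).ne'
  have hmean : ∑ k ∈ Icc 1 t, m k = (r * s * t : ℝ) / 2 := by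
    simp only [hm]
    rw [← sum_div, sum_comm, hsum]
    simp only [← vol_eq_sum_sliceArea]
    rw [sum_vol, hc, mul_div_cancel_left₀ _ hne]
  calc ∑ p ∈ PP r s t, ((vol p : ℝ) - (r * s * t : ℝ) / 2) ^ 2
      = ∑ p ∈ PP r s t, (∑ k ∈ Icc 1 t, (sliceArea r s k (extZero p) - m k)) ^ 2 := by
        refine sum_congr rfl fun p _ => ?_
        rw [sum_sub_distrib, hmean, vol_eq_sum_sliceArea]
    _ ≤ ∑ p ∈ PP r s t, t * ∑ k ∈ Icc 1 t, (sliceArea r s k (extZero p) - m k) ^ 2 := by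
        refine sum_le_sum fun p _ => ?_
        simpa using sq_sum_le_card_mul_sum_sq (s := Icc 1 t)
          (f := fun k => sliceArea r s k (extZero p) - m k)
    _ = t * ∑ k ∈ Icc 1 t, sqDev (sliceArea r s k) A := by
        rw [← mul_sum, sum_comm]
        congr 1
        refine sum_congr rfl fun k _ => ?_
        rw [← sum_sq_sub_mean, hsum]
    _ ≤ t * ∑ k ∈ Icc 1 t, K * A.card := by
        gcongr with k hk
        exact sqDev_ppExt_le (mem_Icc.1 hk).1 (mem_Icc.1 hk).2
    _ = _ := by
        rw [sum_const, hc]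
        simp
        ring

/-- Chebyshev's inequality for the volume. The constant `36` comes from
`r + s + 1 ≤ 3 * max r s` and the factor `1 / 2` in the mean. -/
lemma good_ratio_ge {r s t : ℕ} (hr : 0 < r) (hs : 0 < s) (ht : 0 < t) {δ : ℝ} (hδ : 0 < δ) :
    1 - 36 / δ ^ 2 * ((min r s : ℕ) : ℝ)⁻¹ ≤
      (((PP r s t).filter fun p => (1 - δ) ≤ (vol p : ℝ) / ((r * s * t : ℝ) / 2) ∧
          (vol p : ℝ) / ((r * s * t : ℝ) / 2) ≤ 1 + δ).card : ℝ) / ((PP r s t).card : ℝ) := by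
  classical
  set μ : ℝ := (r * s * t : ℝ) / 2 with hμ
  have hr0 : (0 : ℝ) < r := by exact_mod_cast hr
  have hs0 : (0 : ℝ) < s := by exact_mod_cast hs
  have ht0 : (0 : ℝ) < t := by exact_mod_cast ht
  have hμ0 : 0 < μ := by positivity
  set N : ℝ := ((PP r s t).card : ℝ) with hN
  have hN0 : 0 < N := by
    have : (fun _ _ => 0 : Fin r → Fin s → Fin (t + 1)) ∈ PP r s t := by simp [PP]
    exact Nat.cast_pos.2 (card_pos.2 ⟨_, this⟩)
  set good : (Fin r → Fin s → Fin (t + 1)) → Prop := fun p =>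
    (1 - δ) ≤ (vol p : ℝ) / μ ∧ (vol p : ℝ) / μ ≤ 1 + δ with hgood
  have hsplit : (((PP r s t).filter good).card : ℝ) +
      ((PP r s t).filter fun p => ¬ good p).card = N := by
    rw [hN]; exact_mod_cast card_filter_add_card_filter_not (s := PP r s t) good
  have hcheb : (((PP r s t).filter fun p => ¬ good p).card : ℝ) * (δ * μ) ^ 2 ≤
      t ^ 2 * ((r + s + 1 : ℝ) ^ 2 * (min r s : ℕ)) * N := by
    refine le_trans ?_ (sum_sq_vol_le r s t)
    rw [← nsmul_eq_mul, ← sum_const]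
    refine le_trans (sum_le_sum fun p hp => ?_)
      (sum_le_sum_of_subset_of_nonneg (filter_subset _ _) fun p _ _ => sq_nonneg _)
    have hb := (mem_filter.1 hp).2
    rw [hgood] at hb
    simp only [le_div_iff₀ hμ0, div_le_iff₀ hμ0, not_and_or, not_le] at hb
    rw [sq_le_sq, abs_of_pos (by positivity)]
    rcases hb with hb | hb
    · exact le_trans (by linarith) (neg_le_abs _)
    · exact le_trans (by linarith) (le_abs_self _)
  have hK : t ^ 2 * ((r + s + 1 : ℝ) ^ 2 * (min r s : ℕ)) ≤
      36 / δ ^ 2 * ((min r s : ℕ) : ℝ)⁻¹ * (δ * μ) ^ 2 := by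
    have hm0 : (0 : ℝ) < (min r s : ℕ) := by exact_mod_cast lt_min hr hs
    have hprod : (r : ℝ) * s = (min r s : ℕ) * (max r s : ℕ) := by
      exact_mod_cast (min_mul_max r s).symm
    have hM : (r + s + 1 : ℝ) ≤ 3 * (max r s : ℕ) := by
      have : r + s + 1 ≤ 3 * max r s := by omega
      exact_mod_cast this
    have e : 36 / δ ^ 2 * ((min r s : ℕ) : ℝ)⁻¹ * (δ * μ) ^ 2 =
        t ^ 2 * ((3 * (max r s : ℕ) : ℝ) ^ 2 * (min r s : ℕ)) := by
      rw [hμ, hprod]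
      field_simp
      ring
    rw [e]
    gcongr
  rw [le_div_iff₀ hN0]
  have hB : (((PP r s t).filter fun p => ¬ good p).card : ℝ) ≤
      36 / δ ^ 2 * ((min r s : ℕ) : ℝ)⁻¹ * N := by
    have := hcheb.trans (mul_le_mul_of_nonneg_right hK hN0.le)
    have hp : 0 < (δ * μ) ^ 2 := by positivity
    exact le_of_mul_le_mul_right (by linarith) hp
  linarith

/-- Concentration of the volume: if `r_n, s_n → ∞` (with `t_n` arbitrary), then for every
`δ > 0` the probability that `1 − δ ≤ X_n/μ_n ≤ 1 + δ` tends to 1, where `X_n` is the volume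
of a uniformly random plane partition in the `(r_n,s_n,t_n)`-box and `μ_n = r_n s_n t_n / 2`. -/
theorem volume_concentration_PP (r s t : ℕ → ℕ)
    (hr : ∀ n, 0 < r n) (hs : ∀ n, 0 < s n) (ht : ∀ n, 0 < t n)
    (hr' : Tendsto r atTop atTop) (hs' : Tendsto s atTop atTop) :
    ∀ δ : ℝ, 0 < δ →
      Tendsto (fun n : ℕ =>
        (((PP (r n) (s n) (t n)).filter fun p =>
            (1 - δ) ≤ (vol p : ℝ) / ((r n * s n * t n : ℝ) / 2) ∧
            (vol p : ℝ) / ((r n * s n * t n : ℝ) / 2) ≤ 1 + δ).card : ℝ) /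
          ((PP (r n) (s n) (t n)).card : ℝ))
        atTop (nhds 1) := by
  intro δ hδ
  have hmin : Tendsto (fun n => min (r n) (s n)) atTop atTop :=
    tendsto_atTop.2 fun b => by
      filter_upwards [tendsto_atTop.1 hr' b, tendsto_atTop.1 hs' b] with n h1 h2
      exact le_min h1 h2
  have hlow : Tendsto (fun n => 1 - 36 / δ ^ 2 * ((min (r n) (s n) : ℕ) : ℝ)⁻¹) atTop (nhds 1) := by
    have h := ((tendsto_inv_atTop_zero.comp
      (tendsto_natCast_atTop_atTop (R := ℝ))).comp hmin).const_mul (36 / δ ^ 2)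
    simpa using h.const_sub 1
  refine tendsto_of_tendsto_of_tendsto_of_le_of_le hlow tendsto_const_nhds
    (fun n => good_ratio_ge (hr n) (hs n) (ht n) hδ) fun n => ?_
  exact div_le_one_of_le₀ (Nat.cast_le.2 (card_filter_le _ _)) (Nat.cast_nonneg _)
end

section
/- Let (r_n), (s_n), (t_n) be sequences of positive integers with r_n → ∞ and s_n → ∞ (and t_n arbitrary). For each n let X_n be the volume random variable on PP(r_n, s_n, t_n) equipped with the uniform probability distribution, with mean μ_n and standard deviation σ_n. Then the normalized random variables Y_n = (X_n − μ_n)/σ_n converge in distribution, as n → ∞, to a standard normal random variable (mean 0, variance 1). -/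
open Finset Filter MeasureTheory

/-- The mean volume for the uniform distribution on `PP(r,s,t)`. -/
noncomputable def meanPP (r s t : ℕ) : ℝ :=
  (∑ p ∈ PP r s t, (vol p : ℝ)) / ((PP r s t).card : ℝ)

/-- The standard deviation of the volume for the uniform distribution on `PP(r,s,t)`. -/
noncomputable def sdPP (r s t : ℕ) : ℝ :=
  Real.sqrt ((∑ p ∈ PP r s t, ((vol p : ℝ) - meanPP r s t) ^ 2) / ((PP r s t).card : ℝ))

/-! ### Vandermonde determinants and interlacing rows -/

/-- Subtracting from each row of a Vandermonde matrix the previous one reduces its size by one. -/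
lemma det_vandermonde_diff {R : Type*} [CommRing R] {n : ℕ} (y : Fin (n + 1) → R) :
    (Matrix.vandermonde y).det =
      (Matrix.of fun j i : Fin n =>
        y j.succ ^ ((i : ℕ) + 1) - y j.castSucc ^ ((i : ℕ) + 1)).det := by
  let B : Matrix (Fin (n + 1)) (Fin (n + 1)) R :=
    Matrix.of fun i k => Fin.cases (y 0 ^ (k : ℕ))
      (fun j => y j.succ ^ (k : ℕ) - y j.castSucc ^ (k : ℕ)) i
  have h : (Matrix.vandermonde y).det = B.det := by
    apply Matrix.det_eq_of_forall_row_eq_smul_add_pred (fun _ => 1)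
    · intro j; simp [B, Matrix.vandermonde_apply]
    · intro i j; simp [B, Matrix.vandermonde_apply]
  rw [h, Matrix.det_succ_column_zero, Fin.sum_univ_succ]
  have h0 : ∀ i : Fin n, B i.succ 0 = 0 := by intro i; simp [B]
  simp only [h0]
  simp only [mul_zero, zero_mul, Finset.sum_const_zero, add_zero]
  have h1 : B 0 0 = 1 := by simp [B]
  rw [h1]
  simp only [Fin.val_zero, pow_zero, one_mul]
  congr 1

/-- The Vandermonde determinant in the `q ^ l i` as a sum, over all rows `m` interlacing `l`, of
Vandermonde determinants of one size less: each `m j` ranges over its own interval, so the sum can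
be taken inside each row of the determinant, where it is geometric. -/
lemma vandermonde_step {R : Type*} [CommRing R] (q : R) {n : ℕ} (l : Fin (n + 1) → ℕ)
    (hl : ∀ j : Fin n, l j.succ ≤ l j.castSucc) :
    (Matrix.vandermonde fun i => q ^ l i).det =
      (∏ i : Fin n, (1 - q ^ ((i : ℕ) + 1))) *
        ∑ m ∈ Fintype.piFinset (fun j : Fin n => Ico (l j.succ) (l j.castSucc)),
          (∏ j, q ^ m j) * (Matrix.vandermonde fun j => q ^ m j).det := by
  rw [det_vandermonde_diff]
  have h1 : (Matrix.of fun j i : Fin n =>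
        (q ^ l j.succ) ^ ((i : ℕ) + 1) - (q ^ l j.castSucc) ^ ((i : ℕ) + 1)) =
      Matrix.of fun j i : Fin n => (1 - q ^ ((i : ℕ) + 1)) *
        (Matrix.of fun j => ∑ m ∈ Ico (l j.succ) (l j.castSucc),
          fun i : Fin n => (q ^ ((i : ℕ) + 1)) ^ m) j i := by
    ext j i
    have := geom_sum_Ico_mul (q ^ ((i : ℕ) + 1)) (hl j)
    simp only [Matrix.of_apply, Finset.sum_apply]
    rw [← pow_mul, ← pow_mul, mul_comm (l _), mul_comm (l _), pow_mul, pow_mul]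
    linear_combination this
  rw [h1, Matrix.det_mul_row]
  congr 1
  have h2 := (Matrix.detRowAlternating (n := Fin n) (R := R)).toMultilinearMap.map_sum_finset
    (fun j m => fun i : Fin n => (q ^ ((i : ℕ) + 1)) ^ m)
    (fun j : Fin n => Ico (l j.succ) (l j.castSucc))
  refine Eq.trans h2 ?_
  refine Finset.sum_congr rfl fun m _ => ?_
  rw [← Matrix.det_mul_column]
  change Matrix.det _ = _
  congr 1
  ext j i
  simp only [Matrix.of_apply, Matrix.vandermonde_apply]
  ring

/-! ### Gelfand–Tsetlin patterns -/

/-- Puts the entries `l` on the antidiagonal `i + j = n` of the array `c`. -/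
def glue (n : ℕ) (l : Fin (n + 1) → ℕ) (c : ℕ → ℕ → ℕ) : ℕ → ℕ → ℕ :=
  fun i j => if h : i + j = n then l ⟨i, by omega⟩ else c i j

open Classical in
/-- Gelfand–Tsetlin patterns with `n` rows and top row `l`, shifted so that rows are strictly
decreasing: the `k`-th row is `λ_i + k - 1 - i`, `0 ≤ i < k`. The `i`-th entry of the `k`-th row is
stored at position `(i, k - 1 - i)`, so that rows are antidiagonals; the array is zero beyond the
`n`-th antidiagonal. See `mem_GT` for the defining inequalities. -/
noncomputable def GT : (n : ℕ) → (Fin n → ℕ) → Finset (ℕ → ℕ → ℕ)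
  | 0, _ => {fun _ _ => 0}
  | n + 1, l =>
    (Fintype.piFinset (fun j : Fin n => Ico (l j.succ) (l j.castSucc))).biUnion
      fun m => (GT n m).image (glue n l)

lemma mem_GT {n : ℕ} {l : Fin n → ℕ} {c : ℕ → ℕ → ℕ} :
    c ∈ GT n l ↔ (∀ i j, n ≤ i + j → c i j = 0) ∧
      (∀ i j, (h : i + j + 1 = n) → c i j = l ⟨i, by omega⟩) ∧
      (∀ i j, i + j + 1 < n → c i j < c i (j + 1) ∧ c (i + 1) j ≤ c i j) := by
  induction n generalizing c with
  | zero =>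
    simp only [GT, Finset.mem_singleton]
    constructor
    · rintro rfl; simp
    · rintro ⟨h, -⟩; funext i j; exact h i j (by omega)
  | succ n ih =>
    simp only [GT, Finset.mem_biUnion, Finset.mem_image, Fintype.mem_piFinset, Finset.mem_Ico]
    constructor
    · rintro ⟨m, hm, c', hc', rfl⟩
      obtain ⟨h1, h2, h3⟩ := ih.1 hc'
      refine ⟨fun i j hij => ?_, fun i j hij => ?_, fun i j hij => ?_⟩
      · rw [glue, dif_neg (by omega)]; exact h1 i j (by omega)
      · rw [glue, dif_pos (by omega)]
      · rw [glue, dif_neg (by omega), glue, glue]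
        by_cases hh : i + j + 1 = n
        · rw [dif_pos (by omega), dif_pos (by omega), h2 i j hh]
          have := hm ⟨i, by omega⟩
          simp only [Fin.succ_mk, Fin.castSucc_mk] at this
          exact ⟨this.2, this.1⟩
        · rw [dif_neg (by omega), dif_neg (by omega)]
          exact h3 i j (by omega)
    · rintro ⟨h1, h2, h3⟩
      refine ⟨fun i => c i (n - 1 - i), fun i => ?_, fun i j => if i + j < n then c i j else 0,
        ih.2 ⟨fun i j hij => ?_, fun i j hij => ?_, fun i j hij => ?_⟩, ?_⟩
      · have hi := i.2
        have e1 := h2 (i + 1) (n - 1 - i) (by omega)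
        have e2 := h2 i (n - 1 - i + 1) (by omega)
        have := h3 i (n - 1 - i) (by omega)
        rw [e1, e2] at this
        exact ⟨this.2, this.1⟩
      · rw [if_neg (by omega)]
      · rw [if_pos (by omega)]; change c i j = c i (n - 1 - i); congr 1; omega
      · rw [if_pos (by omega), if_pos (by omega), if_pos (by omega)]
        exact h3 i j (by omega)
      · funext i j
        rw [glue]
        split_ifs with h h'
        · exact (h2 i j (by omega)).symm
        · rfl
        · exact (h1 i j (by omega)).symm

/-- The sum of the entries of the first `n` antidiagonals. -/
def wt (n : ℕ) (c : ℕ → ℕ → ℕ) : ℕ := ∑ k ∈ range n, ∑ i ∈ range (k + 1), c i (k - i)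

lemma wt_glue (n : ℕ) (l : Fin (n + 1) → ℕ) (c : ℕ → ℕ → ℕ) :
    wt (n + 1) (glue n l c) = wt n c + ∑ j, l j := by
  rw [wt, Finset.sum_range_succ, wt]
  congr 1
  · refine Finset.sum_congr rfl fun k hk => Finset.sum_congr rfl fun i hi => ?_
    rw [Finset.mem_range] at hk hi
    rw [glue, dif_neg (by omega)]
  · rw [Finset.sum_range]
    refine Finset.sum_congr rfl fun i _ => ?_
    rw [glue, dif_pos (by omega)]

lemma sum_GT_succ {R : Type*} [CommRing R] (q : R) {n : ℕ} (l : Fin (n + 1) → ℕ) :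
    ∑ c ∈ GT (n + 1) l, q ^ wt (n + 1) c =
      (∏ j, q ^ l j) * ∑ m ∈ Fintype.piFinset (fun j : Fin n => Ico (l j.succ) (l j.castSucc)),
        ∑ c ∈ GT n m, q ^ wt n c := by
  classical
  have key : ∀ (m m' : Fin n → ℕ) (c c' : ℕ → ℕ → ℕ), c ∈ GT n m → c' ∈ GT n m' →
      glue n l c = glue n l c' → c = c' ∧ m = m' := by
    intro m m' c c' hc hc' h
    obtain ⟨h1, h2, -⟩ := mem_GT.1 hc
    obtain ⟨h1', h2', -⟩ := mem_GT.1 hc'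
    have hcc : c = c' := by
      funext i j
      by_cases hij : n ≤ i + j
      · rw [h1 i j hij, h1' i j hij]
      · have := congrFun (congrFun h i) j
        rwa [glue, glue, dif_neg (by omega), dif_neg (by omega)] at this
    refine ⟨hcc, ?_⟩
    funext i
    have hi := i.2
    have e := h2 i (n - 1 - i) (by omega)
    have e' := h2' i (n - 1 - i) (by omega)
    rw [← hcc] at e'
    exact e.symm.trans e'
  rw [GT, Finset.sum_biUnion, Finset.mul_sum]
  · refine Finset.sum_congr rfl fun m _ => ?_
    rw [Finset.sum_image, Finset.mul_sum]
    · refine Finset.sum_congr rfl fun c _ => ?_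
      rw [wt_glue, pow_add, Finset.prod_pow_eq_pow_sum, mul_comm]
    · intro c hc c' hc' h
      exact (key m m c c' hc hc' h).1
  · intro m _ m' _ hmm
    rw [Function.onFun, Finset.disjoint_left]
    intro x hx hx'
    obtain ⟨c, hc, rfl⟩ := Finset.mem_image.1 hx
    obtain ⟨c', hc', h⟩ := Finset.mem_image.1 hx'
    exact hmm (key m m' c c' hc hc' h.symm).2

/-- The constant `∏_{k<n} ∏_{i<k} (1 - q^(i+1))` relating patterns to Vandermonde determinants. -/
def qConst {R : Type*} [CommRing R] (q : R) (n : ℕ) : R :=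
  ∏ k ∈ range n, ∏ i ∈ range k, (1 - q ^ (i + 1))

/-- The generating function of Gelfand–Tsetlin patterns with a given top row, i.e. the principal
specialisation of a Schur function, as a Vandermonde determinant. -/
lemma GT_formula {R : Type*} [CommRing R] (q : R) {n : ℕ} (l : Fin n → ℕ) (hl : StrictAnti l) :
    qConst q n * ∑ c ∈ GT n l, q ^ wt n c =
      (∏ j, q ^ l j) * (Matrix.vandermonde fun j => q ^ l j).det := by
  induction n with
  | zero => simp [qConst, GT, wt]
  | succ n ih =>
    rw [sum_GT_succ, vandermonde_step q l
      (fun j => hl.antitone (Fin.castSucc_lt_succ).le), qConst, Finset.prod_range_succ, ← qConst]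
    rw [← Fin.prod_univ_eq_prod_range (fun i => 1 - q ^ (i + 1)) n]
    have : ∀ m ∈ Fintype.piFinset (fun j : Fin n => Ico (l j.succ) (l j.castSucc)),
        (∏ j, q ^ m j) * (Matrix.vandermonde fun j => q ^ m j).det =
          qConst q n * ∑ c ∈ GT n m, q ^ wt n c := by
      intro m hm
      rw [ih m]
      cases n with
      | zero => exact fun i => i.elim0
      | succ n =>
        rw [Fin.strictAnti_iff_succ_lt]
        intro i
        simp only [Fintype.mem_piFinset, Finset.mem_Ico] at hm
        have h1 := (hm i.castSucc).1
        have h2 := (hm i.succ).2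
        rw [Fin.succ_castSucc] at h1
        omega
    rw [Finset.sum_congr rfl this, ← Finset.mul_sum]
    ring

/-! ### Plane partitions as Gelfand–Tsetlin patterns -/

/-- The top row `(t^r, 0^s)` of a pattern with `r + s` rows, shifted to be strictly decreasing. -/
def topRow (r s t : ℕ) (i : ℕ) : ℕ :=
  if i < r then t + (r + s - 1 - i) else r + s - 1 - i

/-- The part common to all patterns with top row `topRow r s t`: the shift `j`, and the forced
value `t` at positions `i < r`, `s ≤ j`. -/
def frozen (r s t : ℕ) (i j : ℕ) : ℕ := if i < r ∧ ¬ j < s then t + j else j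

/-- The entries of a plane partition with columns in reverse order, extended by zero. -/
def freeEntries {r s t : ℕ} (p : Fin r → Fin s → Fin (t + 1)) (i j : ℕ) : ℕ :=
  if h : i < r ∧ j < s then (p ⟨i, h.1⟩ ⟨s - 1 - j, by omega⟩ : ℕ) else 0

/-- The Gelfand–Tsetlin pattern attached to a plane partition. -/
def toGT {r s t : ℕ} (p : Fin r → Fin s → Fin (t + 1)) (i j : ℕ) : ℕ :=
  if i + j < r + s then frozen r s t i j + freeEntries p i j else 0

lemma wt_freeEntries {r s t : ℕ} (p : Fin r → Fin s → Fin (t + 1)) :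
    wt (r + s) (freeEntries p) = vol p := by
  rw [wt, Finset.sum_range_diag_flip (r + s) (freeEntries p), vol]
  have h1 : ∑ m ∈ range (r + s), ∑ k ∈ range (r + s - m), freeEntries p m k =
      ∑ m ∈ range r, ∑ k ∈ range s, freeEntries p m k := by
    symm
    rw [← Finset.sum_subset (Finset.range_subset_range.2 (Nat.le_add_right r s))]
    · refine Finset.sum_congr rfl fun m hm => ?_
      rw [Finset.mem_range] at hm
      refine Finset.sum_subset (Finset.range_subset_range.2 (by omega)) fun k _ hk => ?_
      rw [Finset.mem_range] at hk
      rw [freeEntries, dif_neg (by omega)]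
    · intro m _ hm
      rw [Finset.mem_range] at hm
      refine Finset.sum_eq_zero fun k _ => ?_
      rw [freeEntries, dif_neg (by omega)]
  rw [h1, Finset.sum_range]
  refine Finset.sum_congr rfl fun i _ => ?_
  rw [← Finset.sum_range_reflect, Finset.sum_range]
  refine Finset.sum_congr rfl fun j _ => ?_
  have := j.2
  rw [freeEntries, dif_pos ⟨i.2, by omega⟩]
  have e : (⟨s - 1 - (s - 1 - j), by omega⟩ : Fin s) = j := by ext; simp only; omega
  rw [e]

lemma wt_toGT {r s t : ℕ} (p : Fin r → Fin s → Fin (t + 1)) :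
    wt (r + s) (toGT p) = wt (r + s) (frozen r s t) + vol p := by
  rw [← wt_freeEntries, wt, wt, wt, ← Finset.sum_add_distrib]
  refine Finset.sum_congr rfl fun k hk => ?_
  rw [← Finset.sum_add_distrib]
  refine Finset.sum_congr rfl fun i hi => ?_
  rw [Finset.mem_range] at hk hi
  rw [toGT, if_pos (by omega)]

lemma toGT_mem {r s t : ℕ} {p : Fin r → Fin s → Fin (t + 1)} (hp : p ∈ PP r s t) :
    toGT p ∈ GT (r + s) (fun i => topRow r s t i) := by
  have hp' := (Finset.mem_filter.1 hp).2
  have le_t : ∀ i j, freeEntries p i j ≤ t := by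
    intro i j
    unfold freeEntries
    split_ifs with h
    · have := (p ⟨i, h.1⟩ ⟨s - 1 - j, by omega⟩).2
      omega
    · omega
  rw [mem_GT]
  refine ⟨fun i j h => ?_, fun i j h => ?_, fun i j h => ⟨?_, ?_⟩⟩
  · rw [toGT, if_neg (by omega)]
  · rw [toGT, if_pos (by omega), freeEntries, dif_neg (by omega), frozen]
    change _ = topRow r s t i
    rw [topRow]
    split_ifs <;> omega
  · rw [toGT, if_pos (by omega), toGT, if_pos (by omega), frozen, frozen]
    by_cases h1 : i < r ∧ j + 1 < s
    · rw [freeEntries, freeEntries, dif_pos (by omega), dif_pos h1, if_neg (by omega),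
        if_neg (by omega)]
      have := hp' ⟨i, h1.1⟩ ⟨i, h1.1⟩ ⟨s - 1 - (j + 1), by omega⟩ ⟨s - 1 - j, by omega⟩ le_rfl
        (by rw [Fin.mk_le_mk]; omega)
      omega
    · have e : freeEntries p i (j + 1) = 0 := by rw [freeEntries, dif_neg h1]
      have := le_t i j
      rw [e]
      by_cases h2 : i < r ∧ j < s
      · split_ifs <;> omega
      · rw [freeEntries, dif_neg h2]
        split_ifs <;> omega
  · rw [toGT, if_pos (by omega), toGT, if_pos (by omega), frozen, frozen]
    by_cases h1 : i + 1 < r ∧ j < s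
    · rw [freeEntries, freeEntries, dif_pos h1, dif_pos (by omega), if_neg (by omega),
        if_neg (by omega)]
      have := hp' ⟨i, by omega⟩ ⟨i + 1, h1.1⟩ ⟨s - 1 - j, by omega⟩ ⟨s - 1 - j, by omega⟩
        (by rw [Fin.mk_le_mk]; omega) le_rfl
      omega
    · have e : freeEntries p (i + 1) j = 0 := by rw [freeEntries, dif_neg h1]
      rw [e]
      split_ifs <;> omega

/-- Comparison with the top row along rows and columns of the array. It forces `c i j = j` for
`r ≤ i` and `c i j = t + j` for `s ≤ j`. -/
lemma GT_bounds {r s t : ℕ} {c : ℕ → ℕ → ℕ} (hc : c ∈ GT (r + s) (fun i => topRow r s t i))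
    {i j : ℕ} (h : i + j < r + s) :
    j + (if s ≤ j then t else 0) ≤ c i j ∧ c i j ≤ j + (if i < r then t else 0) := by
  obtain ⟨-, h2, h3⟩ := mem_GT.1 hc
  have hi : ∀ d i, i + d + j + 1 = r + s → topRow r s t (i + d) ≤ c i j := by
    intro d
    induction d with
    | zero => intro i hd; rw [h2 i j (by omega)]; exact le_rfl
    | succ d ih =>
      intro i hd
      have e1 := ih (i + 1) (by omega)
      have e2 := (h3 i j (by omega)).2
      rw [show i + (d + 1) = i + 1 + d by ring]
      exact e1.trans e2
  have hj : ∀ d j, i + d + j + 1 = r + s → c i j + d ≤ topRow r s t i := by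
    intro d
    induction d with
    | zero => intro j hd; rw [h2 i j (by omega)]; exact le_rfl
    | succ d ih =>
      intro j hd
      have e1 := ih (j + 1) (by omega)
      have e2 := (h3 i j (by omega)).1
      omega
  have a1 := hi (r + s - 1 - i - j) i (by omega)
  have a2 := hj (r + s - 1 - i - j) j (by omega)
  rw [topRow] at a1 a2
  constructor
  · split_ifs at a1 ⊢ <;> omega
  · split_ifs at a2 ⊢ <;> omega

lemma GT_mono {r s t : ℕ} {c : ℕ → ℕ → ℕ} (hc : c ∈ GT (r + s) (fun i => topRow r s t i))
    {i i' j j' : ℕ} (hi : i ≤ i') (hj : j' ≤ j) (h : i' + j < r + s) :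
    c i' j' + (j - j') ≤ c i j := by
  obtain ⟨-, h2, h3⟩ := mem_GT.1 hc
  obtain ⟨a, rfl⟩ := Nat.exists_eq_add_of_le hi
  obtain ⟨b, rfl⟩ := Nat.exists_eq_add_of_le hj
  have h4 : c (i + a) j' ≤ c i j' := by
    clear hi
    induction a with
    | zero => exact le_rfl
    | succ a ih => exact ((h3 (i + a) j' (by omega)).2).trans (ih (by omega))
  have h5 : c i j' + b ≤ c i (j' + b) := by
    clear hj
    induction b with
    | zero => exact le_rfl
    | succ b ih =>
      have := (h3 i (j' + b) (by omega)).1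
      have := ih (by omega)
      rw [← add_assoc, ← add_assoc]
      omega
  omega

/-- Plane partitions in the box correspond to patterns with top row `topRow r s t`, and the weights
differ by a constant. -/
lemma sum_GT_topRow {R : Type*} [CommRing R] (q : R) (r s t : ℕ) :
    ∑ c ∈ GT (r + s) (fun i => topRow r s t i), q ^ wt (r + s) c =
      q ^ wt (r + s) (frozen r s t) * ∑ p ∈ PP r s t, q ^ vol p := by
  rw [Finset.mul_sum]
  symm
  refine Finset.sum_bij' (fun p _ => toGT p)
    (fun c _ => fun i j => Fin.ofNat (t + 1) (c i (s - 1 - j) - (s - 1 - j)))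
    (fun p hp => toGT_mem hp) (fun c hc => ?_) (fun p hp => ?_) (fun c hc => ?_)
    (fun p _ => by rw [wt_toGT, pow_add])
  · rw [PP, Finset.mem_filter]
    refine ⟨Finset.mem_univ _, fun i i' j j' hi hj => ?_⟩
    have b1 := GT_bounds hc (i := i) (j := s - 1 - j) (by omega)
    have b2 := GT_bounds hc (i := i') (j := s - 1 - j') (by omega)
    have m := GT_mono hc (i := i) (i' := i') (j := s - 1 - j) (j' := s - 1 - j') hi
      (by have : (j : ℕ) ≤ j' := hj; omega) (by omega)
    rw [if_neg (by omega), if_pos i.2] at b1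
    rw [if_neg (by omega), if_pos i'.2] at b2
    simp only [Fin.val_ofNat]
    rw [Nat.mod_eq_of_lt (by omega), Nat.mod_eq_of_lt (by omega)]
    omega
  · funext i j
    have hj := j.2
    ext
    simp only [Fin.val_ofNat]
    rw [toGT, if_pos (by omega), frozen, if_neg (by omega), freeEntries, dif_pos (by omega)]
    have e : (⟨s - 1 - (s - 1 - j), by omega⟩ : Fin s) = j := by ext; simp only; omega
    have := (p i j).2
    simp only [e, Fin.eta, Nat.add_sub_cancel_left]
    exact Nat.mod_eq_of_lt this
  · funext i j
    rw [toGT]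
    split_ifs with h
    · have b := GT_bounds hc h
      by_cases h' : i < r ∧ j < s
      · rw [frozen, if_neg (by omega), freeEntries, dif_pos h']
        rw [if_neg (by omega), if_pos h'.1] at b
        simp only [Fin.val_ofNat]
        have e : s - 1 - (s - 1 - j) = j := by omega
        rw [e, Nat.mod_eq_of_lt (by omega)]
        omega
      · rw [freeEntries, dif_neg h', frozen]
        split_ifs at b ⊢ <;> omega
    · exact ((mem_GT.1 hc).1 i j (by omega)).symm

/-! ### MacMahon's box formula -/

lemma prod_Ioi_eq {R : Type*} [CommRing R] (n : ℕ) (f : ℕ → ℕ → R) :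
    ∏ i : Fin n, ∏ j ∈ Ioi i, f i j = ∏ j ∈ range n, ∏ i ∈ range j, f i j := by
  rw [Finset.prod_comm' (t' := Finset.univ) (s' := fun j => Iio j) (by simp), Finset.prod_range]
  refine Finset.prod_congr rfl fun j _ => ?_
  rw [← Nat.Iio_eq_range, ← Fin.map_valEmbedding_Iio, Finset.prod_map]
  rfl

/-- The Vandermonde product over pairs in `{0, …, r + s - 1}`, split according to whether the two
indices are below `r`. -/
lemma det_vandermonde_split {R : Type*} [CommRing R] (r s : ℕ) (y : ℕ → R) :
    (Matrix.vandermonde fun i : Fin (r + s) => y i).det =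
      (∏ j ∈ range r, ∏ i ∈ range j, (y j - y i)) *
      ((∏ j ∈ range s, ∏ i ∈ range r, (y (r + j) - y i)) *
        ∏ j ∈ range s, ∏ i ∈ range j, (y (r + j) - y (r + i))) := by
  rw [Matrix.det_vandermonde, prod_Ioi_eq (r + s) (fun i j => y j - y i), Finset.prod_range_add,
    ← Finset.prod_mul_distrib]
  congr 1
  refine Finset.prod_congr rfl fun j _ => ?_
  rw [Finset.prod_range_add]

lemma topRow_det {R : Type*} [CommRing R] (q : R) (r s t : ℕ) :
    (Matrix.vandermonde fun i : Fin (r + s) => q ^ topRow r s t i).det =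
      q ^ ((∑ j ∈ range r, ∑ _i ∈ range j, t) + ∑ j ∈ range s, ∑ _i ∈ range r, (s - 1 - j)) *
      ((∏ j ∈ range r, ∏ i ∈ range j, (q ^ (r + s - 1 - j) - q ^ (r + s - 1 - i))) *
      (∏ j ∈ range s, ∏ i ∈ range j, (q ^ (s - 1 - j) - q ^ (s - 1 - i)))) *
      ∏ j ∈ range s, ∏ i ∈ range r, (1 - q ^ (i + j + 1 + t)) := by
  rw [det_vandermonde_split r s (fun i => q ^ topRow r s t i)]
  have h1 : ∏ j ∈ range r, ∏ i ∈ range j, (q ^ topRow r s t j - q ^ topRow r s t i) =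
      q ^ (∑ j ∈ range r, ∑ _i ∈ range j, t) *
        ∏ j ∈ range r, ∏ i ∈ range j, (q ^ (r + s - 1 - j) - q ^ (r + s - 1 - i)) := by
    simp only [← Finset.prod_pow_eq_pow_sum, ← Finset.prod_mul_distrib]
    refine Finset.prod_congr rfl fun j hj => Finset.prod_congr rfl fun i hi => ?_
    rw [Finset.mem_range] at hi hj
    rw [topRow, topRow, if_pos hj, if_pos (by omega), pow_add, pow_add]
    ring
  have h2 : ∏ j ∈ range s, ∏ i ∈ range j, (q ^ topRow r s t (r + j) - q ^ topRow r s t (r + i)) =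
      ∏ j ∈ range s, ∏ i ∈ range j, (q ^ (s - 1 - j) - q ^ (s - 1 - i)) := by
    refine Finset.prod_congr rfl fun j hj => Finset.prod_congr rfl fun i hi => ?_
    rw [Finset.mem_range] at hi hj
    rw [topRow, topRow, if_neg (by omega), if_neg (by omega)]
    congr 2 <;> omega
  have h3 : ∏ j ∈ range s, ∏ i ∈ range r, (q ^ topRow r s t (r + j) - q ^ topRow r s t i) =
      q ^ (∑ j ∈ range s, ∑ _i ∈ range r, (s - 1 - j)) *
        ∏ j ∈ range s, ∏ i ∈ range r, (1 - q ^ (i + j + 1 + t)) := by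
    simp only [← Finset.prod_pow_eq_pow_sum, ← Finset.prod_mul_distrib]
    refine Finset.prod_congr rfl fun j hj => ?_
    rw [Finset.prod_mul_distrib, ← Finset.prod_range_reflect (fun i => 1 - q ^ (i + j + 1 + t)),
      ← Finset.prod_mul_distrib]
    refine Finset.prod_congr rfl fun i hi => ?_
    rw [Finset.mem_range] at hi hj
    rw [topRow, topRow, if_neg (by omega), if_pos hi, mul_sub, ← pow_add, mul_one]
    congr 2 <;> omega
  rw [h1, h2, h3, pow_add]
  ring

lemma sum_PP_zero {R : Type*} [CommRing R] (q : R) (r s : ℕ) :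
    ∑ p ∈ PP r s 0, q ^ vol p = 1 := by
  have : PP r s 0 = {fun _ _ => 0} := by
    ext p
    simp only [PP, Finset.mem_filter, Finset.mem_univ, true_and, Finset.mem_singleton]
    constructor
    · intro _; funext i j; ext; have := (p i j).2; simp only [Fin.coe_ofNat_eq_mod]; omega
    · rintro rfl; simp
  rw [this]
  simp [vol]

/-- MacMahon's box formula up to a power of `q`. -/
lemma macMahon_monomial (r s t : ℕ) : ∃ A B : ℕ, ∀ q : ℂ, q ≠ 0 →
    (∀ k, 0 < k → k < r + s → q ^ k ≠ 1) →
    q ^ A * (∑ p ∈ PP r s t, q ^ vol p) *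
        ∏ j ∈ range s, ∏ i ∈ range r, (1 - q ^ (i + j + 1)) =
      q ^ B * ∏ j ∈ range s, ∏ i ∈ range r, (1 - q ^ (i + j + 1 + t)) := by
  have anti : ∀ t, StrictAnti (fun i : Fin (r + s) => topRow r s t i) := by
    intro t i j hij
    have : (i : ℕ) < j := hij
    simp only [topRow]
    split_ifs <;> omega
  set a : ℕ → ℕ := fun t =>
    (∑ j ∈ range r, ∑ _i ∈ range j, t) + ∑ j ∈ range s, ∑ _i ∈ range r, (s - 1 - j) with ha
  set b : ℕ → ℕ := fun t => ∑ i : Fin (r + s), topRow r s t i with hb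
  set K : ℕ → ℕ := fun t => wt (r + s) (frozen r s t) with hK
  refine ⟨K t + b 0 + a 0, K 0 + b t + a t, fun q hq hq1 => ?_⟩
  have hW : ∀ u v : ℕ, u < v → v < r + s → q ^ u - q ^ v ≠ 0 := by
    intro u v huv hv h
    apply hq1 (v - u) (by omega) (by omega)
    have e : q ^ v = q ^ u * q ^ (v - u) := by rw [← pow_add]; congr 1; omega
    rw [e] at h
    have : q ^ u * (1 - q ^ (v - u)) = 0 := by linear_combination h
    rcases mul_eq_zero.1 this with h | h
    · exact absurd h (pow_ne_zero _ hq)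
    · exact (sub_eq_zero.1 h).symm
  have main : ∀ t, qConst q (r + s) * (q ^ K t * ∑ p ∈ PP r s t, q ^ vol p) =
      q ^ b t * (q ^ a t *
      ((∏ j ∈ range r, ∏ i ∈ range j, (q ^ (r + s - 1 - j) - q ^ (r + s - 1 - i))) *
      (∏ j ∈ range s, ∏ i ∈ range j, (q ^ (s - 1 - j) - q ^ (s - 1 - i)))) *
      ∏ j ∈ range s, ∏ i ∈ range r, (1 - q ^ (i + j + 1 + t))) := by
    intro t
    have := GT_formula q _ (anti t)
    rw [sum_GT_topRow, topRow_det, Finset.prod_pow_eq_pow_sum] at this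
    exact this
  have m0 := main 0
  have mt := main t
  rw [sum_PP_zero] at m0
  set W := (∏ j ∈ range r, ∏ i ∈ range j, (q ^ (r + s - 1 - j) - q ^ (r + s - 1 - i))) *
      (∏ j ∈ range s, ∏ i ∈ range j, (q ^ (s - 1 - j) - q ^ (s - 1 - i))) with hWdef
  have W0 : W ≠ 0 := by
    refine mul_ne_zero ?_ ?_
    · refine Finset.prod_ne_zero_iff.2 fun j hj => Finset.prod_ne_zero_iff.2 fun i hi => ?_
      rw [Finset.mem_range] at hi hj
      exact hW _ _ (by omega) (by omega)
    · refine Finset.prod_ne_zero_iff.2 fun j hj => Finset.prod_ne_zero_iff.2 fun i hi => ?_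
      rw [Finset.mem_range] at hi hj
      exact hW _ _ (by omega) (by omega)
  simp only [add_zero] at m0
  apply mul_left_cancel₀ W0
  rw [pow_add q (K t + b 0), pow_add q (K t), pow_add q (K 0 + b t), pow_add q (K 0)]
  clear_value a b K W
  linear_combination q ^ K 0 * mt - (∑ p ∈ PP r s t, q ^ vol p) * q ^ K t * m0

/-! ### The logarithm of `sin x / x` -/

lemma cot_estimate {z : ℝ} (h0 : 0 < z) (h1 : z ≤ 1) :
    |Real.cos z / Real.sin z - 1 / z + z / 3| ≤ z ^ 2 := by
  have hs := Real.sin_bound (x := z) (by rw [abs_of_pos h0]; exact h1)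
  have hc := Real.cos_bound (x := z) (by rw [abs_of_pos h0]; exact h1)
  rw [abs_of_pos h0] at hs hc
  have z2 : z ^ 2 ≤ 1 := pow_le_one₀ h0.le h1
  have z5 : z ^ 5 ≤ z ^ 4 := pow_le_pow_of_le_one h0.le h1 (by norm_num)
  have z7 : z ^ 7 ≤ z ^ 4 := pow_le_pow_of_le_one h0.le h1 (by norm_num)
  have z53 : z ^ 5 ≤ z ^ 3 := pow_le_pow_of_le_one h0.le h1 (by norm_num)
  have z31 : z ^ 3 ≤ z := by nlinarith
  have sinlb : z * (3 / 4) ≤ Real.sin z := by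
    rw [abs_le] at hs
    linarith [hs.1]
  have sinpos : 0 < Real.sin z := by linarith
  set e1 := Real.sin z - (z - z ^ 3 / 6) with he1
  set e2 := Real.cos z - (1 - z ^ 2 / 2) with he2
  have key : z * Real.cos z - Real.sin z + z ^ 2 * Real.sin z / 3 =
      z * e2 - e1 - z ^ 5 / 18 + z ^ 2 * e1 / 3 := by
    rw [he1, he2]; ring
  have b1 : |z * e2| ≤ z ^ 5 * (5 / 96) := by
    rw [abs_mul, abs_of_pos h0]
    calc z * |e2| ≤ z * (z ^ 4 * (5 / 96)) := by gcongr
      _ = _ := by ring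
  have b2 : |z ^ 2 * e1 / 3| ≤ z ^ 7 / 300 := by
    rw [abs_div, abs_mul, abs_of_pos (pow_pos h0 2), abs_of_pos (by norm_num : (0:ℝ) < 3)]
    calc z ^ 2 * |e1| / 3 ≤ z ^ 2 * (z ^ 5 / 100) / 3 := by gcongr
      _ = _ := by ring
  have tot : |z * Real.cos z - Real.sin z + z ^ 2 * Real.sin z / 3| ≤ z ^ 4 * (3 / 4) := by
    rw [key]
    rw [abs_le] at b1 b2 hs ⊢
    have : 0 < z ^ 5 := by positivity
    constructor <;> linarith [b1.1, b1.2, b2.1, b2.2, hs.1, hs.2]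
  have e : Real.cos z / Real.sin z - 1 / z + z / 3 =
      (z * Real.cos z - Real.sin z + z ^ 2 * Real.sin z / 3) / (z * Real.sin z) := by
    field_simp
  rw [e, abs_div, abs_of_pos (mul_pos h0 sinpos), div_le_iff₀ (mul_pos h0 sinpos)]
  calc _ ≤ z ^ 4 * (3 / 4) := tot
    _ = z ^ 2 * (z * (z * (3 / 4))) := by ring
    _ ≤ _ := by gcongr

lemma log_sinc_estimate {x y : ℝ} (hx : 0 < x) (hxy : x ≤ y) (hy : y ≤ 1) :
    |(Real.log (Real.sin y) - Real.log y) - (Real.log (Real.sin x) - Real.log x)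
      + (y ^ 2 - x ^ 2) / 6| ≤ (y ^ 3 - x ^ 3) / 3 := by
  have sinpos : ∀ z ∈ Set.Icc x y, 0 < Real.sin z := fun z hz =>
    Real.sin_pos_of_pos_of_lt_pi (hx.trans_le hz.1) (by linarith [hz.2, Real.pi_gt_three])
  have hd : ∀ c : ℝ, ∀ z ∈ Set.Icc x y, HasDerivAt
      (fun z => c * ((Real.log (Real.sin z) - Real.log z) + z ^ 2 / 6) + z ^ 3 / 3)
      (c * (Real.cos z / Real.sin z - 1 / z + z / 3) + z ^ 2) z := by
    intro c z hz
    have h1 := (Real.hasDerivAt_sin z).log (sinpos z hz).ne'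
    have h2 := Real.hasDerivAt_log (hx.trans_le hz.1).ne'
    have h3 := ((h1.sub h2).add ((hasDerivAt_pow 2 z).div_const 6)).const_mul c
    refine (h3.add ((hasDerivAt_pow 3 z).div_const 3)).congr_deriv ?_
    simp only [Nat.cast_ofNat]
    ring
  have hm : ∀ c : ℝ, |c| = 1 → MonotoneOn
      (fun z => c * ((Real.log (Real.sin z) - Real.log z) + z ^ 2 / 6) + z ^ 3 / 3)
      (Set.Icc x y) := by
    intro c hc
    refine monotoneOn_of_deriv_nonneg (convex_Icc x y)
      (fun z hz => (hd c z hz).continuousAt.continuousWithinAt)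
      (fun z hz => (hd c z (interior_subset hz)).differentiableAt.differentiableWithinAt)
      (fun z hz => ?_)
    have hz' := interior_subset hz
    rw [(hd c z hz').deriv]
    have := cot_estimate (hx.trans_le hz'.1) (hz'.2.trans hy)
    have h2 : |c * (Real.cos z / Real.sin z - 1 / z + z / 3)| ≤ z ^ 2 := by
      rw [abs_mul, hc, one_mul]; exact this
    linarith [(abs_le.1 h2).1]
  have m1 := hm 1 (by simp) (Set.left_mem_Icc.2 hxy) (Set.right_mem_Icc.2 hxy) hxy
  have m2 := hm (-1) (by simp) (Set.left_mem_Icc.2 hxy) (Set.right_mem_Icc.2 hxy) hxy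
  simp only at m1 m2
  rw [abs_le]
  constructor <;> linarith

/-! ### The characteristic function of the volume -/

lemma one_sub_cexp (θ : ℝ) : 1 - Complex.exp (Complex.I * θ) =
    Complex.exp (Complex.I * ((θ / 2 : ℝ) : ℂ)) * (-2 * Complex.I) * ((Real.sin (θ / 2) : ℝ) : ℂ) := by
  have h : Complex.exp (Complex.I * θ) = Complex.exp (Complex.I * ((θ / 2 : ℝ) : ℂ)) ^ 2 := by
    rw [← Complex.exp_nat_mul]; congr 1; push_cast; ring
  have h2 : Complex.exp (Complex.I * ((θ / 2 : ℝ) : ℂ)) =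
      (Real.cos (θ / 2) : ℝ) + (Real.sin (θ / 2) : ℝ) * Complex.I := by
    rw [mul_comm, Complex.exp_mul_I, Complex.ofReal_cos, Complex.ofReal_sin]
  have h3 : ((Real.sin (θ / 2) : ℝ) : ℂ) ^ 2 + ((Real.cos (θ / 2) : ℝ) : ℂ) ^ 2 = 1 := by
    exact_mod_cast Real.sin_sq_add_cos_sq (θ / 2)
  rw [h, h2]
  linear_combination (-1 : ℂ) * h3 + (((Real.sin (θ / 2) : ℝ) : ℂ) ^ 2) * Complex.I_sq

lemma prod_one_sub_cexp {ι : Type*} (H : Finset ι) (k : ι → ℕ) (u : ℝ) :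
    ∏ x ∈ H, (1 - Complex.exp (Complex.I * u) ^ k x) =
      Complex.exp (Complex.I * u * ((∑ x ∈ H, (k x : ℝ) / 2 : ℝ) : ℂ)) * (-2 * Complex.I) ^ H.card *
        ((∏ x ∈ H, Real.sin (k x * u / 2) : ℝ) : ℂ) := by
  have h1 : ∀ x ∈ H, (1 - Complex.exp (Complex.I * u) ^ k x) =
      Complex.exp (Complex.I * u * ((k x / 2 : ℝ) : ℂ)) * (-2 * Complex.I) *
        ((Real.sin (k x * u / 2) : ℝ) : ℂ) := by
    intro x _
    have := one_sub_cexp (k x * u)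
    rw [← Complex.exp_nat_mul]
    rw [show (k x : ℂ) * (Complex.I * u) = Complex.I * ((k x * u : ℝ) : ℂ) by push_cast; ring, this]
    congr 3
    push_cast; ring
  rw [Finset.prod_congr rfl h1, Finset.prod_mul_distrib, Finset.prod_mul_distrib,
    Finset.prod_const, ← Complex.exp_sum, Complex.ofReal_prod, Complex.ofReal_sum, Finset.mul_sum]

/-- The cells of an `r × s` rectangle, as pairs (column, row). -/
def cells (r s : ℕ) : Finset (ℕ × ℕ) := range s ×ˢ range r

/-- MacMahon's formula at `q = exp (i u)`; the number `κ` absorbs all monomial factors. -/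
lemma sum_cexp_eq (r s t : ℕ) : ∃ κ : ℝ, ∀ u : ℝ, 0 < u → u * (r + s + t) ≤ 1 →
    ∑ p ∈ PP r s t, Complex.exp (Complex.I * u * ((vol p - κ : ℝ) : ℂ)) =
      ((∏ x ∈ cells r s, (Real.sin (((x.2 + x.1 + 1 + t : ℕ) : ℝ) * u / 2) /
        Real.sin (((x.2 + x.1 + 1 : ℕ) : ℝ) * u / 2)) : ℝ) : ℂ) := by
  obtain ⟨A, B, h⟩ := macMahon_monomial r s t
  refine ⟨B + (∑ x ∈ cells r s, ((x.2 + x.1 + 1 + t : ℕ) : ℝ) / 2)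
    - A - ∑ x ∈ cells r s, ((x.2 + x.1 + 1 : ℕ) : ℝ) / 2, fun u hu hu1 => ?_⟩
  have sin_pos : ∀ k : ℕ, 0 < k → k < r + s → 0 < Real.sin (k * u / 2) := by
    intro k hk hk'
    have h1 : (k : ℝ) ≤ r + s + t := by exact_mod_cast (by omega : k ≤ r + s + t)
    have h2 : (k : ℝ) * u ≤ 1 := by nlinarith
    have h3 : (0 : ℝ) < k := by exact_mod_cast hk
    exact Real.sin_pos_of_pos_of_lt_pi (by positivity) (by linarith [Real.pi_gt_three])
  have hne : ∀ k : ℕ, 0 < k → k < r + s → Complex.exp (Complex.I * u) ^ k ≠ 1 := by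
    intro k hk hk' h1
    have h2 := one_sub_cexp (k * u)
    have h3 : Complex.exp (Complex.I * ((k * u : ℝ) : ℂ)) = Complex.exp (Complex.I * u) ^ k := by
      rw [← Complex.exp_nat_mul]; congr 1; push_cast; ring
    rw [h3, h1, sub_self] at h2
    have h4 := (sin_pos k hk hk').ne'
    have h5 : ((Real.sin (k * u / 2) : ℝ) : ℂ) ≠ 0 := Complex.ofReal_ne_zero.2 h4
    exact mul_ne_zero (mul_ne_zero (Complex.exp_ne_zero _) (by simp)) h5 h2.symm
  have hm := h (Complex.exp (Complex.I * u)) (Complex.exp_ne_zero _) hne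
  rw [← Finset.prod_product' (range s) (range r)
      (fun j i => (1 - Complex.exp (Complex.I * u) ^ (i + j + 1))),
    ← Finset.prod_product' (range s) (range r)
      (fun j i => (1 - Complex.exp (Complex.I * u) ^ (i + j + 1 + t))),
    prod_one_sub_cexp (range s ×ˢ range r) (fun x => x.2 + x.1 + 1),
    prod_one_sub_cexp (range s ×ˢ range r) (fun x => x.2 + x.1 + 1 + t)] at hm
  change _ * (_ * _ ^ (cells r s).card * _) = _ * (_ * _ ^ (cells r s).card * _) at hm
  have hden : ((∏ x ∈ cells r s, Real.sin (((x.2 + x.1 + 1 : ℕ) : ℝ) * u / 2) : ℝ) : ℂ) ≠ 0 := by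
    refine Complex.ofReal_ne_zero.2 (Finset.prod_ne_zero_iff.2 fun x hx => ?_)
    rw [cells, Finset.mem_product, Finset.mem_range, Finset.mem_range] at hx
    exact (sin_pos _ (by omega) (by omega)).ne'
  rw [Finset.prod_div_distrib, Complex.ofReal_div, eq_div_iff hden]
  have hI : (-2 * Complex.I) ^ (cells r s).card ≠ 0 := pow_ne_zero _ (by simp)
  have hsum : ∀ κ : ℝ, ∑ p ∈ PP r s t, Complex.exp (Complex.I * u * ((vol p - κ : ℝ) : ℂ)) =
      Complex.exp (-(Complex.I * u * κ)) * ∑ p ∈ PP r s t, Complex.exp (Complex.I * u) ^ vol p := by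
    intro κ
    rw [Finset.mul_sum]
    refine Finset.sum_congr rfl fun p _ => ?_
    rw [← Complex.exp_nat_mul, ← Complex.exp_add]
    congr 1; push_cast; ring
  rw [hsum]
  set S1 : ℝ := ∑ x ∈ cells r s, ((x.2 + x.1 + 1 + t : ℕ) : ℝ) / 2 with hS1
  set S0 : ℝ := ∑ x ∈ cells r s, ((x.2 + x.1 + 1 : ℕ) : ℝ) / 2 with hS0
  set P := ∑ p ∈ PP r s t, Complex.exp (Complex.I * u) ^ vol p with hP
  set D := ((∏ x ∈ cells r s, Real.sin (((x.2 + x.1 + 1 : ℕ) : ℝ) * u / 2) : ℝ) : ℂ) with hD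
  set N := ((∏ x ∈ cells r s, Real.sin (((x.2 + x.1 + 1 + t : ℕ) : ℝ) * u / 2) : ℝ) : ℂ) with hN
  have hm' : Complex.exp (Complex.I * u) ^ A * P * (Complex.exp (Complex.I * u * S0) *
      (-2 * Complex.I) ^ (cells r s).card * D) = Complex.exp (Complex.I * u) ^ B *
      (Complex.exp (Complex.I * u * S1) * (-2 * Complex.I) ^ (cells r s).card * N) := hm
  rw [← Complex.exp_nat_mul, ← Complex.exp_nat_mul] at hm'
  have hE : Complex.exp (-(Complex.I * u * ((B + S1 - A - S0 : ℝ) : ℂ))) =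
      Complex.exp (A * (Complex.I * u)) * Complex.exp (Complex.I * u * S0) *
        (Complex.exp (B * (Complex.I * u)) * Complex.exp (Complex.I * u * S1))⁻¹ := by
    rw [← Complex.exp_add, ← Complex.exp_add, ← Complex.exp_neg, ← Complex.exp_add]
    congr 1; push_cast; ring
  rw [hE]
  have n1 := Complex.exp_ne_zero (B * (Complex.I * u))
  have n2 := Complex.exp_ne_zero (Complex.I * u * S1)
  apply mul_left_cancel₀ (mul_ne_zero hI (mul_ne_zero n1 n2))
  rw [show ∀ a b c d e : ℂ, (a * b) * (c * b⁻¹ * d * e) = (b * b⁻¹) * (a * c * d * e) from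
    fun a b c d e => by ring, mul_inv_cancel₀ (mul_ne_zero n1 n2)]
  linear_combination hm'

lemma sum_cells_sq (r s t : ℕ) :
    ∑ x ∈ cells r s, (((x.2 + x.1 + 1 + t : ℕ) : ℝ) ^ 2 - ((x.2 + x.1 + 1 : ℕ) : ℝ) ^ 2) =
      r * s * t * (r + s + t) := by
  have gauss : ∀ n : ℕ, ∑ i ∈ range n, (i : ℝ) = n * (n - 1) / 2 := by
    intro n
    induction n with
    | zero => simp
    | succ n ih => rw [Finset.sum_range_succ, ih]; push_cast; ring
  have h : ∀ j : ℕ, ∑ i ∈ range r, (((i + j + 1 + t : ℕ) : ℝ) ^ 2 - ((i + j + 1 : ℕ) : ℝ) ^ 2) =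
      (r * t * (t + r + 1)) + 2 * r * t * j := by
    intro j
    have e : ∀ i : ℕ, (((i + j + 1 + t : ℕ) : ℝ) ^ 2 - ((i + j + 1 : ℕ) : ℝ) ^ 2) =
        2 * t * i + (2 * t * j + 2 * t + t ^ 2) := by
      intro i; push_cast; ring
    simp only [e, Finset.sum_add_distrib, ← Finset.mul_sum, gauss, Finset.sum_const,
      Finset.card_range, nsmul_eq_mul]
    ring
  rw [cells, Finset.sum_product' (range s) (range r)
    (fun j i => (((i + j + 1 + t : ℕ) : ℝ) ^ 2 - ((i + j + 1 : ℕ) : ℝ) ^ 2))]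
  simp only [h, Finset.sum_add_distrib, ← Finset.mul_sum, gauss, Finset.sum_const,
    Finset.card_range, nsmul_eq_mul]
  ring

/-- The value `rst(r+s+t)/12` of the variance of the volume; see `PP_charFun`. -/
noncomputable def varPP (r s t : ℕ) : ℝ := r * s * t * (r + s + t) / 12

/-- The Gaussian approximation of the characteristic function, unnormalised and centred at a yet
unidentified `κ`. -/
lemma sum_cexp_eq_exp (r s t : ℕ) : ∃ κ R : ℝ, 0 < R ∧
    ∀ u : ℝ, 0 < u → u * (r + s + t) ≤ 1 → ∃ E : ℝ, |E| ≤ (r + s + t) * varPP r s t * u ^ 3 ∧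
      ∑ p ∈ PP r s t, Complex.exp (Complex.I * u * ((vol p - κ : ℝ) : ℂ)) =
        ((R * Real.exp (-(u ^ 2 * varPP r s t / 2) + E) : ℝ) : ℂ) := by
  obtain ⟨κ, hκ⟩ := sum_cexp_eq r s t
  refine ⟨κ, ∏ x ∈ cells r s, (((x.2 + x.1 + 1 + t : ℕ) : ℝ) / ((x.2 + x.1 + 1 : ℕ) : ℝ)),
    Finset.prod_pos fun x _ => by positivity, fun u hu hu1 => ?_⟩
  set a : ℕ × ℕ → ℝ := fun x => ((x.2 + x.1 + 1 : ℕ) : ℝ) with ha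
  set b : ℕ × ℕ → ℝ := fun x => ((x.2 + x.1 + 1 + t : ℕ) : ℝ) with hb
  have apos : ∀ x, 0 < a x := fun x => by simp only [ha]; positivity
  have ab : ∀ x, a x ≤ b x := fun x => by simp only [ha, hb]; exact_mod_cast Nat.le_add_right _ _
  have bM : ∀ x ∈ cells r s, b x ≤ r + s + t := by
    intro x hx
    rw [cells, Finset.mem_product, Finset.mem_range, Finset.mem_range] at hx
    simp only [hb]
    exact_mod_cast (by omega : x.2 + x.1 + 1 + t ≤ r + s + t)
  set g : ℝ → ℝ := fun z => Real.log (Real.sin z) - Real.log z with hg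
  have bu : ∀ x ∈ cells r s, b x * u / 2 ≤ 1 := fun x hx => by nlinarith [bM x hx]
  have key : ∀ x ∈ cells r s, Real.sin (b x * u / 2) / Real.sin (a x * u / 2) =
      (b x / a x) * Real.exp (g (b x * u / 2) - g (a x * u / 2)) := by
    intro x hx
    have pa := apos x
    have pb := pa.trans_le (ab x)
    have xa : 0 < a x * u / 2 := by positivity
    have xb : 0 < b x * u / 2 := by positivity
    have xab : a x * u / 2 ≤ b x * u / 2 := by have := ab x; gcongr
    have sa := Real.sin_pos_of_pos_of_lt_pi xa (by linarith [bu x hx, Real.pi_gt_three])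
    have sb := Real.sin_pos_of_pos_of_lt_pi xb (by linarith [bu x hx, Real.pi_gt_three])
    simp only [hg, Real.exp_sub, Real.exp_log sa, Real.exp_log sb, Real.exp_log xa,
      Real.exp_log xb]
    field_simp
  refine ⟨∑ x ∈ cells r s, (g (b x * u / 2) - g (a x * u / 2)
    + ((b x * u / 2) ^ 2 - (a x * u / 2) ^ 2) / 6), ?_, ?_⟩
  · have sq := sum_cells_sq r s t
    calc _ ≤ ∑ x ∈ cells r s, |g (b x * u / 2) - g (a x * u / 2)
            + ((b x * u / 2) ^ 2 - (a x * u / 2) ^ 2) / 6| := Finset.abs_sum_le_sum_abs _ _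
      _ ≤ ∑ x ∈ cells r s, ((r + s + t) * u ^ 3 / 12) * (b x ^ 2 - a x ^ 2) := by
        refine Finset.sum_le_sum fun x hx => ?_
        have pa := apos x
        have pab := ab x
        have xab : a x * u / 2 ≤ b x * u / 2 := by gcongr
        refine (log_sinc_estimate (by positivity) xab (bu x hx)).trans ?_
        -- `b³ - a³ ≤ 2b (b² - a²)`
        have e : (b x * u / 2) ^ 3 - (a x * u / 2) ^ 3 = u ^ 3 / 8 * (b x ^ 3 - a x ^ 3) := by ring
        have h1 : b x ^ 3 - a x ^ 3 ≤ 2 * (r + s + t) * (b x ^ 2 - a x ^ 2) := by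
          have h2 : b x ^ 3 - a x ^ 3 ≤ 2 * b x * (b x ^ 2 - a x ^ 2) := by
            have : 0 ≤ (b x - a x) * (b x ^ 2 + a x * b x - a x ^ 2) :=
              mul_nonneg (by linarith) (by nlinarith)
            nlinarith
          have h3 : 0 ≤ b x ^ 2 - a x ^ 2 := by nlinarith
          have := bM x hx
          calc _ ≤ _ := h2
            _ ≤ _ := by gcongr
        rw [e]
        have hu3 : 0 < u ^ 3 := by positivity
        nlinarith [mul_le_mul_of_nonneg_left h1 hu3.le]
      _ = _ := by
        rw [← Finset.mul_sum, sq, varPP]; ring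
  · rw [hκ u hu hu1]
    congr 1
    rw [Finset.prod_congr rfl key, Finset.prod_mul_distrib, ← Real.exp_sum]
    congr 2
    rw [Finset.sum_add_distrib]
    have : ∑ x ∈ cells r s, ((b x * u / 2) ^ 2 - (a x * u / 2) ^ 2) / 6 =
        u ^ 2 * varPP r s t / 2 := by
      rw [varPP, ← sum_cells_sq, Finset.sum_div, Finset.mul_sum, Finset.sum_div]
      refine Finset.sum_congr rfl fun x _ => ?_
      simp only [ha, hb]
      ring
    rw [this]
    ring

open Topology in
/-- If the exponential sums of a finite family `f` are of the form `R exp (-u² V / 2 + O(u³))` as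
`u → 0+`, then comparing real and imaginary parts to second order gives its size, sum and sum of
squares. -/
lemma moments_of_cexp {ι : Type*} (P : Finset ι) (f : ι → ℝ) (R V K u₀ : ℝ) (hu₀ : 0 < u₀)
    (h : ∀ u : ℝ, 0 < u → u ≤ u₀ → ∃ E : ℝ, |E| ≤ K * u ^ 3 ∧
      ∑ p ∈ P, Complex.exp (Complex.I * u * (f p : ℂ)) =
        ((R * Real.exp (-(u ^ 2 * V / 2) + E) : ℝ) : ℂ)) :
    R = P.card ∧ ∑ p ∈ P, f p = 0 ∧ ∑ p ∈ P, f p ^ 2 = R * V := by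
  have h' : ∀ u : ℝ, 0 < u → u ≤ u₀ → ∃ E : ℝ, |E| ≤ K * u ^ 3 ∧
      ∑ p ∈ P, Real.cos (u * f p) = R * Real.exp (-(u ^ 2 * V / 2) + E) ∧
      ∑ p ∈ P, Real.sin (u * f p) = 0 := by
    intro u hu hu1
    obtain ⟨E, hE, hs⟩ := h u hu hu1
    have e : ∀ p ∈ P, Complex.exp (Complex.I * u * (f p : ℂ)) =
        (Real.cos (u * f p) : ℝ) + (Real.sin (u * f p) : ℝ) * Complex.I := by
      intro p _
      rw [Complex.ofReal_cos, Complex.ofReal_sin, ← Complex.exp_mul_I]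
      congr 1; push_cast; ring
    rw [Finset.sum_congr rfl e] at hs
    refine ⟨E, hE, ?_, ?_⟩
    · have := congrArg Complex.re hs
      simpa only [Complex.re_sum, Complex.add_re, Complex.ofReal_re, Complex.mul_re, Complex.I_re,
        Complex.I_im, Complex.ofReal_im, mul_zero, zero_mul, sub_zero, add_zero] using this
    · have := congrArg Complex.im hs
      simpa only [Complex.im_sum, Complex.add_im, Complex.ofReal_re, Complex.mul_im, Complex.I_re,
        Complex.I_im, Complex.ofReal_im, mul_zero, mul_one, zero_add, add_zero] using this
  choose! E hE hcos hsin using h'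
  have ev : ∀ᶠ u : ℝ in 𝓝[>] 0, 0 < u ∧ u ≤ u₀ := by
    filter_upwards [Ioc_mem_nhdsGT hu₀] with u hu using hu
  have id0 : Tendsto (fun u : ℝ => u) (𝓝[>] 0) (𝓝 0) := tendsto_nhdsWithin_of_tendsto_nhds tendsto_id
  have poly0 : ∀ (c : ℝ) (n : ℕ), 0 < n → Tendsto (fun u : ℝ => c * u ^ n) (𝓝[>] 0) (𝓝 0) := by
    intro c n hn
    have := (id0.pow n).const_mul c
    simpa [hn.ne'] using this
  have E2 : Tendsto (fun u => E u / u ^ 2) (𝓝[>] 0) (𝓝 0) := by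
    refine squeeze_zero_norm' ?_ (poly0 K 1 one_pos)
    filter_upwards [ev] with u hu
    have hu2 : 0 < u ^ 2 := pow_pos hu.1 2
    rw [Real.norm_eq_abs, abs_div, abs_of_pos hu2, div_le_iff₀ hu2]
    calc _ ≤ _ := hE u hu.1 hu.2
      _ = _ := by ring
  set w : ℝ → ℝ := fun u => -(u ^ 2 * V / 2) + E u with hw
  have w2 : Tendsto (fun u => w u / u ^ 2) (𝓝[>] 0) (𝓝 (-(V / 2))) := by
    have := E2.const_add (-(V / 2))
    rw [add_zero] at this
    refine this.congr' ?_
    filter_upwards [ev] with u hu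
    have := hu.1.ne'
    simp only [hw]
    field_simp
  have w0 : Tendsto w (𝓝[>] 0) (𝓝 0) := by
    have := w2.mul (poly0 1 2 two_pos)
    rw [mul_zero] at this
    refine this.congr' ?_
    filter_upwards [ev] with u hu
    have := hu.1.ne'
    field_simp
  have hR : R = P.card := by
    have t1 : Tendsto (fun u : ℝ => ∑ p ∈ P, Real.cos (u * f p)) (𝓝[>] 0) (𝓝 P.card) := by
      have c : Continuous fun u : ℝ => ∑ p ∈ P, Real.cos (u * f p) := by fun_prop
      have := c.tendsto 0
      simp only [zero_mul, Real.cos_zero, Finset.sum_const, nsmul_eq_mul, mul_one] at this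
      exact tendsto_nhdsWithin_of_tendsto_nhds this
    have t2 : Tendsto (fun u => R * Real.exp (w u)) (𝓝[>] 0) (𝓝 R) := by
      have := ((Real.continuous_exp.tendsto 0).comp w0).const_mul R
      simpa using this
    refine tendsto_nhds_unique (t2.congr' ?_) t1
    filter_upwards [ev] with u hu using (hcos u hu.1 hu.2).symm
  have slope : ∀ c : ℝ, Tendsto (fun u : ℝ => Real.sin (u * c) / u) (𝓝[>] 0) (𝓝 c) := by
    intro c
    have hd : HasDerivAt (fun u : ℝ => Real.sin (u * c)) c 0 := by
      have := (hasDerivAt_mul_const (x := (0 : ℝ)) c).sin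
      simpa using this
    have := hd.tendsto_slope_zero_right
    refine this.congr fun u => ?_
    simp [div_eq_inv_mul]
  refine ⟨hR, ?_, ?_⟩
  · have t1 : Tendsto (fun u : ℝ => ∑ p ∈ P, Real.sin (u * f p) / u) (𝓝[>] 0)
        (𝓝 (∑ p ∈ P, f p)) := tendsto_finsetSum _ fun p _ => slope (f p)
    refine tendsto_nhds_unique t1 (tendsto_const_nhds.congr' ?_)
    filter_upwards [ev] with u hu
    rw [← Finset.sum_div, hsin u hu.1 hu.2, zero_div]
  · have t1 : Tendsto (fun u : ℝ => ∑ p ∈ P, (1 - Real.cos (u * f p)) / u ^ 2) (𝓝[>] 0)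
        (𝓝 (∑ p ∈ P, 2 * (f p / 2) ^ 2)) := by
      refine tendsto_finsetSum _ fun p _ => ?_
      refine (((slope (f p / 2)).pow 2).const_mul 2).congr fun u => ?_
      have : 1 - Real.cos (u * f p) = 2 * Real.sin (u * (f p / 2)) ^ 2 := by
        rw [Real.sin_sq_eq_half_sub]
        ring_nf
      rw [this]; ring
    have t2 : Tendsto (fun u : ℝ => R * (-((Real.exp (w u) - 1) / u ^ 2))) (𝓝[>] 0)
        (𝓝 (R * (V / 2))) := by
      have t3 : Tendsto (fun u => (Real.exp (w u) - 1 - w u) / u ^ 2) (𝓝[>] 0) (𝓝 0) := by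
        have sm : ∀ᶠ u in 𝓝[>] (0 : ℝ), |w u| ≤ 1 := by
          have := w0.abs
          rw [abs_zero] at this
          exact this.eventually (Iic_mem_nhds one_pos)
        have t4 := (w2.mul w0).abs
        rw [mul_zero, abs_zero] at t4
        refine squeeze_zero_norm' ?_ t4
        filter_upwards [ev, sm] with u hu hs
        have hu2 : 0 < u ^ 2 := pow_pos hu.1 2
        have := Real.abs_exp_sub_one_sub_id_le hs
        rw [Real.norm_eq_abs, abs_div, abs_of_pos hu2, abs_mul, abs_div, abs_of_pos hu2,
          div_mul_eq_mul_div, ← abs_mul]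
        refine div_le_div_of_nonneg_right ?_ hu2.le
        rw [← sq, abs_of_nonneg (sq_nonneg (w u))]
        exact this
      have t5 := (t3.add w2).neg.const_mul R
      rw [zero_add, neg_neg] at t5
      refine t5.congr fun u => ?_
      ring
    have t6 := tendsto_nhds_unique (t2.congr' ?_) t1
    · have e : ∑ p ∈ P, 2 * (f p / 2) ^ 2 = (∑ p ∈ P, f p ^ 2) / 2 := by
        rw [Finset.sum_div]
        exact Finset.sum_congr rfl fun p _ => by ring
      rw [e] at t6
      linarith
    · filter_upwards [ev] with u hu
      rw [← Finset.sum_div, Finset.sum_sub_distrib, hcos u hu.1 hu.2, Finset.sum_const,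
        nsmul_eq_mul, mul_one, ← hR]
      simp only [hw]
      ring

lemma card_PP_pos (r s t : ℕ) : 0 < (PP r s t).card :=
  Finset.card_pos.2 ⟨fun _ _ => 0, by simp [PP]⟩

/-- The standard deviation, and the characteristic function of the centred volume: for small `u`
it is `exp (-u² V / 2)` up to a factor `exp E` with an explicit bound on `E`. -/
lemma PP_charFun {r s t : ℕ} (hr : 0 < r) :
    sdPP r s t = Real.sqrt (varPP r s t) ∧
    ∀ u : ℝ, 0 < u → u * (r + s + t) ≤ 1 → ∃ E : ℝ, |E| ≤ (r + s + t) * varPP r s t * u ^ 3 ∧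
      (∑ p ∈ PP r s t, Complex.exp (Complex.I * u * ((vol p - meanPP r s t : ℝ) : ℂ))) /
        ((PP r s t).card : ℂ) = Complex.exp ((-(u ^ 2 * varPP r s t / 2) + E : ℝ) : ℂ) := by
  obtain ⟨κ, R, hR, h⟩ := sum_cexp_eq_exp r s t
  have hM : (0 : ℝ) < r + s + t := by positivity
  have hcard : (0 : ℝ) < (PP r s t).card := by exact_mod_cast card_PP_pos r s t
  obtain ⟨h1, h2, h3⟩ := moments_of_cexp (PP r s t) (fun p => vol p - κ) R (varPP r s t)
    ((r + s + t) * varPP r s t) (1 / (r + s + t)) (by positivity)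
    (fun u hu hu1 => h u hu (by rwa [le_div_iff₀ hM] at hu1))
  have hmean : meanPP r s t = κ := by
    rw [meanPP, div_eq_iff hcard.ne']
    rw [Finset.sum_sub_distrib, Finset.sum_const, nsmul_eq_mul] at h2
    linarith
  refine ⟨?_, fun u hu hu1 => ?_⟩
  · rw [sdPP, hmean, h3, h1, mul_div_cancel_left₀ _ hcard.ne']
  · obtain ⟨E, hE, hs⟩ := h u hu hu1
    refine ⟨E, hE, ?_⟩
    rw [hmean, hs, h1]
    push_cast
    rw [mul_div_cancel_left₀]
    exact_mod_cast hcard.ne'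

/-- The law on `ℝ` of the normalised volume `(X - μ) / σ` under the uniform distribution. -/
noncomputable def normLaw (r s t : ℕ) : Measure ℝ :=
  ∑ p ∈ PP r s t, ((PP r s t).card : ENNReal)⁻¹ •
    Measure.dirac (((vol p : ℝ) - meanPP r s t) / sdPP r s t)

instance (r s t : ℕ) : IsProbabilityMeasure (normLaw r s t) := by
  constructor
  simp only [normLaw, Measure.finsetSum_apply, Measure.smul_apply, measure_univ, smul_eq_mul,
    mul_one, Finset.sum_const, nsmul_eq_mul]
  exact ENNReal.mul_inv_cancel (by exact_mod_cast (card_PP_pos r s t).ne') (by simp)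

lemma integral_normLaw {F : Type*} [NormedAddCommGroup F] [NormedSpace ℝ F] [CompleteSpace F]
    (r s t : ℕ) (f : ℝ → F) :
    ∫ x, f x ∂(normLaw r s t) = ((PP r s t).card : ℝ)⁻¹ •
      ∑ p ∈ PP r s t, f (((vol p : ℝ) - meanPP r s t) / sdPP r s t) := by
  have hc : ((PP r s t).card : ENNReal)⁻¹ ≠ ⊤ :=
    ENNReal.inv_ne_top.2 (by exact_mod_cast (card_PP_pos r s t).ne')
  rw [normLaw, integral_finsetSum_measure, Finset.smul_sum]
  · refine Finset.sum_congr rfl fun p _ => ?_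
    rw [integral_smul_measure, integral_dirac]
    simp
  · intro p _
    exact (integrable_dirac (by simp)).smul_measure hc

/-! ### The central limit theorem -/

/-- Central limit law: if `r_n, s_n → ∞` (with `t_n` arbitrary), the normalised volumes
`Y_n = (X_n − μ_n)/σ_n` of uniformly random plane partitions in `(r_n,s_n,t_n)`-boxes
converge in distribution to a standard normal random variable; i.e., for every bounded
continuous test function `f`, the expectation `E[f(Y_n)]` converges to the integral of `f`
against the standard Gaussian measure. -/
theorem volume_clt_PP (r s t : ℕ → ℕ)
    (hr : ∀ n, 0 < r n) (hs : ∀ n, 0 < s n) (ht : ∀ n, 0 < t n)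
    (hr' : Tendsto r atTop atTop) (hs' : Tendsto s atTop atTop) :
    ∀ f : BoundedContinuousFunction ℝ ℝ,
      Tendsto (fun n : ℕ =>
        (∑ p ∈ PP (r n) (s n) (t n),
            f (((vol p : ℝ) - meanPP (r n) (s n) (t n)) / sdPP (r n) (s n) (t n))) /
          ((PP (r n) (s n) (t n)).card : ℝ))
        atTop (nhds (∫ x, f x ∂(ProbabilityTheory.gaussianReal 0 1))) := by
  have rpos : ∀ n, (0 : ℝ) < r n := fun n => by exact_mod_cast hr n
  have spos : ∀ n, (0 : ℝ) < s n := fun n => by exact_mod_cast hs n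
  have tpos : ∀ n, (1 : ℝ) ≤ t n := fun n => by exact_mod_cast ht n
  have Vpos : ∀ n, 0 < varPP (r n) (s n) (t n) := fun n => by
    have := rpos n; have := spos n; have := tpos n
    unfold varPP; positivity
  set σ : ℕ → ℝ := fun n => Real.sqrt (varPP (r n) (s n) (t n)) with hσ
  have σpos : ∀ n, 0 < σ n := fun n => Real.sqrt_pos.2 (Vpos n)
  have σsq : ∀ n, σ n ^ 2 = varPP (r n) (s n) (t n) := fun n => Real.sq_sqrt (Vpos n).le
  set M : ℕ → ℝ := fun n => r n + s n + t n with hM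
  have Mpos : ∀ n, 0 < M n := fun n => by
    have := rpos n; have := spos n; have := tpos n
    simp only [hM]; positivity
  have invr : Tendsto (fun n => ((r n : ℝ))⁻¹) atTop (nhds 0) :=
    tendsto_inv_atTop_zero.comp (tendsto_natCast_atTop_atTop.comp hr')
  have invs : Tendsto (fun n => ((s n : ℝ))⁻¹) atTop (nhds 0) :=
    tendsto_inv_atTop_zero.comp (tendsto_natCast_atTop_atTop.comp hs')
  -- `(M/σ)² = 12 (1/(st) + 1/(rt) + 1/(rs))`
  have δ2 : Tendsto (fun n => (M n / σ n) ^ 2) atTop (nhds 0) := by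
    have lim : Tendsto (fun n => 12 * ((s n : ℝ)⁻¹ + (r n : ℝ)⁻¹ + (r n : ℝ)⁻¹ * (s n : ℝ)⁻¹))
        atTop (nhds 0) := by
      have := ((invs.add invr).add (invr.mul invs)).const_mul 12
      simpa using this
    refine squeeze_zero (fun n => sq_nonneg _) (fun n => ?_) lim
    have h1 := rpos n
    have h2 := spos n
    have h3 := tpos n
    have h3' : (0 : ℝ) < t n := by linarith
    have e : (M n / σ n) ^ 2 = 12 * ((s n : ℝ)⁻¹ * (t n : ℝ)⁻¹ + (r n : ℝ)⁻¹ * (t n : ℝ)⁻¹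
        + (r n : ℝ)⁻¹ * (s n : ℝ)⁻¹) := by
      rw [div_pow, σsq, varPP]
      simp only [hM]
      field_simp
    rw [e]
    have h4 : (t n : ℝ)⁻¹ ≤ 1 := inv_le_one_of_one_le₀ h3
    have h5 : (s n : ℝ)⁻¹ * (t n : ℝ)⁻¹ ≤ (s n : ℝ)⁻¹ := mul_le_of_le_one_right (by positivity) h4
    have h6 : (r n : ℝ)⁻¹ * (t n : ℝ)⁻¹ ≤ (r n : ℝ)⁻¹ := mul_le_of_le_one_right (by positivity) h4
    linarith
  have δ : Tendsto (fun n => M n / σ n) atTop (nhds 0) := by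
    have := δ2.sqrt
    rw [Real.sqrt_zero] at this
    refine this.congr fun n => ?_
    exact Real.sqrt_sq (div_pos (Mpos n) (σpos n)).le
  have charFun_eq : ∀ n (θ : ℝ), charFun (normLaw (r n) (s n) (t n)) θ =
      (∑ p ∈ PP (r n) (s n) (t n), Complex.exp (Complex.I * ((θ / σ n : ℝ) : ℂ) *
        ((vol p - meanPP (r n) (s n) (t n) : ℝ) : ℂ))) / ((PP (r n) (s n) (t n)).card : ℂ) := by
    intro n θ
    rw [charFun_apply_real, integral_normLaw, (PP_charFun (hr n)).1, div_eq_inv_mul,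
      Complex.real_smul, Complex.ofReal_inv, Complex.ofReal_natCast]
    congr 1
    refine Finset.sum_congr rfl fun p _ => ?_
    congr 1
    simp only [hσ]
    push_cast
    ring
  have charFun_lim_pos : ∀ θ : ℝ, 0 < θ →
      Tendsto (fun n => charFun (normLaw (r n) (s n) (t n)) θ) atTop
        (nhds (Complex.exp ((-(θ ^ 2 / 2) : ℝ) : ℂ))) := by
    intro θ hθ
    have ex : ∀ n, ∃ E : ℝ, θ * (M n / σ n) ≤ 1 → |E| ≤ θ ^ 3 * (M n / σ n) ∧
        charFun (normLaw (r n) (s n) (t n)) θ = Complex.exp ((-(θ ^ 2 / 2) + E : ℝ) : ℂ) := by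
      intro n
      by_cases h : θ * (M n / σ n) ≤ 1
      · have hσ0 := (σpos n).ne'
        obtain ⟨E, hE, he⟩ := (PP_charFun (s := s n) (t := t n) (hr n)).2 (θ / σ n)
          (div_pos hθ (σpos n)) (by
            have : θ / σ n * (r n + s n + t n) = θ * (M n / σ n) := by simp only [hM]; ring
            rw [this]; exact h)
        refine ⟨E, fun _ => ⟨hE.trans_eq ?_, ?_⟩⟩
        · rw [← σsq]
          simp only [hM]
          field_simp
        · rw [charFun_eq, he, ← σsq]
          congr 3
          field_simp
      · exact ⟨0, fun h' => absurd h' h⟩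
    choose E hE using ex
    have evt : ∀ᶠ n in atTop, θ * (M n / σ n) ≤ 1 := by
      have := δ.const_mul θ
      rw [mul_zero] at this
      exact this.eventually (Iic_mem_nhds one_pos)
    have E0 : Tendsto E atTop (nhds 0) := by
      have := δ.const_mul (θ ^ 3)
      rw [mul_zero] at this
      refine squeeze_zero_norm' ?_ this
      filter_upwards [evt] with n hn using (hE n hn).1
    have lim : Tendsto (fun n => Complex.exp ((-(θ ^ 2 / 2) + E n : ℝ) : ℂ)) atTop
        (nhds (Complex.exp ((-(θ ^ 2 / 2) : ℝ) : ℂ))) := by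
      have c : Continuous fun x : ℝ => Complex.exp ((-(θ ^ 2 / 2) + x : ℝ) : ℂ) := by fun_prop
      have := (c.tendsto 0).comp E0
      simpa only [add_zero, Function.comp_def] using this
    refine lim.congr' ?_
    filter_upwards [evt] with n hn using (hE n hn).2.symm
  have charFun_lim : ∀ θ : ℝ, Tendsto (fun n => charFun (normLaw (r n) (s n) (t n)) θ) atTop
      (nhds (charFun (ProbabilityTheory.gaussianReal 0 1) θ)) := by
    intro θ
    have hG : charFun (ProbabilityTheory.gaussianReal 0 1) θ =
        Complex.exp ((-(θ ^ 2 / 2) : ℝ) : ℂ) := by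
      rw [ProbabilityTheory.charFun_gaussianReal]
      congr 1
      push_cast
      simp
    rw [hG]
    rcases lt_trichotomy θ 0 with h | h | h
    · have := (Complex.continuous_conj.tendsto _).comp (charFun_lim_pos (-θ) (by linarith))
      rw [← Complex.exp_conj, Complex.conj_ofReal, neg_sq] at this
      refine this.congr fun n => ?_
      rw [Function.comp_apply, ← charFun_neg, neg_neg]
    · subst h
      simp
    · exact charFun_lim_pos θ h
  intro f
  let law : ℕ → ProbabilityMeasure ℝ := fun n => ⟨normLaw (r n) (s n) (t n), inferInstance⟩
  let gauss : ProbabilityMeasure ℝ := ⟨ProbabilityTheory.gaussianReal 0 1, inferInstance⟩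
  have conv : Tendsto law atTop (nhds gauss) :=
    ProbabilityMeasure.tendsto_iff_tendsto_charFun.2 charFun_lim
  refine (ProbabilityMeasure.tendsto_iff_forall_integral_tendsto.1 conv f).congr fun n => ?_
  change ∫ x, f x ∂(normLaw (r n) (s n) (t n)) = _
  rw [integral_normLaw, smul_eq_mul, div_eq_inv_mul]
end

section
/- Let (r_n), (t_n) be sequences of positive integers with r_n → ∞ (and t_n arbitrary). For each n let X_n be the volume random variable on SPP(r_n, t_n) equipped with the uniform probability distribution, with mean μ_n and standard deviation σ_n. Then the normalized random variables Y_n = (X_n − μ_n)/σ_n converge in distribution, as n → ∞, to a standard normal random variable (mean 0, variance 1). -/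
/-!
The proof has an exact part and an analytic part.

*Product formula.* Let `b = expo t (i, j)` and `a = expo 0 (i, j)` run over the exponents attached
to the pairs `i ≤ j < r`. Then `∑_p q ^ vol p = ∏ (1 - q^b) / (1 - q^a)` (`genFun_real`). To see
this, the main diagonal of a symmetric plane partition is peeled off repeatedly; the diagonals
interlace, and the generating function with given main diagonal `lam` is a Vandermonde determinant
(`exists_diagSum_eq`). Summing over `lam` yields a sum of alternants over bounded strict sequences,
which is evaluated by the bounded Littlewood identity (`altSum_mul_den`); at `x_j = q^(2j+1)` the
resulting determinant factors (`exists_altDet_eval`). All factors that do not depend on `t` are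
removed by comparison with `t = 0`, where there is a single plane partition.

*Limit law.* The formula presents the volume, formally, as a sum of independent uniform variables
on `{0, …, b-1}` minus the same for the `a`. Hence the mean is `∑ (b - a) / 2`, the variance is
`σ² = ∑ (b² - a²) / 12` (`meanSPP_eq`, `sdSPP_sq`), and the centred characteristic function at `2y`
is `∏ sinc (b y) / sinc (a y)`. Since `log sinc x = -x²/6` up to an error with derivative bounded by
`x³`, at `y = s / (2σ)` its logarithm is `-s²/2` with error `O(s⁴ B² / σ²)`, where
`B = 4 (r + t)` bounds all exponents. As `σ²` is at least of order `r (r + t)²`, the error is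
`O(s⁴ / r)` uniformly in `t`, and Lévy's continuity theorem gives the claim.
-/

open Finset Filter MeasureTheory

/-- Symmetric plane partitions inside an `(r,r,t)`-box. -/
def SPP (r t : ℕ) : Finset (Fin r → Fin r → Fin (t + 1)) :=
  (PP r r t).filter fun p => ∀ i j, p i j = p j i

/-- The mean volume for the uniform distribution on `SPP(r,t)`. -/
noncomputable def meanSPP (r t : ℕ) : ℝ :=
  (∑ p ∈ SPP r t, (vol p : ℝ)) / ((SPP r t).card : ℝ)

/-- The standard deviation of the volume for the uniform distribution on `SPP(r,t)`. -/
noncomputable def sdSPP (r t : ℕ) : ℝ :=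
  Real.sqrt ((∑ p ∈ SPP r t, ((vol p : ℝ) - meanSPP r t) ^ 2) / ((SPP r t).card : ℝ))

/-! ### The bounded Littlewood identity -/

/-- Strictly decreasing sequences of length `r` with entries in `{0, …, N - 1}`. -/
noncomputable def strictSeqs (r N : ℕ) : Finset (Fin r → ℕ) := by
  classical exact (Fintype.piFinset fun _ => Finset.range N).filter StrictAnti

/-- The sum of the alternants `det (x_j ^ l_i)` over all `l ∈ strictSeqs r N`. -/
noncomputable def altSum (r N : ℕ) (x : Fin r → ℝ) : ℝ :=
  ∑ l ∈ strictSeqs r N, (Matrix.of fun i j => x j ^ l i).det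

/-- The determinant of `x_j ^ (r-1-i) - x_j ^ (N+i)`: the numerator of the bounded Littlewood
identity, for strict sequences with entries less than `N`. -/
noncomputable def altDet (r N : ℕ) (x : Fin r → ℝ) : ℝ :=
  (Matrix.of fun i j : Fin r => x j ^ (r - 1 - (i : ℕ)) - x j ^ (N + (i : ℕ))).det

/-- The denominator `∏ (1 - x_i) ∏_{i<j} (1 - x_i x_j)` of Littlewood's identity. -/
noncomputable def littlewoodDen {r : ℕ} (x : Fin r → ℝ) : ℝ :=
  (∏ i, (1 - x i)) * ∏ i, ∏ j, if i < j then 1 - x i * x j else 1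

lemma mem_strictSeqs {r N : ℕ} {l : Fin r → ℕ} :
    l ∈ strictSeqs r N ↔ (∀ i, l i < N) ∧ StrictAnti l := by
  classical
  simp [strictSeqs]

lemma littlewoodDen_succAbove {r : ℕ} (x : Fin (r + 1) → ℝ) (k : Fin (r + 1)) :
    littlewoodDen x = (1 - x k) * (∏ i, (1 - x k * x (k.succAbove i))) *
      littlewoodDen (fun i => x (k.succAbove i)) := by
  unfold littlewoodDen
  rw [Fin.prod_univ_succAbove _ k, Fin.prod_univ_succAbove _ k]
  have h1 : ∀ i : Fin r, (∏ j, if k.succAbove i < j then 1 - x (k.succAbove i) * x j else 1)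
      = (if k.succAbove i < k then 1 - x (k.succAbove i) * x k else 1) *
        ∏ j, if i < j then 1 - x (k.succAbove i) * x (k.succAbove j) else 1 := by
    intro i
    rw [Fin.prod_univ_succAbove _ k]
    simp [Fin.succAbove_lt_succAbove_iff]
  have h2 : (∏ j, if k < j then 1 - x k * x j else 1) =
      ∏ i, if k < k.succAbove i then 1 - x k * x (k.succAbove i) else 1 := by
    rw [Fin.prod_univ_succAbove _ k]
    simp
  have h3 : (∏ i, (1 - x k * x (k.succAbove i))) =
      (∏ i, if k < k.succAbove i then 1 - x k * x (k.succAbove i) else 1) *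
      ∏ i, if k.succAbove i < k then 1 - x (k.succAbove i) * x k else 1 := by
    rw [← Finset.prod_mul_distrib]
    refine Finset.prod_congr rfl fun i _ => ?_
    rcases lt_or_gt_of_ne (Fin.succAbove_ne k i) with h | h
    · simp [h, not_lt.mpr h.le, mul_comm]
    · simp [h, not_lt.mpr h.le]
  simp_rw [h1]
  rw [Finset.prod_mul_distrib, h2, h3]
  ring

/-- For `N = 0` the first and last rows of the matrix are opposite (or the single row vanishes). -/
lemma altDet_zero (r : ℕ) (x : Fin (r + 1) → ℝ) : altDet (r + 1) 0 x = 0 := by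
  unfold altDet
  rw [← Matrix.exists_vecMul_eq_zero_iff]
  refine ⟨Pi.single 0 1 + Pi.single (Fin.last r) 1, ?_, ?_⟩
  · intro h
    have := congrFun h 0
    rcases Nat.eq_zero_or_pos r with hr | hr
    · subst hr
      simp at this
    · have h0 : (0 : Fin (r + 1)) ≠ Fin.last r := by
        intro h; have := congrArg Fin.val h; simp at this; omega
      simp [h0] at this
  · rw [Matrix.add_vecMul]
    ext j
    simp

/-- The recursion of `altDet` in `N`. Multiply column `j` by `1 + x_j`, so that row `i` becomes
`ρ i + ρ (i+1)` with `ρ k = x ^ (r+1-k) - x ^ (N+k)`, and let `L v` be the determinant with row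
`0` replaced by `v`. Since `L` kills the other rows, `L (ρ k)` alternates in sign for `k ≥ 1`;
both determinants on the left are values of `L`, and so is the right-hand side (Laplace
expansion), its row being the combination `-∑ e_k ρ k` with `e_k` the coefficients of
`∏ (1 - x_i X)`. -/
lemma altDet_succ_sub (r N : ℕ) (x : Fin (r + 1) → ℝ) (hx : ∀ j, 0 < x j) :
    altDet (r + 1) (N + 1) x - altDet (r + 1) N x =
      ∑ j : Fin (r + 1), (-1) ^ (j : ℕ) * (x j ^ N * ((1 - x j) *
        ∏ i, (1 - x j * x (j.succAbove i)))) * altDet r (N + 1) (fun i => x (j.succAbove i)) := by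
  set c : ℝ := ∏ j, (1 + x j) with hc
  have hc0 : c ≠ 0 := (Finset.prod_pos fun j _ => by linarith [hx j]).ne'
  let ρ : ℕ → Fin (r + 1) → ℝ := fun k j => x j ^ (r + 1 - k) - x j ^ N * x j ^ k
  let M : Matrix (Fin (r + 1)) (Fin (r + 1)) ℝ :=
    Matrix.of fun i j => (1 + x j) * (x j ^ (r - (i : ℕ)) - x j ^ (N + (i : ℕ)))
  let L : (Fin (r + 1) → ℝ) →ₗ[ℝ] ℝ :=
    (Matrix.detRowAlternating (n := Fin (r + 1)) (R := ℝ)).toMultilinearMap.toLinearMap M 0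
  have hL : ∀ v, L v = (M.updateRow 0 v).det := fun v => rfl
  have hM : ∀ i : Fin (r + 1), M i = ρ i + ρ (i + 1) := by
    intro i
    ext j
    have h1 : r + 1 - (i : ℕ) = (r - i) + 1 := by omega
    have h2 : r + 1 - ((i : ℕ) + 1) = r - i := by omega
    simp only [M, ρ, Matrix.of_apply, Pi.add_apply, h1, h2]
    ring
  have hL0 : ∀ i : Fin r, L (M i.succ) = 0 := by
    intro i
    rw [hL]
    refine Matrix.det_zero_of_row_eq (Fin.succ_ne_zero i).symm ?_
    rw [Matrix.updateRow_self, Matrix.updateRow_ne (Fin.succ_ne_zero i)]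
  have hdetM : L (M 0) = c * altDet (r + 1) N x := by
    rw [hL, Matrix.updateRow_eq_self]
    exact Matrix.det_mul_row (fun j => 1 + x j) _
  have hstep : ∀ k, k ≤ r → L (ρ (k + 1)) = (-1) ^ k * L (ρ 1) := by
    intro k
    induction k with
    | zero => simp
    | succ k ih =>
      intro hk
      have h := hL0 ⟨k, hk⟩
      rw [hM] at h
      simp only [map_add, Fin.val_succ] at h
      rw [pow_succ, eq_neg_of_add_eq_zero_right h, ih (by omega)]
      ring
  have hρ1 : L (ρ 1) = altDet (r + 1) (N + 1) x := by
    rw [hL]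
    unfold altDet
    symm
    -- row `i + 1` of `M` is `ρ (i + 1) + ρ (i + 2)`, so subtracting successively the previous
    -- row leaves the matrix with rows `ρ (i + 1)`
    have key := Matrix.det_eq_of_forall_row_eq_smul_add_pred (n := r)
      (A := Matrix.of fun i j : Fin (r + 1) => ρ ((i : ℕ) + 1) j)
      (B := M.updateRow 0 (ρ 1)) (c := fun _ => -1) ?_ ?_
    · rw [← key]
      congr 1
      ext i j
      have h2 : r + 1 - ((i : ℕ) + 1) = r - i := by omega
      simp only [ρ, Matrix.of_apply, h2]
      have h3 : r + 1 - 1 - (i : ℕ) = r - i := by omega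
      rw [h3]
      ring
    · intro j
      simp
    · intro i j
      rw [Matrix.updateRow_ne (Fin.succ_ne_zero i), hM]
      simp
  -- the coefficients of `∏ (1 - x_i X)`
  let E : Polynomial ℝ := ∏ i, (1 - Polynomial.C (x i) * Polynomial.X)
  have hEdeg : E.natDegree < r + 2 := by
    have : E.natDegree ≤ ∑ i : Fin (r + 1), 1 := by
      refine (Polynomial.natDegree_prod_le _ _).trans (Finset.sum_le_sum fun i _ => ?_)
      compute_degree
    simp at this
    omega
  have hEeval : ∀ z, E.eval z = ∏ i, (1 - x i * z) := by
    intro z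
    simp [E, Polynomial.eval_prod]
  have hEsum : ∀ z, ∑ k ∈ Finset.range (r + 2), E.coeff k * z ^ k = ∏ i, (1 - x i * z) := by
    intro z
    rw [← hEeval, Polynomial.eval_eq_sum_range' hEdeg]
  have hE0 : E.coeff 0 = 1 := by
    rw [Polynomial.coeff_zero_eq_eval_zero, hEeval]
    simp
  have hErev : ∀ j, ∑ k ∈ Finset.range (r + 2), E.coeff k * x j ^ (r + 1 - k) = 0 := by
    intro j
    have h := hEsum (x j)⁻¹
    rw [Finset.prod_eq_zero (Finset.mem_univ j) (by rw [mul_inv_cancel₀ (hx j).ne', sub_self])] at h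
    have h' := congrArg (fun y => x j ^ (r + 1) * y) h
    simp only [mul_zero, Finset.mul_sum] at h'
    rw [← h']
    refine Finset.sum_congr rfl fun k hk => ?_
    have hk' : k ≤ r + 1 := by simp at hk; omega
    rw [pow_sub₀ _ (hx j).ne' hk', inv_pow]
    ring
  have hYE : -(fun j => x j ^ N * ∏ i, (1 - x i * x j)) =
      ∑ k ∈ Finset.range (r + 2), E.coeff k • ρ k := by
    ext j
    simp only [Pi.neg_apply, Finset.sum_apply, Pi.smul_apply, smul_eq_mul, ρ, mul_sub,
      Finset.sum_sub_distrib, hErev, zero_sub]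
    rw [← hEsum, Finset.mul_sum]
    congr 1
    exact Finset.sum_congr rfl fun k _ => by ring
  have hcsum : 1 - ∑ k ∈ Finset.range (r + 1), E.coeff (k + 1) * (-1) ^ k = c := by
    have h := hEsum (-1)
    rw [Finset.sum_range_succ', hE0] at h
    rw [hc]
    have h2 : ∏ i, (1 - x i * (-1)) = ∏ j, (1 + x j) :=
      Finset.prod_congr rfl fun i _ => by ring
    rw [← h2, ← h]
    have h3 : ∀ k, E.coeff (k + 1) * (-1 : ℝ) ^ (k + 1) = -(E.coeff (k + 1) * (-1) ^ k) := by
      intro k; ring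
    simp only [h3, Finset.sum_neg_distrib]
    ring
  have hLYE := congrArg L hYE
  rw [map_neg, map_sum, Finset.sum_range_succ'] at hLYE
  simp only [map_smul, smul_eq_mul, hE0] at hLYE
  have h4 : ∑ k ∈ Finset.range (r + 1), E.coeff (k + 1) * L (ρ (k + 1)) = (1 - c) * L (ρ 1) := by
    rw [← hcsum, sub_sub_cancel, Finset.sum_mul]
    refine Finset.sum_congr rfl fun k hk => ?_
    rw [hstep k (by simp at hk; omega)]
    ring
  have h5 : L (ρ 0) = L (M 0) - L (ρ 1) := by
    rw [hM 0]
    simp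
  rw [h4, h5, hdetM, hρ1] at hLYE
  -- Laplace expansion along the row `0`
  have h6 : L (fun j => x j ^ N * ∏ i, (1 - x i * x j)) = c *
      ∑ j : Fin (r + 1), (-1) ^ (j : ℕ) * (x j ^ N * ((1 - x j) *
        ∏ i, (1 - x j * x (j.succAbove i)))) * altDet r (N + 1) (fun i => x (j.succAbove i)) := by
    rw [hL, Matrix.det_succ_row_zero, Finset.mul_sum]
    refine Finset.sum_congr rfl fun j _ => ?_
    have hminor : ((M.updateRow 0 (fun j => x j ^ N * ∏ i, (1 - x i * x j))).submatrix
        Fin.succ j.succAbove).det = (∏ i, (1 + x (j.succAbove i))) *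
          altDet r (N + 1) (fun i => x (j.succAbove i)) := by
      unfold altDet
      rw [← Matrix.det_mul_row]
      congr 1
      ext i k
      rw [Matrix.submatrix_apply, Matrix.updateRow_ne (Fin.succ_ne_zero i)]
      have h7 : r - ((i : ℕ) + 1) = r - 1 - i := by omega
      simp only [M, Matrix.of_apply, Fin.val_succ, h7]
      ring
    rw [hminor, Matrix.updateRow_self, hc, Fin.prod_univ_succAbove _ j,
      Fin.prod_univ_succAbove _ j]
    have h8 : ∏ i, (1 - x (j.succAbove i) * x j) = ∏ i, (1 - x j * x (j.succAbove i)) :=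
      Finset.prod_congr rfl fun i _ => by ring
    rw [h8]
    ring
  rw [h6] at hLYE
  apply mul_left_cancel₀ hc0
  linarith

lemma altSum_zero (r : ℕ) (x : Fin (r + 1) → ℝ) : altSum (r + 1) 0 x = 0 := by
  unfold altSum
  rw [Finset.sum_eq_zero]
  intro l hl
  exact absurd ((mem_strictSeqs.1 hl).1 0) (by simp)

/-- The recursion of `altSum` in `N`: the new sequences are those with largest entry `N`, and
their alternants are expanded along the row of that entry. -/
lemma altSum_succ_sub (r N : ℕ) (x : Fin (r + 1) → ℝ) :
    altSum (r + 1) (N + 1) x - altSum (r + 1) N x =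
      ∑ j : Fin (r + 1), (-1) ^ (j : ℕ) * x j ^ N *
        altSum r (N + 1) (fun i => x (j.succAbove i)) := by
  classical
  have hsub : strictSeqs (r + 1) N ⊆ strictSeqs (r + 1) (N + 1) := by
    intro l hl
    rw [mem_strictSeqs] at *
    exact ⟨fun i => (hl.1 i).trans (Nat.lt_succ_self _), hl.2⟩
  have himg : strictSeqs (r + 1) (N + 1) \ strictSeqs (r + 1) N =
      (strictSeqs r N).image (fun l => (Fin.cons N l : Fin (r + 1) → ℕ)) := by
    ext l
    simp only [Finset.mem_sdiff, mem_strictSeqs, Finset.mem_image]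
    constructor
    · rintro ⟨⟨h1, h2⟩, h3⟩
      have h0 : l 0 = N := by
        by_contra hne
        apply h3
        refine ⟨fun i => ?_, h2⟩
        have := h2.antitone (Fin.zero_le i)
        have := h1 0
        omega
      refine ⟨Fin.tail l, ⟨fun i => ?_, fun a b hab => h2 (Fin.succ_lt_succ_iff.2 hab)⟩, ?_⟩
      · rw [← h0]
        exact h2 (Fin.succ_pos i)
      · rw [← h0]
        exact Fin.cons_self_tail l
    · rintro ⟨l', ⟨h1, h2⟩, rfl⟩
      refine ⟨⟨fun i => ?_, ?_⟩, fun h => ?_⟩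
      · refine Fin.cases (by simp) (fun i => ?_) i
        simp only [Fin.cons_succ]
        exact (h1 i).trans (Nat.lt_succ_self _)
      · intro a b hab
        induction b using Fin.cases with
        | zero => exact absurd hab (by simp)
        | succ b =>
          induction a using Fin.cases with
          | zero => simpa using h1 b
          | succ a => simpa using h2 (Fin.succ_lt_succ_iff.1 hab)
      · simpa using h.1 0
  have hinj : Function.Injective (fun l : Fin r → ℕ => (Fin.cons N l : Fin (r + 1) → ℕ)) :=
    fun a b h => (Fin.cons_injective2 h).2
  have hsub' : strictSeqs r N ⊆ strictSeqs r (N + 1) := by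
    intro l hl
    rw [mem_strictSeqs] at *
    exact ⟨fun i => (hl.1 i).trans (Nat.lt_succ_self _), hl.2⟩
  unfold altSum
  rw [← Finset.sum_sdiff hsub, add_sub_cancel_right, himg, Finset.sum_image hinj.injOn,
    Finset.sum_subset hsub']
  · simp_rw [Finset.mul_sum]
    rw [Finset.sum_comm]
    refine Finset.sum_congr rfl fun l _ => ?_
    rw [Matrix.det_succ_row_zero]
    refine Finset.sum_congr rfl fun j _ => ?_
    simp only [Matrix.of_apply, Fin.cons_zero]
    rfl
  · -- the extra sequences start with `N` as well, so the alternant has two equal rows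
    intro l hl hl'
    rw [mem_strictSeqs] at hl hl'
    obtain ⟨i, hi⟩ : ∃ i, l i = N := by
      by_contra! h
      exact hl' ⟨fun i => lt_of_le_of_ne (Nat.lt_succ_iff.1 (hl.1 i)) (h i), hl.2⟩
    refine Matrix.det_zero_of_row_eq (Fin.succ_ne_zero i).symm ?_
    ext j
    simp [hi]

/-- The bounded Littlewood identity: both sides vanish for `N = 0` (when `r > 0`) and satisfy the
same recursion in `N`. -/
theorem altSum_mul_den (r : ℕ) : ∀ (N : ℕ) (x : Fin r → ℝ), (∀ j, 0 < x j) →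
    altSum r N x * littlewoodDen x = altDet r N x := by
  induction r with
  | zero =>
    intro N x _
    have : strictSeqs 0 N = Finset.univ := by
      ext l
      simp only [mem_strictSeqs, Finset.mem_univ, iff_true]
      exact ⟨fun i => i.elim0, fun i => i.elim0⟩
    simp [altSum, littlewoodDen, altDet, this]
  | succ r ih =>
    intro N x hx
    induction N with
    | zero => rw [altSum_zero, altDet_zero, zero_mul]
    | succ N ihN =>
      have h1 := altSum_succ_sub r N x
      have h2 := altDet_succ_sub r N x hx
      have h3 : (∑ j : Fin (r + 1), (-1) ^ (j : ℕ) * x j ^ N *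
        altSum r (N + 1) (fun i => x (j.succAbove i))) * littlewoodDen x =
          altDet (r + 1) (N + 1) x - altDet (r + 1) N x := by
        rw [h2, Finset.sum_mul]
        refine Finset.sum_congr rfl fun j _ => ?_
        rw [← ih (N + 1) _ (fun i => hx _), littlewoodDen_succAbove x j]
        ring
      rw [← h1] at h3
      linarith

/-! ### Evaluation at odd powers of `q` -/

/-- With `u v` fixed, `(u^(2j+1) - v^(2j+1)) / (u - v)` is a monic polynomial of degree `j` in
`u^2 + v^2`. -/
lemma exists_monic_oddPow_sub (c : ℝ) : ∀ j : ℕ, ∃ p : Polynomial ℝ, p.Monic ∧ p.natDegree = j ∧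
    ∀ u v : ℝ, u * v = c → u ^ (2 * j + 1) - v ^ (2 * j + 1) = (u - v) * p.eval (u ^ 2 + v ^ 2) := by
  intro j
  induction j using Nat.twoStepInduction with
  | zero => exact ⟨1, Polynomial.monic_one, Polynomial.natDegree_one, fun u v _ => by simp⟩
  | one =>
    refine ⟨Polynomial.X + Polynomial.C c, Polynomial.monic_X_add_C c,
      Polynomial.natDegree_X_add_C c, fun u v h => ?_⟩
    simp only [Polynomial.eval_add, Polynomial.eval_X, Polynomial.eval_C, ← h]
    ring
  | more n ih1 ih2 =>
    obtain ⟨p, hp, hpd, hpe⟩ := ih1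
    obtain ⟨s, hs, hsd, hse⟩ := ih2
    have hXs : (Polynomial.X * s).Monic := Polynomial.monic_X.mul hs
    have hXsd : (Polynomial.X * s).natDegree = n + 2 := by
      rw [Polynomial.natDegree_X_mul hs.ne_zero, hsd]
    have hlt : (Polynomial.C (c ^ 2) * p).degree < (Polynomial.X * s).degree := by
      refine Polynomial.degree_lt_degree (lt_of_le_of_lt (Polynomial.natDegree_C_mul_le _ _) ?_)
      rw [hXsd, hpd]
      omega
    refine ⟨Polynomial.X * s - Polynomial.C (c ^ 2) * p, hXs.sub_of_left hlt, ?_, fun u v h => ?_⟩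
    · rw [Polynomial.natDegree_eq_of_degree_eq (Polynomial.degree_sub_eq_left_of_degree_lt hlt),
        hXsd]
    · have h1 := hpe u v h
      have h2 := hse u v h
      simp only [Polynomial.eval_sub, Polynomial.eval_mul, Polynomial.eval_X, Polynomial.eval_C]
      have : (u - v) * ((u ^ 2 + v ^ 2) * Polynomial.eval (u ^ 2 + v ^ 2) s -
          c ^ 2 * Polynomial.eval (u ^ 2 + v ^ 2) p) =
          (u ^ 2 + v ^ 2) * (u ^ (2 * (n + 1) + 1) - v ^ (2 * (n + 1) + 1)) -
            (u * v) ^ 2 * (u ^ (2 * n + 1) - v ^ (2 * n + 1)) := by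
        rw [h1, h2, h]; ring
      rw [this]
      ring

/-- A determinant of symplectic Weyl type, reduced to a Vandermonde determinant in `u_i^2 + v_i^2`. -/
lemma det_oddPow_sub {r : ℕ} (u v : Fin r → ℝ) (c : ℝ) (h : ∀ i, u i * v i = c) :
    (Matrix.of fun i j : Fin r => u i ^ (2 * (j : ℕ) + 1) - v i ^ (2 * (j : ℕ) + 1)).det =
      (∏ i, (u i - v i)) *
        ∏ i, ∏ j ∈ Finset.Ioi i, ((u j ^ 2 + v j ^ 2) - (u i ^ 2 + v i ^ 2)) := by
  choose p hp hpd hpe using exists_monic_oddPow_sub c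
  rw [← Matrix.det_vandermonde (fun i => u i ^ 2 + v i ^ 2),
    Matrix.det_eval_matrixOfPolynomials_eq_det_vandermonde (fun i => u i ^ 2 + v i ^ 2)
      (fun j : Fin r => p j) (fun j => hpd j) (fun j => hp j), ← Matrix.det_mul_column]
  congr 1
  ext i j
  simp only [Matrix.of_apply]
  exact hpe j _ _ (h i)

/-- The pairs `(i, j)` with `i ≤ j < r`, which index the orbits of the cells of an `r × r` square
under transposition. -/
def pairs (r : ℕ) : Finset (Σ _ : Fin r, Fin r) :=
  (Finset.univ : Finset (Fin r)).sigma fun i => Finset.Ici i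

/-- The exponents of the product formula. With 0-based `i ≤ j` the volume generating function of
`SPP r t` is `∏ (1 - q ^ expo t (i, j)) / (1 - q ^ expo 0 (i, j))`. -/
def expo {r : ℕ} (t : ℕ) (p : Σ _ : Fin r, Fin r) : ℕ :=
  (if p.1 = p.2 then 1 else 2) * ((p.1 : ℕ) + (p.2 : ℕ) + 1 + t)

lemma prod_pairs {M : Type*} [CommMonoid M] {r : ℕ} (f : (Σ _ : Fin r, Fin r) → M) :
    ∏ p ∈ pairs r, f p = (∏ i, f ⟨i, i⟩) * ∏ i, ∏ j ∈ Finset.Ioi i, f ⟨i, j⟩ := by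
  unfold pairs
  rw [Finset.prod_sigma, ← Finset.prod_mul_distrib]
  refine Finset.prod_congr rfl fun i _ => ?_
  rw [← Finset.Ioi_insert, Finset.prod_insert (by simp)]

/-- `altDet` factors completely at `x_j = q ^ (2j+1)`. The constant `κ` does not depend on `t`, so
it never needs to be evaluated: it cancels against the case `t = 0`. -/
lemma exists_altDet_eval (r : ℕ) (q : ℝ) :
    ∃ κ : ℝ, ∀ t : ℕ, altDet r (t + r) (fun j => q ^ (2 * (j : ℕ) + 1)) =
      κ * ∏ p ∈ pairs r, (1 - q ^ expo t p) := by
  refine ⟨(∏ i : Fin r, q ^ (r - 1 - (i : ℕ))) * ∏ i : Fin r, ∏ j ∈ Finset.Ioi i,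
    (q ^ (2 * (r - 1 - (j : ℕ))) - q ^ (2 * (r - 1 - (i : ℕ)))), fun t => ?_⟩
  have h := det_oddPow_sub (r := r) (fun i => q ^ (r - 1 - (i : ℕ))) (fun i => q ^ (t + r + (i : ℕ)))
    (q ^ (t + r + (r - 1))) (fun i => by rw [← pow_add]; congr 1; have := i.2; omega)
  have h' : altDet r (t + r) (fun j => q ^ (2 * (j : ℕ) + 1)) =
      (Matrix.of fun i j : Fin r => (q ^ (r - 1 - (i : ℕ))) ^ (2 * (j : ℕ) + 1) -
        (q ^ (t + r + (i : ℕ))) ^ (2 * (j : ℕ) + 1)).det := by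
    unfold altDet
    congr 1
    ext i j
    simp only [Matrix.of_apply, ← pow_mul]
    rw [mul_comm, mul_comm (2 * (j : ℕ) + 1)]
  rw [h', h, prod_pairs]
  rw [mul_mul_mul_comm]
  refine congrArg₂ (· * ·) ?_ ?_
  · rw [← Finset.prod_mul_distrib]
    refine Finset.prod_congr rfl fun i _ => ?_
    rw [mul_sub, mul_one, ← pow_add]
    congr 2
    have := i.2
    simp only [expo, if_true]
    omega
  · rw [← Finset.prod_mul_distrib]
    refine Finset.prod_congr rfl fun i _ => ?_
    rw [← Finset.prod_mul_distrib]
    refine Finset.prod_congr rfl fun j hj => ?_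
    have hij : i ≠ j := (Finset.mem_Ioi.1 hj).ne
    have e : expo t (⟨i, j⟩ : Σ _ : Fin r, Fin r) = 2 * ((i : ℕ) + j + 1 + t) := by
      simp [expo, hij]
    rw [e, sub_mul, mul_sub, mul_sub, ← pow_add, ← pow_add, mul_one, mul_one, ← pow_mul, ← pow_mul,
      ← pow_mul, ← pow_mul]
    have h1 : 2 * (r - 1 - (j : ℕ)) + 2 * ((i : ℕ) + j + 1 + t) = (t + r + i) * 2 := by
      have := j.2; omega
    have h2 : 2 * (r - 1 - (i : ℕ)) + 2 * ((i : ℕ) + j + 1 + t) = (t + r + j) * 2 := by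
      have := i.2; omega
    rw [h1, h2, mul_comm (r - 1 - (i : ℕ)), mul_comm (r - 1 - (j : ℕ))]
    ring

/-! ### Peeling off the main diagonal -/

/-- The main diagonal of a square array. -/
def diagOf {r t : ℕ} (p : Fin r → Fin r → Fin (t + 1)) : Fin r → Fin (t + 1) := fun i => p i i

/-- The volume generating function of the symmetric plane partitions with main diagonal `lam`. -/
noncomputable def diagSum (r t : ℕ) (q : ℝ) (lam : Fin r → Fin (t + 1)) : ℝ :=
  ∑ p ∈ SPP r t, if diagOf p = lam then q ^ vol p else 0

lemma mem_SPP {r t : ℕ} {p : Fin r → Fin r → Fin (t + 1)} :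
    p ∈ SPP r t ↔ (∀ i i' j j', i ≤ i' → j ≤ j' → p i' j' ≤ p i j) ∧ ∀ i j, p i j = p j i := by
  simp [SPP, PP]

lemma sum_symm_eq {n : ℕ} (f : Fin n → Fin n → ℕ) (hf : ∀ i j, f i j = f j i) :
    ∑ i, ∑ j, f i j = ∑ i, f i i + 2 * ∑ i, ∑ j, if i < j then f i j else 0 := by
  have h1 : ∀ i j, f i j = (if i = j then f i j else 0) + (if i < j then f i j else 0) +
      (if j < i then f i j else 0) := by
    intro i j
    rcases lt_trichotomy i j with h | h | h
    · simp [h, h.ne, h.le]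
    · simp [h]
    · simp [h, h.ne', not_lt.2 h.le]
  have h2 : ∑ i, ∑ j, (if j < i then f i j else 0) = ∑ i, ∑ j, if i < j then f i j else 0 := by
    rw [Finset.sum_comm]
    refine Finset.sum_congr rfl fun i _ => Finset.sum_congr rfl fun j _ => ?_
    rw [hf]
  calc ∑ i, ∑ j, f i j = ∑ i, ∑ j, ((if i = j then f i j else 0) + (if i < j then f i j else 0) +
      (if j < i then f i j else 0)) := by
        refine Finset.sum_congr rfl fun i _ => Finset.sum_congr rfl fun j _ => h1 i j
    _ = _ := by
        simp only [Finset.sum_add_distrib, h2]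
        simp only [Finset.sum_ite_eq, Finset.mem_univ, if_true]
        ring

lemma sum_upper_succ {n : ℕ} (f : Fin (n + 1) → Fin (n + 1) → ℕ) :
    (∑ i, ∑ j, if i < j then f i j else 0) =
      ∑ i : Fin n, f i.castSucc i.succ +
        ∑ i : Fin n, ∑ j : Fin n, if i < j then f i.castSucc j.succ else 0 := by
  rw [Fin.sum_univ_castSucc]
  have h0 : (∑ j, if Fin.last n < j then f (Fin.last n) j else 0) = 0 :=
    Finset.sum_eq_zero fun j _ => if_neg (not_lt.2 (Fin.le_last j))
  rw [h0, add_zero, ← Finset.sum_add_distrib]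
  refine Finset.sum_congr rfl fun i _ => ?_
  rw [Fin.sum_univ_succ, if_neg (by simp), zero_add]
  have : ∀ j : Fin n, (if i.castSucc < j.succ then f i.castSucc j.succ else 0) =
      (if i = j then f i.castSucc j.succ else 0) +
        if i < j then f i.castSucc j.succ else 0 := by
    intro j
    simp only [Fin.castSucc_lt_succ_iff]
    rcases lt_trichotomy i j with h | h | h
    · simp [h, h.ne, h.le]
    · simp [h]
    · simp [h.ne', not_lt.2 h.le, not_le.2 h]
  simp only [this, Finset.sum_add_distrib, Finset.sum_ite_eq, Finset.mem_univ, if_true]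

/-- Remove the main diagonal of a symmetric array, moving the first upper (and lower)
off-diagonal to the main diagonal. -/
def peel {r t : ℕ} (p : Fin (r + 1) → Fin (r + 1) → Fin (t + 1)) :
    Fin r → Fin r → Fin (t + 1) :=
  fun i j => p (min i j).castSucc (max i j).succ

/-- Inverse of `peel`: insert `lam` as the new main diagonal. -/
def unpeel {r t : ℕ} (lam : Fin (r + 1) → Fin (t + 1)) (p : Fin r → Fin r → Fin (t + 1)) :
    Fin (r + 1) → Fin (r + 1) → Fin (t + 1) :=
  fun i j => if h : i = j then lam i else
    p ⟨min (i : ℕ) j, by have := i.2; have := j.2; have : (i : ℕ) ≠ j := fun e => h (Fin.ext e); omega⟩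
      ⟨max (i : ℕ) j - 1, by
        have := i.2; have := j.2; have : (i : ℕ) ≠ j := fun e => h (Fin.ext e); omega⟩

lemma unpeel_self {r t : ℕ} (lam : Fin (r + 1) → Fin (t + 1)) (p : Fin r → Fin r → Fin (t + 1))
    (i : Fin (r + 1)) : unpeel lam p i i = lam i := by simp [unpeel]

lemma unpeel_comm {r t : ℕ} (lam : Fin (r + 1) → Fin (t + 1)) (p : Fin r → Fin r → Fin (t + 1))
    (i j : Fin (r + 1)) : unpeel lam p i j = unpeel lam p j i := by
  unfold unpeel
  by_cases h : i = j
  · simp [h]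
  · rw [dif_neg h, dif_neg (Ne.symm h)]
    simp only [min_comm (i : ℕ), max_comm (i : ℕ)]

lemma unpeel_lt {r t : ℕ} (lam : Fin (r + 1) → Fin (t + 1)) (p : Fin r → Fin r → Fin (t + 1))
    (i j : Fin r) (h : i ≤ j) : unpeel lam p i.castSucc j.succ = p i j := by
  have hne : i.castSucc ≠ j.succ := (Fin.castSucc_lt_succ_iff.2 h).ne
  unfold unpeel
  rw [dif_neg hne]
  have h' : (i : ℕ) ≤ j := h
  have h1 : min (i.castSucc : ℕ) (j.succ : ℕ) = i := by simp; omega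
  have h2 : max (i.castSucc : ℕ) (j.succ : ℕ) - 1 = j := by simp; omega
  simp only [h1, h2]

lemma exists_castSucc_succ {r : ℕ} {a b : Fin (r + 1)} (h : a < b) :
    ∃ i j : Fin r, i ≤ j ∧ a = i.castSucc ∧ b = j.succ := by
  have hb : b ≠ 0 := (lt_of_le_of_lt (Fin.zero_le a) h).ne'
  have ha : a ≠ Fin.last r := (lt_of_lt_of_le h (Fin.le_last b)).ne
  obtain ⟨j, rfl⟩ := Fin.exists_succ_eq.2 hb
  obtain ⟨i, rfl⟩ := Fin.exists_castSucc_eq.2 ha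
  exact ⟨i, j, Fin.castSucc_lt_succ_iff.1 h, rfl, rfl⟩

lemma peel_mem {r t : ℕ} {p : Fin (r + 1) → Fin (r + 1) → Fin (t + 1)} (hp : p ∈ SPP (r + 1) t) :
    peel p ∈ SPP r t := by
  rw [mem_SPP] at hp ⊢
  refine ⟨fun i i' j j' h h' => ?_, fun i j => ?_⟩
  · exact hp.1 _ _ _ _ (Fin.castSucc_le_castSucc_iff.2 (min_le_min h h'))
      (Fin.succ_le_succ_iff.2 (max_le_max h h'))
  · simp only [peel, min_comm i, max_comm i]

lemma unpeel_mem {r t : ℕ} {p : Fin r → Fin r → Fin (t + 1)} (hp : p ∈ SPP r t)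
    {lam : Fin (r + 1) → Fin (t + 1)}
    (h : ∀ i, lam i.succ ≤ p i i ∧ p i i ≤ lam i.castSucc) : unpeel lam p ∈ SPP (r + 1) t := by
  rw [mem_SPP] at hp
  have key : ∀ a b a' b' : Fin (r + 1), a ≤ b → a' ≤ b' → a ≤ a' → b ≤ b' →
      unpeel lam p a' b' ≤ unpeel lam p a b := by
    intro a b a' b' hab hab' ha hb
    rcases hab.eq_or_lt with rfl | hab <;> rcases hab'.eq_or_lt with rfl | hab'
    · rcases ha.eq_or_lt with rfl | haa
      · exact le_rfl
      · obtain ⟨i, j, hij, rfl, rfl⟩ := exists_castSucc_succ haa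
        rw [unpeel_self, unpeel_self]
        exact (h j).1.trans ((hp.1 _ _ _ _ hij hij).trans (h i).2)
    · obtain ⟨i', j', hij', rfl, rfl⟩ := exists_castSucc_succ hab'
      obtain ⟨i, rfl⟩ := Fin.exists_castSucc_eq.2 (lt_of_le_of_lt ha (Fin.castSucc_lt_last i')).ne
      rw [unpeel_self, unpeel_lt _ _ _ _ hij']
      have hi : i ≤ i' := Fin.castSucc_le_castSucc_iff.1 ha
      exact (hp.1 _ _ _ _ hi (hi.trans hij')).trans (h i).2
    · obtain ⟨i, j, hij, rfl, rfl⟩ := exists_castSucc_succ hab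
      obtain ⟨j', rfl⟩ := Fin.exists_succ_eq.2 (lt_of_lt_of_le (Fin.succ_pos j) hb).ne'
      rw [unpeel_self, unpeel_lt _ _ _ _ hij]
      have hj : j ≤ j' := Fin.succ_le_succ_iff.1 hb
      exact (h j').1.trans (hp.1 _ _ _ _ (hij.trans hj) hj)
    · obtain ⟨i, j, hij, rfl, rfl⟩ := exists_castSucc_succ hab
      obtain ⟨i', j', hij', rfl, rfl⟩ := exists_castSucc_succ hab'
      rw [unpeel_lt _ _ _ _ hij, unpeel_lt _ _ _ _ hij']
      exact hp.1 _ _ _ _ (Fin.castSucc_le_castSucc_iff.1 ha) (Fin.succ_le_succ_iff.1 hb)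
  have hsort : ∀ a b : Fin (r + 1), unpeel lam p a b = unpeel lam p (min a b) (max a b) := by
    intro a b
    rcases le_total a b with hab | hab
    · rw [min_eq_left hab, max_eq_right hab]
    · rw [min_eq_right hab, max_eq_left hab, unpeel_comm]
  rw [mem_SPP]
  refine ⟨fun i i' j j' h1 h2 => ?_, unpeel_comm lam p⟩
  rw [hsort i', hsort i]
  exact key _ _ _ _ min_le_max min_le_max (min_le_min h1 h2) (max_le_max h1 h2)

lemma peel_unpeel {r t : ℕ} {p : Fin r → Fin r → Fin (t + 1)} (hp : p ∈ SPP r t)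
    (lam : Fin (r + 1) → Fin (t + 1)) : peel (unpeel lam p) = p := by
  rw [mem_SPP] at hp
  ext i j
  unfold peel
  rw [unpeel_lt _ _ _ _ min_le_max]
  rcases le_total i j with hab | hab
  · rw [min_eq_left hab, max_eq_right hab]
  · rw [min_eq_right hab, max_eq_left hab, hp.2]

lemma unpeel_peel {r t : ℕ} {p : Fin (r + 1) → Fin (r + 1) → Fin (t + 1)}
    (hp : p ∈ SPP (r + 1) t) : unpeel (diagOf p) (peel p) = p := by
  rw [mem_SPP] at hp
  have key : ∀ a b, a < b → unpeel (diagOf p) (peel p) a b = p a b := by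
    intro a b hab
    obtain ⟨i, j, hij, rfl, rfl⟩ := exists_castSucc_succ hab
    rw [unpeel_lt _ _ _ _ hij]
    unfold peel
    rw [min_eq_left hij, max_eq_right hij]
  funext a b
  rcases lt_trichotomy a b with h | h | h
  · exact key _ _ h
  · subst h
    rw [unpeel_self]
    rfl
  · rw [unpeel_comm, key _ _ h, hp.2]

/-- The first off-diagonal occurs twice in `p` but only once in `peel p`. -/
lemma vol_peel {r t : ℕ} {p : Fin (r + 1) → Fin (r + 1) → Fin (t + 1)}
    (hp : p ∈ SPP (r + 1) t) :
    vol p = ∑ i, (diagOf p i : ℕ) + (∑ i, (diagOf (peel p) i : ℕ) + vol (peel p)) := by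
  have hp' := peel_mem hp
  rw [mem_SPP] at hp hp'
  unfold vol diagOf
  rw [sum_symm_eq _ (fun i j => congrArg Fin.val (hp.2 i j)),
    sum_symm_eq _ (fun i j => congrArg Fin.val (hp'.2 i j)), sum_upper_succ]
  have h1 : ∀ i : Fin r, (p i.castSucc i.succ : ℕ) = peel p i i := by
    intro i
    simp [peel]
  have h2 : (∑ i : Fin r, ∑ j : Fin r, if i < j then (p i.castSucc j.succ : ℕ) else 0) =
      ∑ i : Fin r, ∑ j : Fin r, if i < j then (peel p i j : ℕ) else 0 := by
    refine Finset.sum_congr rfl fun i _ => Finset.sum_congr rfl fun j _ => ?_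
    split_ifs with h
    · simp [peel, min_eq_left h.le, max_eq_right h.le]
    · rfl
  simp only [h1, h2]
  ring

/-- Recursion on the size: peeling off the diagonal `lam` leaves a symmetric plane partition whose
diagonal `mu` interlaces with `lam`. -/
lemma diagSum_succ (r t : ℕ) (q : ℝ) (lam : Fin (r + 1) → Fin (t + 1)) :
    diagSum (r + 1) t q lam = q ^ (∑ i, (lam i : ℕ)) *
      ∑ mu ∈ Fintype.piFinset fun i : Fin r => Finset.Icc (lam i.succ) (lam i.castSucc),
        q ^ (∑ i, (mu i : ℕ)) * diagSum r t q mu := by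
  set box := Fintype.piFinset fun i : Fin r => Finset.Icc (lam i.succ) (lam i.castSucc) with hbox
  have h1 : ∑ mu ∈ box, q ^ (∑ i, (mu i : ℕ)) * diagSum r t q mu =
      ∑ p ∈ SPP r t with diagOf p ∈ box, q ^ (∑ i, (diagOf p i : ℕ)) * q ^ vol p := by
    simp only [diagSum, Finset.mul_sum, mul_ite, mul_zero]
    rw [Finset.sum_comm, Finset.sum_filter]
    refine Finset.sum_congr rfl fun p _ => ?_
    rw [Finset.sum_ite_eq]
  rw [h1, Finset.mul_sum]
  unfold diagSum
  rw [← Finset.sum_filter]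
  refine Finset.sum_bij' (fun p _ => peel p) (fun p _ => unpeel lam p) ?_ ?_ ?_ ?_ ?_
  · intro p hp
    rw [Finset.mem_filter] at hp ⊢
    refine ⟨peel_mem hp.1, ?_⟩
    rw [hbox, Fintype.mem_piFinset]
    intro i
    rw [Finset.mem_Icc, ← hp.2]
    have := mem_SPP.1 hp.1
    simp only [diagOf, peel, min_self, max_self]
    exact ⟨this.1 _ _ _ _ (Fin.castSucc_lt_succ).le le_rfl,
      this.1 _ _ _ _ le_rfl (Fin.castSucc_lt_succ).le⟩
  · intro p hp
    rw [Finset.mem_filter] at hp ⊢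
    refine ⟨unpeel_mem hp.1 fun i => ?_, funext fun i => unpeel_self _ _ _⟩
    have := Fintype.mem_piFinset.1 hp.2 i
    exact Finset.mem_Icc.1 this
  · intro p hp
    rw [Finset.mem_filter] at hp
    rw [← hp.2, unpeel_peel hp.1]
  · intro p hp
    rw [Finset.mem_filter] at hp
    exact peel_unpeel hp.1 lam
  · intro p hp
    rw [Finset.mem_filter] at hp
    rw [vol_peel hp.1, hp.2, pow_add, pow_add]

/-! ### The product formula -/

/-- Subtracting from each row the preceding one and expanding along the first column. -/
lemma det_vandermonde_succ {r : ℕ} (z : Fin (r + 1) → ℝ) :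
    (Matrix.vandermonde z).det =
      (Matrix.of fun i j : Fin r => z i.succ ^ ((j : ℕ) + 1) - z i.castSucc ^ ((j : ℕ) + 1)).det := by
  let B : Matrix (Fin (r + 1)) (Fin (r + 1)) ℝ := Matrix.of fun i j =>
    Fin.cases (z 0 ^ (j : ℕ)) (fun i : Fin r => z i.succ ^ (j : ℕ) - z i.castSucc ^ (j : ℕ)) i
  have h : (Matrix.vandermonde z).det = B.det := by
    refine Matrix.det_eq_of_forall_row_eq_smul_add_pred (c := fun _ => 1) ?_ ?_
    · intro j
      simp [B, Matrix.vandermonde_apply]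
    · intro i j
      simp [B, Matrix.vandermonde_apply]
  rw [h, Matrix.det_succ_column_zero, Fin.sum_univ_succ]
  simp [B]
  rfl

lemma sum_piFinset_det {r : ℕ} {α : Type*} [DecidableEq α] (s : Fin r → Finset α)
    (g : Fin r → α → Fin r → ℝ) :
    ∑ mu ∈ Fintype.piFinset s, (Matrix.of fun i j => g i (mu i) j).det =
      (Matrix.of fun i j => ∑ a ∈ s i, g i a j).det := by
  have h := (Matrix.detRowAlternating (n := Fin r) (R := ℝ)).toMultilinearMap.map_sum_finset g s
  have h' : (Matrix.of fun i j => ∑ a ∈ s i, g i a j) = fun i => ∑ a ∈ s i, g i a := by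
    ext i j
    simp
  rw [h']
  exact h.symm

lemma sum_Icc_geom {t : ℕ} (a b : Fin (t + 1)) (hab : a ≤ b) (s : ℕ) (y : ℝ) :
    (∑ x ∈ Finset.Icc a b, y ^ ((x : ℕ) + s)) * (1 - y) = y ^ ((a : ℕ) + s) - y ^ ((b : ℕ) + 1 + s) := by
  have h1 : ∑ x ∈ Finset.Icc a b, y ^ ((x : ℕ) + s) =
      ∑ x ∈ Finset.Ico (a : ℕ) ((b : ℕ) + 1), y ^ (x + s) := by
    have : Finset.Ico (a : ℕ) ((b : ℕ) + 1) = (Finset.Icc a b).map Fin.valEmbedding := by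
      rw [Fin.map_valEmbedding_Icc]
      ext x; simp
    rw [this, Finset.sum_map]
    rfl
  have hab' : (a : ℕ) ≤ b + 1 := Nat.le_succ_of_le hab
  rw [h1, Finset.sum_mul]
  have h2 : ∀ x ∈ Finset.Ico (a : ℕ) ((b : ℕ) + 1), y ^ (x + s) * (1 - y) =
      (-y ^ (x + 1 + s)) - (-y ^ (x + s)) := by
    intro x _
    ring
  rw [Finset.sum_congr rfl h2, Finset.sum_Ico_sub (fun x => -y ^ (x + s)) hab']
  ring

lemma diagSum_eq_zero {r t : ℕ} (q : ℝ) {lam : Fin r → Fin (t + 1)} (h : ¬ Antitone lam) :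
    diagSum r t q lam = 0 := by
  unfold diagSum
  refine Finset.sum_eq_zero fun p hp => if_neg ?_
  rintro rfl
  exact h fun i j hij => (mem_SPP.1 hp).1 _ _ _ _ hij hij

/-- The generating function with prescribed diagonal is, up to a factor independent of `t` and
`lam`, a principally specialised Schur function, i.e. a Vandermonde determinant in the powers
`q ^ (2 (lam_i + r - 1 - i))`. In the induction the interlacing sum is carried out row by row,
and the geometric sums give differences of consecutive rows of a larger Vandermonde matrix. -/
lemma exists_diagSum_eq (q : ℝ) (hq0 : 0 < q) (hq1 : q < 1) (r : ℕ) :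
    ∃ K : ℝ, ∀ (t : ℕ) (lam : Fin r → Fin (t + 1)), Antitone lam →
      diagSum r t q lam = K * q ^ (∑ i, (lam i : ℕ)) *
        (Matrix.vandermonde fun i => (q ^ 2) ^ ((lam i : ℕ) + (r - 1 - (i : ℕ)))).det := by
  induction r with
  | zero =>
    refine ⟨1, fun t lam _ => ?_⟩
    have h1 : SPP 0 t = Finset.univ := by
      ext p
      simp only [mem_SPP, Finset.mem_univ, iff_true]
      exact ⟨fun i => i.elim0, fun i => i.elim0⟩
    have h2 : ∀ p : Fin 0 → Fin 0 → Fin (t + 1), diagOf p = lam := fun p => Subsingleton.elim _ _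
    simp [diagSum, h1, h2, vol]
  | succ r ih =>
    obtain ⟨K, hK⟩ := ih
    set Q := q ^ 2 with hQ
    have hQ0 : 0 < Q := by positivity
    have hQ1 : Q < 1 := pow_lt_one₀ hq0.le hq1 two_ne_zero
    refine ⟨K * (∏ i : Fin r, (Q ^ (r - 1 - (i : ℕ)))⁻¹) *
      ∏ j : Fin r, (1 - Q ^ ((j : ℕ) + 1))⁻¹, fun t lam hlam => ?_⟩
    rw [diagSum_succ]
    have hmu : ∀ mu ∈ Fintype.piFinset fun i : Fin r =>
        Finset.Icc (lam i.succ) (lam i.castSucc), q ^ (∑ i, (mu i : ℕ)) * diagSum r t q mu =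
        K * (Matrix.of fun i j : Fin r =>
          Q ^ (mu i : ℕ) * (Q ^ ((mu i : ℕ) + (r - 1 - (i : ℕ)))) ^ (j : ℕ)).det := by
      intro mu hmu
      have hmu' := fun i => Finset.mem_Icc.1 (Fintype.mem_piFinset.1 hmu i)
      have hanti : Antitone mu := by
        intro i j hij
        rcases hij.eq_or_lt with rfl | hij
        · exact le_rfl
        · exact ((hmu' j).2.trans (hlam (by
            rw [Fin.le_def]; simpa using hij))).trans (hmu' i).1
      rw [hK t mu hanti]
      have hdet := Matrix.det_mul_column (fun i : Fin r => Q ^ (mu i : ℕ))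
        (Matrix.vandermonde fun i => Q ^ ((mu i : ℕ) + (r - 1 - (i : ℕ))))
      simp only [Matrix.vandermonde_apply] at hdet
      rw [hdet, Finset.prod_pow_eq_pow_sum, hQ, ← pow_mul, two_mul, pow_add]
      ring
    rw [Finset.sum_congr rfl hmu, ← Finset.mul_sum, sum_piFinset_det (fun i : Fin r =>
      Finset.Icc (lam i.succ) (lam i.castSucc)) (fun i a j => Q ^ (a : ℕ) *
        (Q ^ ((a : ℕ) + (r - 1 - (i : ℕ)))) ^ (j : ℕ)), det_vandermonde_succ]
    have hentry : (Matrix.of fun i j : Fin r =>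
        ∑ a ∈ Finset.Icc (lam i.succ) (lam i.castSucc), Q ^ (a : ℕ) *
          (Q ^ ((a : ℕ) + (r - 1 - (i : ℕ)))) ^ (j : ℕ)) =
        Matrix.of fun i j : Fin r => (Q ^ (r - 1 - (i : ℕ)))⁻¹ * (Matrix.of fun i j : Fin r =>
          (1 - Q ^ ((j : ℕ) + 1))⁻¹ * (Matrix.of fun i j : Fin r =>
          (Q ^ ((lam i.succ : ℕ) + (r + 1 - 1 - (i.succ : ℕ)))) ^ ((j : ℕ) + 1) -
            (Q ^ ((lam i.castSucc : ℕ) + (r + 1 - 1 - (i.castSucc : ℕ)))) ^ ((j : ℕ) + 1)) i j)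
            i j := by
      ext i j
      simp only [Matrix.of_apply]
      have hne : (1 - Q ^ ((j : ℕ) + 1)) ≠ 0 :=
        (sub_pos.2 (pow_lt_one₀ hQ0.le hQ1 (by omega))).ne'
      have hgeom := sum_Icc_geom (lam i.succ) (lam i.castSucc)
        (hlam Fin.castSucc_lt_succ.le) (r - 1 - (i : ℕ)) (Q ^ ((j : ℕ) + 1))
      have hi := i.2
      have e1 : (lam i.succ : ℕ) + (r + 1 - 1 - (i.succ : ℕ)) =
          (lam i.succ : ℕ) + (r - 1 - (i : ℕ)) := by simp; omega
      have e2 : (lam i.castSucc : ℕ) + (r + 1 - 1 - (i.castSucc : ℕ)) =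
          (lam i.castSucc : ℕ) + 1 + (r - 1 - (i : ℕ)) := by simp; omega
      rw [e1, e2, pow_right_comm Q ((lam i.succ : ℕ) + (r - 1 - (i : ℕ))) ((j : ℕ) + 1),
        pow_right_comm Q ((lam i.castSucc : ℕ) + 1 + (r - 1 - (i : ℕ))) ((j : ℕ) + 1),
        ← hgeom, mul_comm _ (1 - Q ^ ((j : ℕ) + 1)), inv_mul_cancel_left₀ hne,
        Finset.mul_sum]
      refine Finset.sum_congr rfl fun a _ => ?_
      rw [eq_inv_mul_iff_mul_eq₀ (pow_pos hQ0 _).ne']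
      generalize r - 1 - (i : ℕ) = k
      ring
    rw [hentry, Matrix.det_mul_column, Matrix.det_mul_row]
    ring

lemma strictAnti_add_le {r : ℕ} {l : Fin r → ℕ} (hl : StrictAnti l) :
    ∀ (d : ℕ) (i j : Fin r), (j : ℕ) = i + d → l j + d ≤ l i := by
  intro d
  induction d with
  | zero =>
    intro i j h
    have : j = i := Fin.ext (by simpa using h)
    simp [this]
  | succ d ih =>
    intro i j h
    have hj := j.2
    have h1 := ih i ⟨i + d, by omega⟩ rfl
    have h2 : l j < l ⟨i + d, by omega⟩ := hl (by rw [Fin.lt_def]; simp; omega)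
    omega

/-- Summing over the diagonals `lam`, encoded by the strict sequences `lam_i + r - 1 - i`. -/
lemma exists_genFun_eq_altSum (q : ℝ) (hq0 : 0 < q) (hq1 : q < 1) (r : ℕ) :
    ∃ K : ℝ, ∀ t : ℕ, ∑ p ∈ SPP r t, q ^ vol p =
      K * altSum r (t + r) (fun j => q ^ (2 * (j : ℕ) + 1)) := by
  classical
  obtain ⟨K, hK⟩ := exists_diagSum_eq q hq0 hq1 r
  refine ⟨K * (∏ i : Fin r, q ^ (r - 1 - (i : ℕ)))⁻¹, fun t => ?_⟩
  have h1 : ∑ p ∈ SPP r t, q ^ vol p = ∑ lam, diagSum r t q lam := by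
    unfold diagSum
    rw [Finset.sum_comm]
    refine Finset.sum_congr rfl fun p _ => ?_
    simp
  have h2 : ∑ lam, diagSum r t q lam =
      ∑ lam : Fin r → Fin (t + 1) with Antitone lam, diagSum r t q lam := by
    symm
    refine Finset.sum_subset (Finset.filter_subset _ _) fun lam _ h => ?_
    exact diagSum_eq_zero q (by simpa using h)
  rw [h1, h2]
  unfold altSum
  rw [Finset.mul_sum]
  refine Finset.sum_bij' (fun lam _ i => (lam i : ℕ) + (r - 1 - (i : ℕ)))
    (fun l _ i => ⟨min t (l i - (r - 1 - (i : ℕ))), by omega⟩) ?_ ?_ ?_ ?_ ?_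
  · intro lam hlam
    have hlam : Antitone lam := by simpa using hlam
    rw [mem_strictSeqs]
    refine ⟨fun i => ?_, fun i j hij => ?_⟩
    · have := (lam i).2
      have := i.2
      omega
    · have h3 : (lam j : ℕ) ≤ lam i := hlam hij.le
      have h4 : (i : ℕ) < j := hij
      have := j.2
      simp only
      omega
  · intro l hl
    rw [mem_strictSeqs] at hl
    simp only [Finset.mem_filter, Finset.mem_univ, true_and]
    intro i j hij
    have h4 : (i : ℕ) ≤ j := hij
    have h3 := strictAnti_add_le hl.2 (j - i) i j (by omega)
    have := j.2
    rw [Fin.le_def]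
    simp only
    omega
  · intro lam hlam
    ext i
    have := (lam i).2
    simp only [add_tsub_cancel_right]
    omega
  · intro l hl
    rw [mem_strictSeqs] at hl
    ext i
    have hi := i.2
    have h3 := strictAnti_add_le hl.2 (r - 1 - i) i ⟨r - 1, by omega⟩ (by simp; omega)
    have h5 := strictAnti_add_le hl.2 i ⟨0, by omega⟩ i (by simp)
    have h6 := hl.1 ⟨0, by omega⟩
    simp only
    omega
  · intro lam hlam
    have hlam : Antitone lam := by simpa using hlam
    rw [hK t lam hlam]
    have hdet := Matrix.det_mul_column (fun i : Fin r => q ^ ((lam i : ℕ) + (r - 1 - (i : ℕ))))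
        (Matrix.vandermonde fun i => (q ^ 2) ^ ((lam i : ℕ) + (r - 1 - (i : ℕ))))
    simp only [Matrix.vandermonde_apply] at hdet
    have hmat : (Matrix.of fun i j : Fin r =>
        (q ^ (2 * (j : ℕ) + 1)) ^ ((lam i : ℕ) + (r - 1 - (i : ℕ)))) =
        Matrix.of fun i j : Fin r => q ^ ((lam i : ℕ) + (r - 1 - (i : ℕ))) *
          ((q ^ 2) ^ ((lam i : ℕ) + (r - 1 - (i : ℕ)))) ^ (j : ℕ) := by
      ext i j
      simp only [Matrix.of_apply, ← pow_mul, ← pow_add]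
      congr 1
      ring
    rw [hmat, hdet]
    have hP : (∏ i : Fin r, q ^ (r - 1 - (i : ℕ))) ≠ 0 :=
      (Finset.prod_pos fun i _ => pow_pos hq0 _).ne'
    simp only [pow_add, Finset.prod_mul_distrib]
    rw [Finset.prod_pow_eq_pow_sum Finset.univ (fun i => (lam i : ℕ))]
    simp only [← pow_add]
    field_simp

lemma SPP_zero_sum (r : ℕ) (q : ℝ) : ∑ p ∈ SPP r 0, q ^ vol p = 1 := by
  have h1 : SPP r 0 = Finset.univ := by
    ext p
    simp only [mem_SPP, Finset.mem_univ, iff_true]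
    exact ⟨fun i i' j j' _ _ => by rw [Fin.le_def]; omega, fun i j => Fin.ext (by omega)⟩
  have : Unique (Fin r → Fin r → Fin (0 + 1)) :=
    inferInstanceAs (Unique (Fin r → Fin r → Fin 1))
  have h2 : ∀ p : Fin r → Fin r → Fin (0 + 1), vol p = 0 := fun p => by
    simp [vol]
  simp only [h1, h2, pow_zero, Fintype.sum_unique]

/-- MacMahon's product formula (Andrews, Macdonald) for symmetric plane partitions in a box. The
constants of the previous steps are eliminated by comparison with `t = 0`. -/
theorem genFun_real (r t : ℕ) (q : ℝ) (hq0 : 0 < q) (hq1 : q < 1) :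
    (∑ p ∈ SPP r t, q ^ vol p) * ∏ p ∈ pairs r, (1 - q ^ expo 0 p) =
      ∏ p ∈ pairs r, (1 - q ^ expo t p) := by
  obtain ⟨K, hK⟩ := exists_genFun_eq_altSum q hq0 hq1 r
  obtain ⟨κ, hκ⟩ := exists_altDet_eval r q
  set x : Fin r → ℝ := fun j => q ^ (2 * (j : ℕ) + 1) with hx
  have hx0 : ∀ j, 0 < x j := fun j => pow_pos hq0 _
  have hx1 : ∀ j, x j < 1 := fun j => pow_lt_one₀ hq0.le hq1 (by omega)
  have hD : littlewoodDen x ≠ 0 := by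
    unfold littlewoodDen
    refine mul_ne_zero (Finset.prod_ne_zero_iff.2 fun i _ => (sub_pos.2 (hx1 i)).ne')
      (Finset.prod_ne_zero_iff.2 fun i _ => Finset.prod_ne_zero_iff.2 fun j _ => ?_)
    split_ifs
    · exact (sub_pos.2 (mul_lt_one_of_nonneg_of_lt_one_left (hx0 i).le (hx1 i) (hx1 j).le)).ne'
    · exact one_ne_zero
  have main : ∀ t, (∑ p ∈ SPP r t, q ^ vol p) * littlewoodDen x =
      K * κ * ∏ p ∈ pairs r, (1 - q ^ expo t p) := by
    intro t
    rw [hK, mul_assoc, altSum_mul_den r (t + r) x hx0, hκ, mul_assoc]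
  have h0 := main 0
  rw [SPP_zero_sum, one_mul] at h0
  apply mul_right_cancel₀ hD
  rw [mul_right_comm, main t, h0]
  ring

/-! ### Mean and variance -/

section Polynomials

open Polynomial

/-- The volume generating polynomial of `SPP r t`. -/
noncomputable def volPoly (r t : ℕ) : ℝ[X] := ∑ p ∈ SPP r t, X ^ vol p

/-- The `q`-integer `1 + X + ⋯ + X^(n-1)`. -/
noncomputable def qInt (n : ℕ) : ℝ[X] := ∑ k ∈ Finset.range n, X ^ k

lemma qInt_mul (n : ℕ) : qInt n * (1 - X) = 1 - X ^ n := by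
  have h := geom_sum_mul (X : ℝ[X]) n
  unfold qInt
  linear_combination -h

lemma volPoly_mul_one_sub (r t : ℕ) :
    volPoly r t * ∏ p ∈ pairs r, (1 - X ^ expo 0 p) = ∏ p ∈ pairs r, (1 - X ^ expo t p) := by
  apply Polynomial.eq_of_infinite_eval_eq
  refine (Set.Ioo_infinite (zero_lt_one' ℝ)).mono fun q hq => ?_
  simp only [Set.mem_ofPred_eq, volPoly, eval_mul, eval_prod, eval_finsetSum, eval_pow, eval_X,
    eval_sub, eval_one]
  exact genFun_real r t q hq.1 hq.2

lemma volPoly_mul_qInt (r t : ℕ) :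
    volPoly r t * ∏ p ∈ pairs r, qInt (expo 0 p) = ∏ p ∈ pairs r, qInt (expo t p) := by
  have h := volPoly_mul_one_sub r t
  simp only [← qInt_mul, Finset.prod_mul_distrib] at h
  have hne : (1 - X : ℝ[X]) ≠ 0 := by
    intro h0
    have := congrArg (eval 0) h0
    simp at this
  apply mul_right_cancel₀ (Finset.prod_ne_zero_iff.2 fun _ _ => hne)
  rw [mul_assoc]
  exact h

lemma genFun_complex (r t : ℕ) (z : ℂ) :
    (∑ p ∈ SPP r t, z ^ vol p) * ∏ p ∈ pairs r, (1 - z ^ expo 0 p) =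
      ∏ p ∈ pairs r, (1 - z ^ expo t p) := by
  have h := congrArg (aeval z) (volPoly_mul_one_sub r t)
  simpa only [volPoly, map_mul, map_prod, map_sum, map_pow, aeval_X, map_sub, map_one] using h

/-- `G'(1) / G(1)`: the mean of the distribution on `ℕ` whose probability generating function is
`G / G(1)`. -/
noncomputable def polyMean (G : ℝ[X]) : ℝ := (derivative G).eval 1 / G.eval 1

/-- The variance of the distribution on `ℕ` whose probability generating function is `G / G(1)`. -/
noncomputable def polyVar (G : ℝ[X]) : ℝ :=
  (derivative (derivative G)).eval 1 / G.eval 1 + polyMean G - polyMean G ^ 2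

lemma polyMean_mul {G H : ℝ[X]} (hG : G.eval 1 ≠ 0) (hH : H.eval 1 ≠ 0) :
    polyMean (G * H) = polyMean G + polyMean H := by
  unfold polyMean
  simp only [derivative_mul, eval_add, eval_mul]
  field_simp

lemma polyVar_mul {G H : ℝ[X]} (hG : G.eval 1 ≠ 0) (hH : H.eval 1 ≠ 0) :
    polyVar (G * H) = polyVar G + polyVar H := by
  unfold polyVar
  rw [polyMean_mul hG hH]
  unfold polyMean
  simp only [derivative_mul, derivative_add, eval_add, eval_mul]
  field_simp
  ring

lemma polyMean_prod {κ : Type*} (s : Finset κ) (G : κ → ℝ[X]) (hG : ∀ i ∈ s, (G i).eval 1 ≠ 0) :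
    polyMean (∏ i ∈ s, G i) = ∑ i ∈ s, polyMean (G i) := by
  classical
  induction s using Finset.induction_on with
  | empty => simp [polyMean]
  | insert a s ha ih =>
    rw [Finset.prod_insert ha, Finset.sum_insert ha, polyMean_mul (hG a (by simp)),
      ih fun i hi => hG i (by simp [hi])]
    rw [eval_prod]
    exact Finset.prod_ne_zero_iff.2 fun i hi => hG i (by simp [hi])

lemma polyVar_prod {κ : Type*} (s : Finset κ) (G : κ → ℝ[X]) (hG : ∀ i ∈ s, (G i).eval 1 ≠ 0) :
    polyVar (∏ i ∈ s, G i) = ∑ i ∈ s, polyVar (G i) := by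
  classical
  induction s using Finset.induction_on with
  | empty => simp [polyVar, polyMean]
  | insert a s ha ih =>
    rw [Finset.prod_insert ha, Finset.sum_insert ha, polyVar_mul (hG a (by simp)),
      ih fun i hi => hG i (by simp [hi])]
    rw [eval_prod]
    exact Finset.prod_ne_zero_iff.2 fun i hi => hG i (by simp [hi])

lemma qInt_succ (n : ℕ) : qInt (n + 1) = qInt n + X ^ n := Finset.sum_range_succ _ _

lemma eval_qInt (n : ℕ) : (qInt n).eval 1 = n := by
  simp [qInt, eval_finsetSum]

lemma eval_derivative_qInt (n : ℕ) : (derivative (qInt n)).eval 1 = n * (n - 1) / 2 := by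
  induction n with
  | zero => simp [qInt]
  | succ n ih =>
    rw [qInt_succ, derivative_add, eval_add, ih, derivative_X_pow]
    simp
    ring

lemma eval_derivative2_X_pow (n : ℕ) :
    (derivative (derivative (X ^ n : ℝ[X]))).eval 1 = n * (n - 1) := by
  rcases n with _ | n
  · simp
  · simp [derivative_X_pow]

lemma eval_derivative2_qInt (n : ℕ) :
    (derivative (derivative (qInt n))).eval 1 = n * (n - 1) * (n - 2) / 3 := by
  induction n with
  | zero => simp [qInt]
  | succ n ih =>
    rw [qInt_succ, derivative_add, derivative_add, eval_add, ih, eval_derivative2_X_pow]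
    push_cast
    ring

lemma polyMean_qInt {n : ℕ} (hn : n ≠ 0) : polyMean (qInt n) = (n - 1) / 2 := by
  have : (n : ℝ) ≠ 0 := Nat.cast_ne_zero.2 hn
  rw [polyMean, eval_derivative_qInt, eval_qInt]
  field_simp

lemma polyVar_qInt {n : ℕ} (hn : n ≠ 0) : polyVar (qInt n) = (n ^ 2 - 1) / 12 := by
  have : (n : ℝ) ≠ 0 := Nat.cast_ne_zero.2 hn
  rw [polyVar, polyMean_qInt hn, eval_derivative2_qInt, eval_qInt]
  field_simp
  ring

lemma SPP_card_pos (r t : ℕ) : 0 < (SPP r t).card := by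
  refine Finset.card_pos.2 ⟨fun _ _ => 0, ?_⟩
  simp [SPP, PP]

lemma eval_volPoly (r t : ℕ) : (volPoly r t).eval 1 = (SPP r t).card := by
  simp [volPoly, eval_finsetSum]

lemma polyMean_volPoly (r t : ℕ) : polyMean (volPoly r t) = meanSPP r t := by
  rw [polyMean, eval_volPoly, meanSPP]
  simp [volPoly, eval_finsetSum, derivative_X_pow]

lemma polyVar_volPoly (r t : ℕ) : polyVar (volPoly r t) = sdSPP r t ^ 2 := by
  have hc : ((SPP r t).card : ℝ) ≠ 0 := Nat.cast_ne_zero.2 (SPP_card_pos r t).ne'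
  rw [sdSPP, Real.sq_sqrt (by positivity), polyVar, polyMean_volPoly, eval_volPoly]
  have h2 : (derivative (derivative (volPoly r t))).eval 1 =
      ∑ p ∈ SPP r t, (vol p : ℝ) * (vol p - 1) := by
    simp only [volPoly, derivative_sum, eval_finsetSum, eval_derivative2_X_pow]
  have hm : ∑ p ∈ SPP r t, (vol p : ℝ) = meanSPP r t * (SPP r t).card := by
    rw [meanSPP, div_mul_cancel₀ _ hc]
  have h3 : ∑ p ∈ SPP r t, ((vol p : ℝ) - meanSPP r t) ^ 2 =
      ∑ p ∈ SPP r t, (vol p : ℝ) * (vol p - 1) + ∑ p ∈ SPP r t, (vol p : ℝ)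
        - 2 * meanSPP r t * ∑ p ∈ SPP r t, (vol p : ℝ) + (SPP r t).card * meanSPP r t ^ 2 := by
    rw [Finset.mul_sum, ← Finset.sum_add_distrib, ← Finset.sum_sub_distrib, ← nsmul_eq_mul,
      ← Finset.sum_const, ← Finset.sum_add_distrib]
    exact Finset.sum_congr rfl fun p _ => by ring
  rw [h2, h3, hm]
  field_simp
  ring

lemma expo_pos {r : ℕ} (t : ℕ) (p : Σ _ : Fin r, Fin r) : 0 < expo t p := by
  unfold expo
  split_ifs <;> positivity

theorem meanSPP_eq (r t : ℕ) :
    meanSPP r t = ∑ p ∈ pairs r, ((expo t p : ℝ) - expo 0 p) / 2 := by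
  have hne : ∀ t, ∀ p ∈ pairs r, (qInt (expo t p)).eval 1 ≠ 0 := fun t p _ => by
    rw [eval_qInt]; exact Nat.cast_ne_zero.2 (expo_pos t p).ne'
  have h := congrArg polyMean (volPoly_mul_qInt r t)
  rw [polyMean_mul, polyMean_prod _ _ (hne 0), polyMean_prod _ _ (hne t), polyMean_volPoly] at h
  · rw [← eq_sub_iff_add_eq, ← Finset.sum_sub_distrib] at h
    rw [h]
    refine Finset.sum_congr rfl fun p _ => ?_
    rw [polyMean_qInt (expo_pos t p).ne', polyMean_qInt (expo_pos 0 p).ne']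
    ring
  · rw [eval_volPoly]; exact Nat.cast_ne_zero.2 (SPP_card_pos r t).ne'
  · rw [eval_prod]; exact Finset.prod_ne_zero_iff.2 (hne 0)

theorem sdSPP_sq (r t : ℕ) :
    sdSPP r t ^ 2 = ∑ p ∈ pairs r, ((expo t p : ℝ) ^ 2 - (expo 0 p : ℝ) ^ 2) / 12 := by
  have hne : ∀ t, ∀ p ∈ pairs r, (qInt (expo t p)).eval 1 ≠ 0 := fun t p _ => by
    rw [eval_qInt]; exact Nat.cast_ne_zero.2 (expo_pos t p).ne'
  have h := congrArg polyVar (volPoly_mul_qInt r t)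
  rw [polyVar_mul, polyVar_prod _ _ (hne 0), polyVar_prod _ _ (hne t), polyVar_volPoly] at h
  · rw [← eq_sub_iff_add_eq, ← Finset.sum_sub_distrib] at h
    rw [h]
    refine Finset.sum_congr rfl fun p _ => ?_
    rw [polyVar_qInt (expo_pos t p).ne', polyVar_qInt (expo_pos 0 p).ne']
    ring
  · rw [eval_volPoly]; exact Nat.cast_ne_zero.2 (SPP_card_pos r t).ne'
  · rw [eval_prod]; exact Finset.prod_ne_zero_iff.2 (hne 0)

theorem card_SPP_mul (r t : ℕ) :
    ((SPP r t).card : ℝ) * ∏ p ∈ pairs r, (expo 0 p : ℝ) = ∏ p ∈ pairs r, (expo t p : ℝ) := by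
  have h := congrArg (eval 1) (volPoly_mul_qInt r t)
  simpa only [eval_mul, eval_prod, eval_qInt, eval_volPoly] using h

end Polynomials

/-! ### The characteristic function -/

/-- The error `log (sin x / x) + x^2 / 6` of the second-order expansion of `log sinc`. -/
noncomputable def logSincErr (x : ℝ) : ℝ := Real.log (Real.sin x) - Real.log x + x ^ 2 / 6

lemma hasDerivAt_logSincErr {x : ℝ} (hx0 : 0 < x) (hx1 : x ≤ 1) :
    HasDerivAt logSincErr (Real.cos x / Real.sin x - x⁻¹ + x / 3) x := by
  have hs : 0 < Real.sin x := Real.sin_pos_of_pos_of_le_one hx0 hx1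
  have h := (((Real.hasDerivAt_sin x).log hs.ne').sub (Real.hasDerivAt_log hx0.ne')).add
    ((hasDerivAt_pow 2 x).div_const 6)
  refine h.congr_deriv ?_
  push_cast
  ring

lemma abs_deriv_logSincErr_le {x : ℝ} (hx0 : 0 < x) (hx1 : x ≤ 1) :
    |Real.cos x / Real.sin x - x⁻¹ + x / 3| ≤ x ^ 3 := by
  have hs : 0 < Real.sin x := Real.sin_pos_of_pos_of_le_one hx0 hx1
  have habs : |x| = x := abs_of_pos hx0
  have h1 := Real.cos_bound (x := x) (by rwa [habs])
  have h2 := Real.sin_bound (x := x) (by rwa [habs])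
  rw [habs] at h1 h2
  obtain ⟨c, hc⟩ : ∃ c, c = Real.cos x - (1 - x ^ 2 / 2) := ⟨_, rfl⟩
  obtain ⟨s, hs'⟩ : ∃ s, s = Real.sin x - (x - x ^ 3 / 6) := ⟨_, rfl⟩
  rw [← hc] at h1
  rw [← hs'] at h2
  have hx2 : x ^ 2 ≤ 1 := pow_le_one₀ hx0.le hx1
  have hden : 4 / 5 * x ^ 2 ≤ x * Real.sin x := by
    have : 4 / 5 * x ≤ Real.sin x := by
      have h3 := (abs_le.1 h2).1
      have h4 : x ^ 3 ≤ x := by nlinarith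
      have h5 : x ^ 5 ≤ x := by nlinarith [mul_le_mul_of_nonneg_left hx2 (pow_pos hx0 3).le]
      linarith
    nlinarith
  have hnum : |x * Real.cos x - Real.sin x + x ^ 2 * Real.sin x / 3| ≤ 4 / 5 * x ^ 5 := by
    have e : x * Real.cos x - Real.sin x + x ^ 2 * Real.sin x / 3 =
        x * c - s - x ^ 5 / 18 + x ^ 2 * s / 3 := by
      rw [hc, hs']; ring
    rw [e]
    have p5 : 0 < x ^ 5 := pow_pos hx0 5
    have b1 : |x * c| ≤ x ^ 5 * (5 / 96) := by
      rw [abs_mul, habs]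
      calc x * |c| ≤ x * (x ^ 4 * (5 / 96)) := by gcongr
        _ = _ := by ring
    have b2 : |x ^ 2 * s| ≤ x ^ 5 / 100 := by
      rw [abs_mul, abs_of_pos (pow_pos hx0 2)]
      calc x ^ 2 * |s| ≤ 1 * (x ^ 5 / 100) := by gcongr
        _ = _ := by ring
    rw [abs_le] at *
    constructor <;> linarith [b1.1, b1.2, b2.1, b2.2, h2.1, h2.2]
  have e : Real.cos x / Real.sin x - x⁻¹ + x / 3 =
      (x * Real.cos x - Real.sin x + x ^ 2 * Real.sin x / 3) / (x * Real.sin x) := by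
    field_simp
  rw [e, abs_div, abs_of_pos (mul_pos hx0 hs), div_le_iff₀ (mul_pos hx0 hs)]
  calc _ ≤ 4 / 5 * x ^ 5 := hnum
    _ = x ^ 3 * (4 / 5 * x ^ 2) := by ring
    _ ≤ _ := by gcongr

/-- Integrated form of the bound `x^3` on the derivative: `z^4 / 4 ± logSincErr z` is monotone. -/
lemma abs_logSincErr_sub_le {x y : ℝ} (hx0 : 0 < x) (hxy : x ≤ y) (hy1 : y ≤ 1) :
    |logSincErr y - logSincErr x| ≤ (y ^ 4 - x ^ 4) / 4 := by
  have hd : ∀ z ∈ Set.Icc x y, HasDerivAt (fun z : ℝ => z ^ 4 / 4) (z ^ 3) z := fun z _ => by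
    refine ((hasDerivAt_pow 4 z).div_const 4).congr_deriv ?_
    push_cast
    ring
  have hg : ∀ z ∈ Set.Icc x y, HasDerivAt logSincErr
      (Real.cos z / Real.sin z - z⁻¹ + z / 3) z := fun z hz =>
    hasDerivAt_logSincErr (hx0.trans_le hz.1) (hz.2.trans hy1)
  have hb : ∀ z ∈ Set.Icc x y, |Real.cos z / Real.sin z - z⁻¹ + z / 3| ≤ z ^ 3 := fun z hz =>
    abs_deriv_logSincErr_le (hx0.trans_le hz.1) (hz.2.trans hy1)
  have hx : x ∈ Set.Icc x y := ⟨le_rfl, hxy⟩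
  have hy : y ∈ Set.Icc x y := ⟨hxy, le_rfl⟩
  have m1 : MonotoneOn (fun z => z ^ 4 / 4 - logSincErr z) (Set.Icc x y) := by
    refine monotoneOn_of_deriv_nonneg (convex_Icc x y)
      (fun z hz => ((hd z hz).sub (hg z hz)).continuousAt.continuousWithinAt)
      (fun z hz => ((hd z (interior_subset hz)).sub
        (hg z (interior_subset hz))).differentiableAt.differentiableWithinAt) fun z hz => ?_
    have hz := interior_subset hz
    rw [((hd z hz).fun_sub (hg z hz)).deriv]
    linarith [(abs_le.1 (hb z hz)).2]
  have m2 : MonotoneOn (fun z => z ^ 4 / 4 + logSincErr z) (Set.Icc x y) := by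
    refine monotoneOn_of_deriv_nonneg (convex_Icc x y)
      (fun z hz => ((hd z hz).add (hg z hz)).continuousAt.continuousWithinAt)
      (fun z hz => ((hd z (interior_subset hz)).add
        (hg z (interior_subset hz))).differentiableAt.differentiableWithinAt) fun z hz => ?_
    have hz := interior_subset hz
    rw [((hd z hz).fun_add (hg z hz)).deriv]
    linarith [(abs_le.1 (hb z hz)).1]
  have k1 := m1 hx hy hxy
  have k2 := m2 hx hy hxy
  simp only at k1 k2
  rw [abs_le]
  constructor <;> linarith

open Complex in
/-- The product formula at `q = e^(2iy)`, recentred at the mean, using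
`1 - e^(2iny) = -2i e^(iny) sin (ny)`. -/
lemma charSum_mul_sin (r t : ℕ) (y : ℝ) :
    (∑ p ∈ SPP r t, cexp (2 * y * ((vol p : ℝ) - meanSPP r t : ℝ) * I)) *
        ∏ p ∈ pairs r, (Real.sin (expo 0 p * y) : ℂ) =
      ∏ p ∈ pairs r, (Real.sin (expo t p * y) : ℂ) := by
  have h := genFun_complex r t (cexp (2 * y * I))
  have key : ∀ n : ℕ, 1 - cexp (2 * y * I) ^ n =
      (-2 * I) * (cexp (n * y * I) * (Real.sin (n * y) : ℂ)) := by
    intro n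
    rw [← Complex.exp_nat_mul]
    push_cast
    rw [Complex.sin, show (n : ℂ) * (2 * y * I) = n * y * I + n * y * I by ring, Complex.exp_add,
      show -((n : ℂ) * y) * I = -(n * y * I) by ring, Complex.exp_neg]
    field_simp
    ring_nf
    simp
    ring
  simp only [key, Finset.prod_mul_distrib] at h
  have hI : (∏ p ∈ pairs r, (-2 : ℂ)) * ∏ p ∈ pairs r, I ≠ 0 :=
    mul_ne_zero (Finset.prod_ne_zero_iff.2 fun _ _ => by simp)
      (Finset.prod_ne_zero_iff.2 fun _ _ => I_ne_zero)
  rw [mul_left_comm] at h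
  have h := mul_left_cancel₀ hI h
  rw [← Complex.exp_sum, ← Complex.exp_sum] at h
  have hm : ∑ p ∈ pairs r, (expo t p * y * I : ℂ) =
      ∑ p ∈ pairs r, (expo 0 p * y * I : ℂ) + 2 * y * meanSPP r t * I := by
    rw [meanSPP_eq]
    push_cast
    rw [Finset.mul_sum, Finset.sum_mul, ← Finset.sum_add_distrib]
    exact Finset.sum_congr rfl fun p _ => by ring
  rw [hm, Complex.exp_add] at h
  have hs : ∑ p ∈ SPP r t, cexp (2 * y * ((vol p : ℝ) - meanSPP r t : ℝ) * I) =
      (∑ p ∈ SPP r t, cexp (2 * y * I) ^ vol p) * (cexp (2 * y * meanSPP r t * I))⁻¹ := by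
    rw [Finset.sum_mul]
    refine Finset.sum_congr rfl fun p _ => ?_
    rw [← Complex.exp_nat_mul, ← Complex.exp_neg, ← Complex.exp_add]
    congr 1
    push_cast
    ring
  rw [hs]
  have n1 := Complex.exp_ne_zero (∑ p ∈ pairs r, (expo 0 p * y * I : ℂ))
  have n2 := Complex.exp_ne_zero (2 * y * meanSPP r t * I)
  apply mul_left_cancel₀ (mul_ne_zero n1 n2)
  rw [← h]
  generalize cexp (∑ p ∈ pairs r, (expo 0 p * y * I : ℂ)) = u at n1 ⊢
  generalize cexp (2 * y * meanSPP r t * I) = v at n2 ⊢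
  generalize ∑ p ∈ SPP r t, cexp (2 * y * I) ^ vol p = w
  generalize ∏ p ∈ pairs r, (Real.sin (expo 0 p * y) : ℂ) = x
  field_simp

open Complex in
/-- Quantitative Gaussian approximation of the characteristic function, as long as all arguments
`b y` of the sines lie in `(0, 1]`. Here `2 σ² y²` is the sum of the quadratic terms
`(b² - a²) y² / 6` and the error uses `b⁴ - a⁴ ≤ 2 B² (b² - a²)`. -/
lemma charSum_eq_exp (r t : ℕ) {y B : ℝ} (hy : 0 < y) (hB : ∀ p ∈ pairs r, (expo t p : ℝ) ≤ B)
    (hBy : B * y ≤ 1) :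
    ∃ L : ℝ, |L + 2 * sdSPP r t ^ 2 * y ^ 2| ≤ 6 * B ^ 2 * sdSPP r t ^ 2 * y ^ 4 ∧
      ∑ p ∈ SPP r t, cexp (2 * y * ((vol p : ℝ) - meanSPP r t : ℝ) * I) =
        (SPP r t).card * (Real.exp L : ℂ) := by
  have hle : ∀ p : Σ _ : Fin r, Fin r, (expo 0 p : ℝ) ≤ expo t p := fun p => by
    unfold expo
    push_cast
    gcongr
    positivity
  have ha0 : ∀ p : Σ _ : Fin r, Fin r, (0 : ℝ) < expo 0 p := fun p =>
    Nat.cast_pos.2 (expo_pos 0 p)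
  have hb0 : ∀ p : Σ _ : Fin r, Fin r, (0 : ℝ) < expo t p := fun p =>
    Nat.cast_pos.2 (expo_pos t p)
  have hb1 : ∀ p ∈ pairs r, (expo t p : ℝ) * y ≤ 1 := fun p hp =>
    (mul_le_mul_of_nonneg_right (hB p hp) hy.le).trans hBy
  have ha1 : ∀ p ∈ pairs r, (expo 0 p : ℝ) * y ≤ 1 := fun p hp =>
    (mul_le_mul_of_nonneg_right (hle p) hy.le).trans (hb1 p hp)
  have hsa : ∀ p ∈ pairs r, 0 < Real.sin (expo 0 p * y) := fun p hp =>
    Real.sin_pos_of_pos_of_le_one (mul_pos (ha0 p) hy) (ha1 p hp)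
  have hsb : ∀ p ∈ pairs r, 0 < Real.sin (expo t p * y) := fun p hp =>
    Real.sin_pos_of_pos_of_le_one (mul_pos (hb0 p) hy) (hb1 p hp)
  refine ⟨∑ p ∈ pairs r, (logSincErr (expo t p * y) - logSincErr (expo 0 p * y)) -
    2 * sdSPP r t ^ 2 * y ^ 2, ?_, ?_⟩
  · rw [sub_add_cancel]
    calc _ ≤ ∑ p ∈ pairs r, |logSincErr (expo t p * y) - logSincErr (expo 0 p * y)| :=
          Finset.abs_sum_le_sum_abs _ _
      _ ≤ ∑ p ∈ pairs r, (6 * B ^ 2 * y ^ 4) *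
            (((expo t p : ℝ) ^ 2 - (expo 0 p : ℝ) ^ 2) / 12) := by
          refine Finset.sum_le_sum fun p hp => ?_
          refine (abs_logSincErr_sub_le (mul_pos (ha0 p) hy)
            (mul_le_mul_of_nonneg_right (hle p) hy.le) (hb1 p hp)).trans ?_
          have h1 : (expo t p : ℝ) ^ 2 ≤ B ^ 2 := pow_le_pow_left₀ (hb0 p).le (hB p hp) 2
          have h2 : (expo 0 p : ℝ) ^ 2 ≤ (expo t p : ℝ) ^ 2 :=
            pow_le_pow_left₀ (ha0 p).le (hle p) 2
          have h3 : ((expo t p : ℝ) ^ 2 + (expo 0 p : ℝ) ^ 2) *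
              ((expo t p : ℝ) ^ 2 - (expo 0 p : ℝ) ^ 2) ≤
              (2 * B ^ 2) * ((expo t p : ℝ) ^ 2 - (expo 0 p : ℝ) ^ 2) :=
            mul_le_mul_of_nonneg_right (by linarith) (by linarith)
          have h4 := mul_le_mul_of_nonneg_left h3 (pow_pos hy 4).le
          nlinarith
      _ = _ := by
          rw [← Finset.mul_sum, ← sdSPP_sq]
          ring
  · have hsum : ∑ p ∈ pairs r, (logSincErr (expo t p * y) - logSincErr (expo 0 p * y)) -
        2 * sdSPP r t ^ 2 * y ^ 2 = ∑ p ∈ pairs r, (Real.log (Real.sin (expo t p * y)) -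
          Real.log (Real.sin (expo 0 p * y)) + Real.log (expo 0 p) - Real.log (expo t p)) := by
      rw [sdSPP_sq, Finset.mul_sum, Finset.sum_mul, ← Finset.sum_sub_distrib]
      refine Finset.sum_congr rfl fun p _ => ?_
      unfold logSincErr
      rw [Real.log_mul (ha0 p).ne' hy.ne', Real.log_mul (hb0 p).ne' hy.ne']
      ring
    have hexp : Real.exp (∑ p ∈ pairs r, (Real.log (Real.sin (expo t p * y)) -
          Real.log (Real.sin (expo 0 p * y)) + Real.log (expo 0 p) - Real.log (expo t p))) =
        (∏ p ∈ pairs r, Real.sin (expo t p * y)) / (∏ p ∈ pairs r, Real.sin (expo 0 p * y)) *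
          (∏ p ∈ pairs r, (expo 0 p : ℝ)) / ∏ p ∈ pairs r, (expo t p : ℝ) := by
      rw [Real.exp_sum, ← Finset.prod_div_distrib, ← Finset.prod_mul_distrib,
        ← Finset.prod_div_distrib]
      refine Finset.prod_congr rfl fun p hp => ?_
      rw [Real.exp_sub, Real.exp_add, Real.exp_sub, Real.exp_log (hsa p hp),
        Real.exp_log (hsb p hp), Real.exp_log (ha0 p), Real.exp_log (hb0 p)]
    have hc := card_SPP_mul r t
    have hPa : ∏ p ∈ pairs r, Real.sin (expo 0 p * y) ≠ 0 :=
      Finset.prod_ne_zero_iff.2 fun p hp => (hsa p hp).ne'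
    have hPb : ∏ p ∈ pairs r, (expo t p : ℝ) ≠ 0 :=
      Finset.prod_ne_zero_iff.2 fun p _ => (hb0 p).ne'
    have hfin : ((SPP r t).card : ℝ) * Real.exp (∑ p ∈ pairs r,
          (Real.log (Real.sin (expo t p * y)) -
          Real.log (Real.sin (expo 0 p * y)) + Real.log (expo 0 p) - Real.log (expo t p))) *
        ∏ p ∈ pairs r, Real.sin (expo 0 p * y) = ∏ p ∈ pairs r, Real.sin (expo t p * y) := by
      rw [hexp]
      generalize ∏ p ∈ pairs r, Real.sin (expo 0 p * y) = A at hPa ⊢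
      generalize ∏ p ∈ pairs r, Real.sin (expo t p * y) = D
      field_simp
      linear_combination D * hc
    rw [hsum]
    have hPa' : ∏ p ∈ pairs r, (Real.sin (expo 0 p * y) : ℂ) ≠ 0 := by exact_mod_cast hPa
    apply mul_right_cancel₀ hPa'
    rw [charSum_mul_sin]
    exact_mod_cast hfin.symm

lemma expo_le (r t : ℕ) : ∀ p ∈ pairs r, (expo t p : ℝ) ≤ 4 * ((r : ℝ) + t) := by
  intro p _
  have h1 := p.1.2
  have h2 := p.2.2
  have : expo t p ≤ 4 * (r + t) := by
    unfold expo
    split_ifs <;> omega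
  exact_mod_cast this

lemma sum_range_varBound (R t : ℝ) (r : ℕ) :
    ∑ i ∈ Finset.range r, (R - i) * (t ^ 2 + 2 * t * (i + 1)) =
      t ^ 2 * (R * r - r * (r - 1) / 2) +
        2 * t * (R * (r * (r + 1) / 2) - (r - 1) * r * (r + 1) / 3) := by
  induction r with
  | zero => simp
  | succ r ih =>
    rw [Finset.sum_range_succ, ih]
    push_cast
    ring

/-- The variance has order at least `r (r + t)^2`, whereas all exponents are `O(r + t)`. -/
lemma sdSPP_sq_ge (r t : ℕ) (ht : 0 < t) :
    (r : ℝ) * ((r : ℝ) + t) ^ 2 ≤ 120 * sdSPP r t ^ 2 := by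
  have h1 : ∑ p ∈ pairs r, ((t : ℝ) ^ 2 + 2 * t * ((p.1 : ℕ) + 1)) ≤ 12 * sdSPP r t ^ 2 := by
    rw [sdSPP_sq, Finset.mul_sum]
    refine Finset.sum_le_sum fun p _ => ?_
    have e : 12 * (((expo t p : ℝ) ^ 2 - (expo 0 p : ℝ) ^ 2) / 12) =
        (if p.1 = p.2 then 1 else 2) ^ 2 *
          ((t : ℝ) ^ 2 + 2 * t * ((p.1 : ℕ) + (p.2 : ℕ) + 1)) := by
      unfold expo
      push_cast
      ring
    rw [e]
    have h2 : (1 : ℝ) ≤ (if p.1 = p.2 then 1 else 2) ^ 2 := by split_ifs <;> norm_num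
    calc (t : ℝ) ^ 2 + 2 * t * ((p.1 : ℕ) + 1)
        ≤ 1 * ((t : ℝ) ^ 2 + 2 * t * ((p.1 : ℕ) + (p.2 : ℕ) + 1)) := by
          rw [one_mul]
          gcongr
          simp
      _ ≤ _ := by gcongr
  have h3 : ∑ p ∈ pairs r, ((t : ℝ) ^ 2 + 2 * t * ((p.1 : ℕ) + 1)) =
      ∑ i ∈ Finset.range r, ((r : ℝ) - i) * ((t : ℝ) ^ 2 + 2 * t * (i + 1)) := by
    unfold pairs
    rw [Finset.sum_sigma, ← Fin.sum_univ_eq_sum_range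
      (fun i => ((r : ℝ) - i) * ((t : ℝ) ^ 2 + 2 * t * (i + 1))) r]
    refine Finset.sum_congr rfl fun i _ => ?_
    simp only
    rw [Finset.sum_const, Fin.card_Ici, nsmul_eq_mul, Nat.cast_sub i.2.le]
  rw [h3, sum_range_varBound] at h1
  have ht1 : (1 : ℝ) ≤ t := by exact_mod_cast ht
  rcases Nat.eq_zero_or_pos r with rfl | hr
  · simp; positivity
  have hr1 : (1 : ℝ) ≤ r := by exact_mod_cast hr
  have k1 : (r : ℝ) ^ 3 ≤ t * r ^ 3 := le_mul_of_one_le_left (by positivity) ht1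
  have k2 : (r : ℝ) ^ 2 * t ≤ t * r ^ 3 := by
    have : (r : ℝ) ^ 2 ≤ r ^ 3 := pow_le_pow_right₀ hr1 (by norm_num)
    nlinarith
  have k3 : (r : ℝ) * t ^ 2 ≤ t ^ 2 * r ^ 2 := by
    have : (r : ℝ) ≤ r ^ 2 := by nlinarith
    nlinarith
  have k4 : 0 ≤ (t : ℝ) ^ 2 * r := by positivity
  have k5 : 0 ≤ (t : ℝ) * r ^ 2 := by positivity
  have k6 : 0 ≤ (t : ℝ) * r := by positivity
  have k7 : 0 ≤ (t : ℝ) * r ^ 3 := by positivity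
  have k8 : 0 ≤ (t : ℝ) ^ 2 * r ^ 2 := by positivity
  nlinarith

/-! ### Convergence of the laws -/

/-- The normalised volume `(vol p - μ) / σ`. -/
noncomputable def normVol (r t : ℕ) (p : Fin r → Fin r → Fin (t + 1)) : ℝ :=
  ((vol p : ℝ) - meanSPP r t) / sdSPP r t

/-- The law of the normalised volume of a uniformly random element of `SPP r t`. -/
noncomputable def volLaw (r t : ℕ) : Measure ℝ :=
  ∑ p ∈ SPP r t, ENNReal.ofReal ((SPP r t).card : ℝ)⁻¹ • Measure.dirac (normVol r t p)

instance (r t : ℕ) : IsProbabilityMeasure (volLaw r t) := by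
  constructor
  have hc : 0 < ((SPP r t).card : ℝ) := Nat.cast_pos.2 (SPP_card_pos r t)
  simp only [volLaw, Measure.coe_finsetSum, Finset.sum_apply, Measure.smul_apply, measure_univ,
    smul_eq_mul, mul_one, Finset.sum_const, nsmul_eq_mul]
  rw [ENNReal.ofReal_inv_of_pos hc, ENNReal.ofReal_natCast]
  exact ENNReal.mul_inv_cancel (by exact_mod_cast (SPP_card_pos r t).ne') (ENNReal.natCast_ne_top _)

lemma integral_volLaw {E : Type*} [NormedAddCommGroup E] [NormedSpace ℝ E] [CompleteSpace E]
    (r t : ℕ) (f : ℝ → E) :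
    ∫ x, f x ∂(volLaw r t) = ((SPP r t).card : ℝ)⁻¹ • ∑ p ∈ SPP r t, f (normVol r t p) := by
  unfold volLaw
  rw [integral_finsetSum_measure]
  · rw [Finset.smul_sum]
    refine Finset.sum_congr rfl fun p _ => ?_
    rw [integral_smul_measure, integral_dirac, ENNReal.toReal_ofReal (by positivity)]
  · intro p _
    exact (integrable_dirac enorm_lt_top).smul_measure ENNReal.ofReal_ne_top

open Complex in
lemma charFun_volLaw (r t : ℕ) (s : ℝ) :
    charFun (volLaw r t) s = ((SPP r t).card : ℂ)⁻¹ *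
      ∑ p ∈ SPP r t, cexp (s * normVol r t p * I) := by
  rw [charFun_apply_real, integral_volLaw, real_smul]
  push_cast
  rfl

open Complex in
/-- `charSum_eq_exp` at `y = s / (2σ)` with `B = 4 (r + t)`, for which `B² / σ² ≤ 1920 / r`. -/
lemma charFun_volLaw_eq_exp {r t : ℕ} (hr : 0 < r) (ht : 0 < t) {s : ℝ} (hs : 0 < s)
    (hrs : 480 * s ^ 2 ≤ r) :
    ∃ L : ℝ, |L + s ^ 2 / 2| ≤ 720 * s ^ 4 / r ∧
      charFun (volLaw r t) s = (Real.exp L : ℂ) := by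
  have hr0 : (0 : ℝ) < r := Nat.cast_pos.2 hr
  have hvar := sdSPP_sq_ge r t ht
  have hσ0 : 0 ≤ sdSPP r t := Real.sqrt_nonneg _
  have hσ : 0 < sdSPP r t := by
    refine lt_of_le_of_ne hσ0 fun h => ?_
    rw [← h] at hvar
    have : 0 < (r : ℝ) * ((r : ℝ) + t) ^ 2 := by positivity
    norm_num at hvar
    linarith
  set σ := sdSPP r t with hσdef
  have hBy : 4 * ((r : ℝ) + t) * (s / (2 * σ)) ≤ 1 := by
    refine abs_le_of_sq_le_sq' ?_ zero_le_one |>.2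
    have e : (4 * ((r : ℝ) + t) * (s / (2 * σ))) ^ 2 = 4 * ((r : ℝ) + t) ^ 2 * s ^ 2 / σ ^ 2 := by
      field_simp
      ring
    rw [e, one_pow, div_le_one (by positivity)]
    have h1 := mul_le_mul_of_nonneg_right hrs (sq_nonneg ((r : ℝ) + t))
    nlinarith
  obtain ⟨L, hL, hLs⟩ := charSum_eq_exp r t (y := s / (2 * σ)) (by positivity) (expo_le r t) hBy
  refine ⟨L, ?_, ?_⟩
  · have e1 : 2 * sdSPP r t ^ 2 * (s / (2 * σ)) ^ 2 = s ^ 2 / 2 := by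
      rw [← hσdef]
      field_simp
    rw [e1] at hL
    refine hL.trans ?_
    have e2 : 6 * (4 * ((r : ℝ) + t)) ^ 2 * sdSPP r t ^ 2 * (s / (2 * σ)) ^ 4 =
        6 * s ^ 4 * ((r : ℝ) + t) ^ 2 / σ ^ 2 := by
      rw [← hσdef]
      field_simp
      ring
    rw [e2, div_le_div_iff₀ (by positivity) hr0]
    have := mul_le_mul_of_nonneg_left hvar (by positivity : 0 ≤ 6 * s ^ 4)
    nlinarith
  · rw [charFun_volLaw]
    have hc : ((SPP r t).card : ℂ) ≠ 0 := Nat.cast_ne_zero.2 (SPP_card_pos r t).ne'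
    rw [inv_mul_eq_iff_eq_mul₀ hc, ← hLs]
    refine Finset.sum_congr rfl fun p _ => ?_
    have hσc : (σ : ℂ) ≠ 0 := ofReal_ne_zero.2 hσ.ne'
    unfold normVol
    rw [← hσdef]
    push_cast
    congr 1
    field_simp

lemma tendsto_charFun_volLaw_pos (r t : ℕ → ℕ) (hr : ∀ n, 0 < r n) (ht : ∀ n, 0 < t n)
    (hr' : Tendsto r atTop atTop) {s : ℝ} (hs : 0 < s) :
    Tendsto (fun n => charFun (volLaw (r n) (t n)) s) atTop
      (nhds (Real.exp (-(s ^ 2 / 2)) : ℂ)) := by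
  have hrR : Tendsto (fun n => (r n : ℝ)) atTop atTop := tendsto_natCast_atTop_atTop.comp hr'
  have hex : ∀ n, ∃ L : ℝ, 480 * s ^ 2 ≤ r n → |L + s ^ 2 / 2| ≤ 720 * s ^ 4 / r n ∧
      charFun (volLaw (r n) (t n)) s = (Real.exp L : ℂ) := by
    intro n
    by_cases h : 480 * s ^ 2 ≤ r n
    · obtain ⟨L, hL⟩ := charFun_volLaw_eq_exp (hr n) (ht n) hs h
      exact ⟨L, fun _ => hL⟩
    · exact ⟨0, fun h' => absurd h' h⟩
  choose L hL using hex
  have hev : ∀ᶠ n in atTop, 480 * s ^ 2 ≤ r n := hrR.eventually_ge_atTop _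
  have h0 : Tendsto (fun n => L n + s ^ 2 / 2) atTop (nhds 0) := by
    refine squeeze_zero_norm' (a := fun n => 720 * s ^ 4 / r n) ?_ (hrR.const_div_atTop _)
    filter_upwards [hev] with n hn
    exact (hL n hn).1
  have h1 : Tendsto L atTop (nhds (-(s ^ 2 / 2))) := by
    have := h0.sub_const (s ^ 2 / 2)
    simpa using this
  have h2 : Tendsto (fun n => (Real.exp (L n) : ℂ)) atTop
      (nhds (Real.exp (-(s ^ 2 / 2)) : ℂ)) :=
    (Complex.continuous_ofReal.tendsto _).comp ((Real.continuous_exp.tendsto _).comp h1)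
  refine h2.congr' ?_
  filter_upwards [hev] with n hn
  exact (hL n hn).2.symm

lemma tendsto_charFun_volLaw (r t : ℕ → ℕ) (hr : ∀ n, 0 < r n) (ht : ∀ n, 0 < t n)
    (hr' : Tendsto r atTop atTop) (s : ℝ) :
    Tendsto (fun n => charFun (volLaw (r n) (t n)) s) atTop
      (nhds (charFun (ProbabilityTheory.gaussianReal 0 1) s)) := by
  have hg : charFun (ProbabilityTheory.gaussianReal 0 1) s = (Real.exp (-(s ^ 2 / 2)) : ℂ) := by
    rw [ProbabilityTheory.charFun_gaussianReal]
    push_cast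
    congr 1
    simp
  rw [hg]
  rcases lt_trichotomy s 0 with h | rfl | h
  · have h1 := tendsto_charFun_volLaw_pos r t hr ht hr' (neg_pos.2 h)
    have h2 := (Complex.continuous_conj.tendsto _).comp h1
    simp only [Function.comp_def, ← charFun_neg, neg_neg, Complex.conj_ofReal, neg_sq] at h2
    exact h2
  · simp
  · exact tendsto_charFun_volLaw_pos r t hr ht hr' h

/-- Central limit law for symmetric plane partitions: if `r_n → ∞` (with `t_n` arbitrary),
the normalised volumes `Y_n = (X_n − μ_n)/σ_n` of uniformly random symmetric plane
partitions in `(r_n,r_n,t_n)`-boxes converge in distribution to a standard normal random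
variable; i.e., for every bounded continuous test function `f`, the expectation `E[f(Y_n)]`
converges to the integral of `f` against the standard Gaussian measure. -/
theorem volume_clt_SPP (r t : ℕ → ℕ)
    (hr : ∀ n, 0 < r n) (ht : ∀ n, 0 < t n)
    (hr' : Tendsto r atTop atTop) :
    ∀ f : BoundedContinuousFunction ℝ ℝ,
      Tendsto (fun n : ℕ =>
        (∑ p ∈ SPP (r n) (t n),
            f (((vol p : ℝ) - meanSPP (r n) (t n)) / sdSPP (r n) (t n))) /
          ((SPP (r n) (t n)).card : ℝ))
        atTop (nhds (∫ x, f x ∂(ProbabilityTheory.gaussianReal 0 1))) := by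
  intro f
  have hlevy := ProbabilityMeasure.tendsto_of_tendsto_charFun
    (μ := fun n => (⟨volLaw (r n) (t n), inferInstance⟩ : ProbabilityMeasure ℝ))
    (μ₀ := ⟨ProbabilityTheory.gaussianReal 0 1, inferInstance⟩)
    (tendsto_charFun_volLaw r t hr ht hr')
  have h := (ProbabilityMeasure.tendsto_iff_forall_integral_tendsto.1 hlevy) f
  refine h.congr fun n => ?_
  change ∫ x, f x ∂(volLaw (r n) (t n)) = _
  rw [integral_volLaw, smul_eq_mul, inv_mul_eq_div]
  rfl
end
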